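/- Let d ≥ 1, let r be a power of a prime, and let t ≥ 2r−1. Let 𝓕 be a family of (d+1)·t hyperplanes in general position in ℝ^d, colored with d+1 colors so that each color is used on exactly t hyperplanes. Then one can choose r pairwise disjoint subfamilies 𝓕_1, …, 𝓕_r ⊆ 𝓕, each consisting of d+1 hyperplanes carrying all d+1 colors, such that the r simplexes formed by these subfamilies have a common interior point. -/

import Mathlib

open scoped InnerProductSpace

/-- A hyperplane in `ℝ^d`: the solution set of one nontrivial linear equation. -/
def IsHyperplane {d : ℕ} (h : Set (EuclideanSpace ℝ (Fin d))) : Prop :=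
  ∃ (v : EuclideanSpace ℝ (Fin d)) (c : ℝ), v ≠ 0 ∧ h = {y | ⟪y, v⟫_ℝ = c}

/-- A family of hyperplanes in `ℝ^d` is in general position if any `d` of them have
exactly one point in common and any `d+1` of them have no common point. -/
def InGeneralPosition {d n : ℕ} (H : Fin n → Set (EuclideanSpace ℝ (Fin d))) : Prop :=
  (∀ s : Finset (Fin n), s.card = d → ∃! x, ∀ i ∈ s, x ∈ H i) ∧
  (∀ s : Finset (Fin n), s.card = d + 1 → ¬ ∃ x, ∀ i ∈ s, x ∈ H i)

/-- The vertex set of the simplex formed by a subfamily `s` of `d+1` hyperplanes: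
for each `i ∈ s`, the (unique) common point of the other `d` hyperplanes of `s`
is a vertex. -/
def SimplexVerticesOf {d N : ℕ} (H : Fin N → Set (EuclideanSpace ℝ (Fin d)))
    (s : Finset (Fin N)) : Set (EuclideanSpace ℝ (Fin d)) :=
  {x | ∃ i ∈ s, ∀ j ∈ s, j ≠ i → x ∈ H j}


namespace DCT
open Finsupp

section chains
variable {K : Type*} [Field K] {V W : Type*}

noncomputable def consL (v : V) : (List V →₀ K) →ₗ[K] (List V →₀ K) :=
  Finsupp.lmapDomain K K (List.cons v)

@[simp] theorem consL_single (v : V) (l : List V) (a : K) :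
    consL v (single l a) = single (v :: l) a := by
  simp [consL, Finsupp.mapDomain_single]

noncomputable def bdl : List V → (List V →₀ K)
  | [] => 0
  | v :: l => single l 1 - consL v (bdl l)

noncomputable def bd : (List V →₀ K) →ₗ[K] (List V →₀ K) := Finsupp.linearCombination K bdl

@[simp] theorem bd_single (l : List V) (a : K) : bd (single l a) = a • bdl l := by
  simp [bd]

theorem bd_cons (v : V) (c : List V →₀ K) : bd (consL v c) = c - consL v (bd c) := by
  induction c using Finsupp.induction_linear with
  | zero => simp
  | add f g hf hg => simp only [map_add, hf, hg]; abel
  | single l a => simp [bdl, smul_sub]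

theorem bd_bd (c : List V →₀ K) : bd (bd c) = 0 := by
  induction c using Finsupp.induction_linear with
  | zero => simp
  | add f g hf hg => simp [map_add, hf, hg]
  | single l a =>
    rw [bd_single, map_smul]
    have : bd (bdl (K := K) l) = 0 := by
      induction l with
      | nil => simp [bdl]
      | cons v l ih => simp [bdl, bd_cons, ih]
    simp [this]

/-- chains supported on lists of length `m` satisfying `P` -/
def S (K : Type*) [Field K] (P : List V → Prop) (m : ℕ) : Submodule K (List V →₀ K) :=
  Finsupp.supported K K {l | P l ∧ l.length = m}

theorem single_mem_S {P : List V → Prop} {m : ℕ} {l : List V} (h : P l) (hm : l.length = m) (a : K) :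
    single l a ∈ S K P m := Finsupp.single_mem_supported K a ⟨h, hm⟩

theorem S_le {P : List V → Prop} {m : ℕ} {N : Submodule K (List V →₀ K)}
    (h : ∀ l, P l → l.length = m → single l 1 ∈ N) : S K P m ≤ N := by
  rw [S, Finsupp.supported_eq_span_single, Submodule.span_le]
  rintro _ ⟨l, ⟨h1, h2⟩, rfl⟩
  exact h l h1 h2

theorem S_map {M : Type*} [AddCommGroup M] [Module K M] {P : List V → Prop} {m : ℕ}
    {f : (List V →₀ K) →ₗ[K] M} {N : Submodule K M}
    (h : ∀ l, P l → l.length = m → f (single l 1) ∈ N) {c : List V →₀ K} (hc : c ∈ S K P m) :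
    f c ∈ N :=
  (S_le (N := N.comap f) (fun l h1 h2 => h l h1 h2)) hc

theorem S_ext {M : Type*} [AddCommGroup M] [Module K M] {P : List V → Prop} {m : ℕ}
    {f g : (List V →₀ K) →ₗ[K] M}
    (h : ∀ l, P l → l.length = m → f (single l 1) = g (single l 1)) {c : List V →₀ K}
    (hc : c ∈ S K P m) : f c = g c := by
  have := S_map (f := f - g) (N := ⊥) (fun l h1 h2 => by simp [h l h1 h2]) hc
  simpa [sub_eq_zero] using this

theorem S_mono {P P' : List V → Prop} {m : ℕ} (h : ∀ l, l.length = m → P l → P' l) :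
    S K P m ≤ S K P' m := S_le fun l h1 h2 => single_mem_S (h l h2 h1) h2 1

theorem S_inf {P P' : List V → Prop} {m : ℕ} {c : List V →₀ K} (h : c ∈ S K P m) (h' : c ∈ S K P' m) :
    c ∈ S K (fun l => P l ∧ P' l) m := by
  rw [S, Finsupp.mem_supported] at *
  intro l hl
  exact ⟨⟨(h hl).1, (h' hl).1⟩, (h hl).2⟩

def Cl (P : List V → Prop) : Prop := ∀ l l' : List V, l'.Sublist l → P l → P l'

theorem bdl_mem (l : List V) (m : ℕ) (hm : l.length = m + 1) :
    (bdl l : List V →₀ K) ∈ S K (fun l' => l'.Sublist l) m := by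
  induction l generalizing m with
  | nil => simp at hm
  | cons v l ih =>
    rw [bdl]
    have hm' : l.length = m := by simpa using hm
    refine Submodule.sub_mem _ (single_mem_S (P := fun l' => l'.Sublist (v :: l)) (List.sublist_cons_self v l) hm' 1) ?_
    cases m with
    | zero =>
      have : l = [] := List.length_eq_zero_iff.mp hm'
      subst this; simp [bdl]
    | succ m =>
      refine S_map (f := consL v) ?_ (ih m hm')
      intro l' h1 h2
      rw [consL_single]
      exact single_mem_S (P := fun l' => l'.Sublist (v :: l)) (List.Sublist.cons_cons v h1)
        (by simp [h2]) 1

theorem bd_mem {P : List V → Prop} (hP : Cl P) {m : ℕ} {c : List V →₀ K} (hc : c ∈ S K P (m+1)) :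
    bd c ∈ S K P m := by
  refine S_map (f := bd) ?_ hc
  intro l h1 h2
  rw [bd_single, one_smul]
  exact S_mono (fun l' _ h => hP l l' h h1) (bdl_mem l m h2)

theorem bd_zero {P : List V → Prop} {c : List V →₀ K} (hc : c ∈ S K P 0) : bd c = 0 := by
  have := S_map (f := bd) (N := ⊥) (fun l h1 h2 => by
    have : l = [] := List.length_eq_zero_iff.mp h2
    subst this; simp [bdl]) hc
  simpa using this

def Fill (K : Type*) [Field K] (P : List V → Prop) (m : ℕ) : Prop :=
  ∀ c ∈ S K P m, bd c = 0 → ∃ b ∈ S K P (m+1), bd b = c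

theorem Fill.congr {P P' : List V → Prop} {m : ℕ} (hF : Fill K P m) (h : ∀ l, P l ↔ P' l) : Fill K P' m := by
  have : P = P' := funext fun l => propext (h l)
  exact this ▸ hF

theorem fill_cone {P : List V → Prop} (v : V) (hv : ∀ l, P l → P (v :: l)) (m : ℕ) : Fill K P m := by
  intro c hc hb
  refine ⟨consL v c, S_map (f := consL v) ?_ hc, by rw [bd_cons, hb]; simp⟩
  intro l h1 h2
  rw [consL_single]
  exact single_mem_S (hv l h1) (by simp [h2]) 1

theorem fill_headcone {P : List V → Prop} (M : V)
    (hv : ∀ l, P l → (∃ l', l = M :: l' ∧ M ∉ l') ∨ (M ∉ l ∧ P (M :: l))) (m : ℕ) : Fill K P m := by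
  classical
  let s : (List V →₀ K) →ₗ[K] (List V →₀ K) :=
    Finsupp.linearCombination K (fun l => if M ∈ l then 0 else single (M :: l) 1)
  have hs1 : ∀ l : List V, M ∉ l → s (single l 1) = single (M :: l) 1 := by
    intro l h; simp [s, h]
  have hs0 : ∀ l : List V, M ∈ l → s (single l 1) = 0 := by
    intro l h; simp [s, h]
  have key : ∀ l, P l → bd (s (single l (1:K))) + s (bd (single l 1)) = single l 1 := by
    intro l hl
    have hsub : ∀ l : List V, M ∉ l → s (bdl l) = consL M (bdl l) := by
      intro l h
      rcases l with _ | ⟨w, l⟩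
      · simp [bdl]
      · refine S_ext ?_ (bdl_mem (w :: l) l.length rfl)
        intro l' h1 _
        rw [hs1 _ (fun h' => h (h1.subset h')), consL_single]
    rcases hv l hl with ⟨l', rfl, hM⟩ | ⟨hM, -⟩
    · rw [hs0 _ (by simp), map_zero, zero_add, bd_single, one_smul, bdl, map_sub, hs1 _ hM]
      have : s (consL M (bdl l')) = 0 := by
        rcases l' with _ | ⟨w, l'⟩
        · simp [bdl]
        · have := S_ext (f := s ∘ₗ consL M) (g := 0) (fun l'' h1 _ => by
            rw [LinearMap.comp_apply, consL_single, hs0 _ (by simp)]; rfl)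
            (bdl_mem (K := K) (w :: l') l'.length rfl)
          simpa using this
      rw [this, sub_zero]
    · rw [hs1 _ hM, bd_single, bd_single, one_smul, one_smul, bdl, hsub l hM]; abel
  intro c hc hb
  refine ⟨s c, S_map (f := s) ?_ hc, ?_⟩
  · intro l h1 h2
    rcases hv l h1 with ⟨l', rfl, hM⟩ | ⟨hM, h3⟩
    · rw [hs0 _ (by simp)]; exact Submodule.zero_mem _
    · rw [hs1 _ hM]; exact single_mem_S h3 (by simp [h2]) 1
  · have := S_ext (f := bd ∘ₗ s + s ∘ₗ bd) (g := LinearMap.id) (fun l h1 _ => by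
      simpa using key l h1) hc
    simpa [hb] using this

theorem fill_zero {A P : List V → Prop} (hA : A []) (hAP : ∀ l, A l → P l) (h : Fill K A 0) : Fill K P 0 := by
  intro c hc hb
  have : c ∈ S K A 0 := S_mono (fun l hl _ => by
    have : l = [] := List.length_eq_zero_iff.mp hl
    subst this; exact hA) hc
  obtain ⟨b, hb1, hb2⟩ := h c this hb
  exact ⟨b, S_mono (fun l _ => hAP l) hb1, hb2⟩

theorem fill_MV {A B P : List V → Prop} (hA : Cl A) (hB : Cl B) (hP : ∀ l, P l ↔ A l ∨ B l) {m : ℕ}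
    (fA : Fill K A (m+1)) (fB : Fill K B (m+1)) (fI : Fill K (fun l => A l ∧ B l) m) :
    Fill K P (m+1) := by
  classical
  intro c hc hb
  set cA := c.filter A with hcA
  set cB := c.filter (fun l => ¬ A l) with hcB
  have hsum : cA + cB = c := Finsupp.filter_add_filter_not c A
  rw [S, Finsupp.mem_supported] at hc
  have h1 : cA ∈ S K A (m+1) := by
    rw [S, Finsupp.mem_supported]
    intro l hl
    rw [hcA, Finsupp.support_filter, Finset.mem_coe, Finset.mem_filter] at hl
    exact ⟨hl.2, (hc hl.1).2⟩
  have h2 : cB ∈ S K B (m+1) := by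
    rw [S, Finsupp.mem_supported]
    intro l hl
    rw [hcB, Finsupp.support_filter, Finset.mem_coe, Finset.mem_filter] at hl
    exact ⟨((hP l).1 (hc hl.1).1).resolve_left hl.2, (hc hl.1).2⟩
  have hbs : bd cA + bd cB = 0 := by rw [← map_add, hsum, hb]
  have h3 : bd cA ∈ S K B m := by
    rw [eq_neg_of_add_eq_zero_left hbs]
    exact Submodule.neg_mem _ (bd_mem hB h2)
  obtain ⟨z, hz, hz'⟩ := fI (bd cA) (S_inf (bd_mem hA h1) h3) (bd_bd _)
  have hzA : z ∈ S K A (m+1) := S_mono (fun l _ h => h.1) hz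
  have hzB : z ∈ S K B (m+1) := S_mono (fun l _ h => h.2) hz
  obtain ⟨bA, hbA, hbA'⟩ := fA (cA - z) (Submodule.sub_mem _ h1 hzA) (by rw [map_sub, hz', sub_self])
  obtain ⟨bB, hbB, hbB'⟩ := fB (cB + z) (Submodule.add_mem _ h2 hzB) (by
    rw [map_add, hz', add_comm, hbs])
  refine ⟨bA + bB, Submodule.add_mem _ (S_mono (fun l _ h => (hP l).2 (Or.inl h)) hbA)
    (S_mono (fun l _ h => (hP l).2 (Or.inr h)) hbB), ?_⟩
  rw [map_add, hbA', hbB', ← hsum]; abel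

theorem fill_union {ι : Type*} (Q : Finset ι) (hQ : Q.Nonempty) :
    ∀ (A : ι → List V → Prop) (m : ℕ), (∀ i, Cl (A i)) → (∀ i, A i []) →
    (∀ T ⊆ Q, T.Nonempty → ∀ m', m' + T.card ≤ m + 1 → Fill K (fun l => ∀ i ∈ T, A i l) m') →
    Fill K (fun l => ∃ i ∈ Q, A i l) m := by
  classical
  induction hQ using Finset.Nonempty.cons_induction with
  | singleton a =>
    intro A m hcl hn h
    exact (h {a} subset_rfl (by simp) m (by simp)).congr (by simp)
  | cons a Q ha hQ ih =>
    intro A m hcl hn h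
    have hsub : Q ⊆ Finset.cons a Q ha := Finset.subset_cons ha
    have fa : Fill K (A a) m :=
      (h {a} (by simp) (by simp) m (by simp)).congr (by simp)
    cases m with
    | zero => exact fill_zero (hn a) (fun l hl => ⟨a, by simp, hl⟩) fa
    | succ m =>
      refine fill_MV (A := A a) (B := fun l => ∃ i ∈ Q, A i l) (hcl a) ?_ (by simp) fa ?_ ?_
      · rintro l l' hl ⟨i, hi, hi'⟩
        exact ⟨i, hi, hcl i l l' hl hi'⟩
      · exact ih A (m+1) hcl hn (fun T hT => h T (hT.trans hsub))
      · have := ih (fun i l => A a l ∧ A i l) m (fun i l l' hl h => ⟨hcl a _ _ hl h.1, hcl i _ _ hl h.2⟩)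
          (fun i => ⟨hn a, hn i⟩) (fun T hT hTn m' hm' => by
            refine (h (insert a T) ?_ (by simp) m' ?_).congr ?_
            · intro x hx
              rcases Finset.mem_insert.1 hx with rfl | hx
              · simp
              · exact hsub (hT hx)
            · rw [Finset.card_insert_of_notMem (fun h => ha (hT h))]; omega
            · intro l
              obtain ⟨t, ht⟩ := hTn
              simp only [Finset.mem_insert, forall_eq_or_imp]
              constructor
              · rintro ⟨h1, h2⟩ i hi
                exact ⟨h1, h2 i hi⟩
              · intro h1
                exact ⟨(h1 t ht).1, fun i hi => (h1 i hi).2⟩)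
        refine this.congr ?_
        intro l
        constructor
        · rintro ⟨i, hi, h1, h2⟩; exact ⟨h1, i, hi, h2⟩
        · rintro ⟨h1, i, hi, h2⟩; exact ⟨i, hi, h1, h2⟩

end chains
end DCT


namespace DCT
open Finsupp

section nerve
variable {K : Type*} [Field K] {V κ : Type*} {X : Type*} [AddCommGroup X] [Module ℝ X]

/-- realized at a point -/
def Zp (R0 : List V → Prop) (O : V → X → Prop) (q : X) (l : List V) : Prop :=
  R0 l ∧ ∀ v ∈ l, O v q

/-- realized at some point of `Q` -/
def Zc (R0 : List V → Prop) (O : V → X → Prop) (Q : Set X) (l : List V) : Prop :=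
  R0 l ∧ ∃ q ∈ Q, ∀ v ∈ l, O v q

theorem Zc_cl {R0 : List V → Prop} (h0 : Cl R0) (O : V → X → Prop) (Q : Set X) : Cl (Zc R0 O Q) := by
  rintro l l' hl ⟨h1, q, hq, h2⟩
  exact ⟨h0 l l' hl h1, q, hq, fun v hv => h2 v (hl.subset hv)⟩

theorem Zp_cl {R0 : List V → Prop} (h0 : Cl R0) (O : V → X → Prop) (q : X) : Cl (Zp R0 O q) := by
  rintro l l' hl ⟨h1, h2⟩
  exact ⟨h0 l l' hl h1, fun v hv => h2 v (hl.subset hv)⟩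

/-- affine functionals, elementary version -/
def Aff (f : X → ℝ) : Prop := ∀ q q' : X, ∀ t : ℝ, f ((1 - t) • q + t • q') = (1 - t) * f q + t * f q'

/-- `O v` is a finite intersection of open half spaces among the `ℓ` -/
def HO (ℓ : κ → X → ℝ) (O : V → X → Prop) : Prop :=
  ∀ v, ∃ A : Finset (κ × ℝ), ∀ q, O v q ↔ ∀ x ∈ A, 0 < x.2 * ℓ x.1 q

variable {ℓ : κ → X → ℝ} {O : V → X → Prop} {R0 : List V → Prop}

theorem ev_pos {f : X → ℝ} (hf : Aff f) (q q' : X) (s : ℝ) (h : 0 < s * f q) :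
    ∀ᶠ t in nhdsWithin (0:ℝ) (Set.Ioi 0), 0 < s * f ((1 - t) • q + t • q') := by
  have hc : Continuous (fun t : ℝ => s * ((1 - t) * f q + t * f q')) := by fun_prop
  have : ∀ᶠ t in nhds (0:ℝ), 0 < s * ((1 - t) * f q + t * f q') :=
    hc.continuousAt.eventually_mem (isOpen_Ioi.mem_nhds (by simpa using h))
  refine (this.filter_mono nhdsWithin_le_nhds).mono ?_
  intro t ht
  rw [hf]; exact ht

theorem ev_O (hℓ : ∀ k, Aff (ℓ k)) (hO : HO ℓ O) (v : V) (q q' : X) (h : O v q) :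
    ∀ᶠ t in nhdsWithin (0:ℝ) (Set.Ioi 0), O v ((1 - t) • q + t • q') := by
  obtain ⟨A, hA⟩ := hO v
  simp only [hA] at h ⊢
  rw [Filter.eventually_all_finset]
  intro x hx
  exact ev_pos (hℓ _) q q' _ (h x hx)

theorem O_convex (hℓ : ∀ k, Aff (ℓ k)) (hO : HO ℓ O) (v : V) (q q' : X) (h : O v q) (h' : O v q')
    (t : ℝ) (h0 : 0 ≤ t) (h1 : t ≤ 1) : O v ((1 - t) • q + t • q') := by
  obtain ⟨A, hA⟩ := hO v
  simp only [hA] at h h' ⊢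
  intro x hx
  rw [hℓ]
  have a := h x hx
  have b := h' x hx
  rcases h0.lt_or_eq with h0 | rfl
  · nlinarith [mul_nonneg (sub_nonneg.2 h1) a.le, mul_pos h0 b]
  · simpa using a

theorem push (hℓ : ∀ k, Aff (ℓ k)) (hO : HO ℓ O) {Q : Set X} (hQ : Convex ℝ Q) (k : κ) (s : ℝ)
    {l : List V} {q q' : X} (hq : q ∈ Q) (hl : ∀ v ∈ l, O v q) (h0 : 0 ≤ s * ℓ k q) (hq' : q' ∈ Q)
    (h1 : 0 < s * ℓ k q') : ∃ q'' ∈ Q, 0 < s * ℓ k q'' ∧ ∀ v ∈ l, O v q'' := by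
  have e1 : ∀ᶠ t in nhdsWithin (0:ℝ) (Set.Ioi 0), ∀ v ∈ l, O v ((1 - t) • q + t • q') := by
    have := (Filter.eventually_all_finite (l.finite_toSet)
      (l := nhdsWithin (0:ℝ) (Set.Ioi 0)) (p := fun v t => O v ((1 - t) • q + t • q'))).2
      (fun v hv => ev_O hℓ hO v q q' (hl v hv))
    exact this
  have e2 : ∀ᶠ t in nhdsWithin (0:ℝ) (Set.Ioi 0), t < 1 :=
    (eventually_lt_nhds zero_lt_one).filter_mono nhdsWithin_le_nhds
  have e3 : ∀ᶠ t in nhdsWithin (0:ℝ) (Set.Ioi 0), 0 < t := eventually_mem_nhdsWithin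
  obtain ⟨t, ht1, ht2, ht3⟩ := (e1.and (e2.and e3)).exists
  refine ⟨_, hQ hq hq' (by linarith : 0 ≤ 1 - t) ht3.le (by ring), ?_, ht1⟩
  rw [hℓ]
  nlinarith [mul_nonneg (by linarith : 0 ≤ 1 - t) h0, mul_pos ht3 h1]

theorem convex_sep (hℓ : ∀ k, Aff (ℓ k)) {Q : Set X} (hQ : Convex ℝ Q) (k : κ) (s : ℝ) :
    Convex ℝ {q ∈ Q | 0 < s * ℓ k q} := by
  rintro x ⟨hx, hx'⟩ y ⟨hy, hy'⟩ a b ha hb hab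
  refine ⟨hQ hx hy ha hb hab, ?_⟩
  obtain rfl : a = 1 - b := by linarith
  rw [hℓ]
  rcases hb.lt_or_eq with h0 | rfl
  · nlinarith [mul_nonneg ha hx'.le, mul_pos h0 hy']
  · simpa using hx'

theorem convex_zero (hℓ : ∀ k, Aff (ℓ k)) {Q : Set X} (hQ : Convex ℝ Q) (k : κ) :
    Convex ℝ {q ∈ Q | ℓ k q = 0} := by
  rintro x ⟨hx, hx'⟩ y ⟨hy, hy'⟩ a b ha hb hab
  refine ⟨hQ hx hy ha hb hab, ?_⟩
  obtain rfl : a = 1 - b := by linarith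
  rw [hℓ, hx', hy']; ring

theorem nerve_step (h0 : Cl R0) (hn : R0 []) (hℓ : ∀ k, Aff (ℓ k)) (hO : HO ℓ O) {Q : Set X} (hQ : Convex ℝ Q)
    (k : κ) (hk : ∃ q ∈ Q, ℓ k q ≠ 0) (m : ℕ)
    (hs : ∀ s : ℝ, s ≠ 0 → {q ∈ Q | 0 < s * ℓ k q}.Nonempty → Fill K (Zc R0 O {q ∈ Q | 0 < s * ℓ k q}) m)
    (hz : ∀ m', m' + 1 = m → {q ∈ Q | ℓ k q = 0}.Nonempty → Fill K (Zc R0 O {q ∈ Q | ℓ k q = 0}) m') :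
    Fill K (Zc R0 O Q) m := by
  -- one sided case
  have one : ∀ s : ℝ, s ≠ 0 → (∃ q ∈ Q, 0 < s * ℓ k q) → (∀ q ∈ Q, 0 ≤ s * ℓ k q) →
      Fill K (Zc R0 O Q) m := by
    rintro s hs0 ⟨q', hq', hq2⟩ hall
    refine (hs s hs0 ⟨q', hq', hq2⟩).congr ?_
    intro l
    constructor
    · rintro ⟨h1, q, hq, h2⟩
      exact ⟨h1, q, hq.1, h2⟩
    · rintro ⟨h1, q, hq, h2⟩
      obtain ⟨q'', h3, h4, h5⟩ := push hℓ hO hQ k s hq h2 (hall q hq) hq' hq2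
      exact ⟨h1, q'', ⟨h3, h4⟩, h5⟩
  by_cases hp : ∃ q ∈ Q, 0 < (1:ℝ) * ℓ k q
  · by_cases hm : ∃ q ∈ Q, 0 < (-1:ℝ) * ℓ k q
    · obtain ⟨qp, hqp, hqp'⟩ := hp
      obtain ⟨qm, hqm, hqm'⟩ := hm
      have fp := hs 1 (by norm_num) ⟨qp, hqp, hqp'⟩
      have fm := hs (-1) (by norm_num) ⟨qm, hqm, hqm'⟩
      cases m with
      | zero =>
        refine fill_zero ⟨hn, qp, ⟨hqp, hqp'⟩, by simp⟩ ?_ fp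
        rintro l ⟨h1, q, hq, h2⟩
        exact ⟨h1, q, hq.1, h2⟩
      | succ m =>
        have cross : ∀ (l : List V) (q q' : X), q ∈ Q → 0 < ℓ k q → q' ∈ Q → ℓ k q' < 0 →
            (∀ v ∈ l, O v q) → (∀ v ∈ l, O v q') → ∃ q'' ∈ Q, ℓ k q'' = 0 ∧ ∀ v ∈ l, O v q'' := by
          intro l q q' hq h1 hq' h2 h3 h4
          set t := ℓ k q / (ℓ k q - ℓ k q') with ht
          have hpos : 0 < ℓ k q - ℓ k q' := by linarith
          have t0 : 0 ≤ t := by positivity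
          have t1 : t ≤ 1 := by rw [ht, div_le_one hpos]; linarith
          refine ⟨_, hQ hq hq' (by linarith : 0 ≤ 1 - t) t0 (by ring), ?_, fun v hv =>
            O_convex hℓ hO v q q' (h3 v hv) (h4 v hv) t t0 t1⟩
          rw [hℓ, ht]; field_simp; ring
        refine fill_MV (Zc_cl h0 O _) (Zc_cl h0 O _) ?_ fp fm ?_
        · intro l
          constructor
          · rintro ⟨h1, q, hq, h2⟩
            rcases le_total 0 (ℓ k q) with h | h
            · obtain ⟨q'', h3, h4, h5⟩ := push hℓ hO hQ k 1 hq h2 (by simpa using h) hqp hqp'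
              exact Or.inl ⟨h1, q'', ⟨h3, h4⟩, h5⟩
            · obtain ⟨q'', h3, h4, h5⟩ := push hℓ hO hQ k (-1) hq h2 (by simpa using h) hqm hqm'
              exact Or.inr ⟨h1, q'', ⟨h3, h4⟩, h5⟩
          · rintro (⟨h1, q, hq, h2⟩ | ⟨h1, q, hq, h2⟩) <;> exact ⟨h1, q, hq.1, h2⟩
        · obtain ⟨z, hz1, hz2, -⟩ := cross [] qp qm hqp (by simpa using hqp') hqm (by simpa using hqm')
            (by simp) (by simp)
          refine (hz m rfl ⟨z, hz1, hz2⟩).congr ?_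
          intro l
          constructor
          · rintro ⟨h1, q, ⟨hq, hq0⟩, h2⟩
            obtain ⟨q1, h3, h4, h5⟩ := push hℓ hO hQ k 1 hq h2 (by simp [hq0]) hqp hqp'
            obtain ⟨q2, h3', h4', h5'⟩ := push hℓ hO hQ k (-1) hq h2 (by simp [hq0]) hqm hqm'
            exact ⟨⟨h1, q1, ⟨h3, h4⟩, h5⟩, ⟨h1, q2, ⟨h3', h4'⟩, h5'⟩⟩
          · rintro ⟨⟨h1, q, ⟨hq, hq0⟩, h2⟩, ⟨-, q', ⟨hq', hq0'⟩, h2'⟩⟩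
            obtain ⟨z, hz1, hz2, hz3⟩ := cross l q q' hq (by simpa using hq0) hq' (by simpa using hq0') h2 h2'
            exact ⟨h1, z, ⟨hz1, hz2⟩, hz3⟩
    · push Not at hm
      exact one 1 (by norm_num) hp (fun q hq => by have := hm q hq; linarith)
  · push Not at hp
    obtain ⟨q, hq, hq0⟩ := hk
    refine one (-1) (by norm_num) ⟨q, hq, ?_⟩ (fun q hq => by have := hp q hq; linarith)
    have := hp q hq
    have h3 : ℓ k q < 0 := lt_of_le_of_ne (by linarith) hq0
    linarith

/-- sign constancy -/
def SC (f : X → ℝ) (Q : Set X) : Prop := ∀ q ∈ Q, ∀ q' ∈ Q, ∀ s : ℝ, 0 < s * f q → 0 < s * f q'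

theorem SC.mono {f : X → ℝ} {Q Q' : Set X} (h : SC f Q) (hs : Q' ⊆ Q) : SC f Q' :=
  fun q hq q' hq' => h q (hs hq) q' (hs hq')

theorem SC_sep {f : X → ℝ} {Q : Set X} (s : ℝ) : SC f {q ∈ Q | 0 < s * f q} := by
  rintro q ⟨-, hq⟩ q' ⟨-, hq'⟩ s' h
  have h1 : 0 < f q * f q' := by
    by_contra hcon
    push Not at hcon
    nlinarith [mul_pos hq hq', mul_self_nonneg s]
  have h2 : 0 < (s' * f q) * (f q * f q') := mul_pos h h1
  have h3 : f q ≠ 0 := by rintro h; simp [h] at hq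
  have h4 : 0 < f q ^ 2 := by positivity
  by_contra hcon
  push Not at hcon
  nlinarith

theorem SC_zero {f : X → ℝ} {Q : Set X} : SC f {q ∈ Q | f q = 0} := by
  rintro q ⟨-, hq⟩ q' ⟨-, hq'⟩ s' h
  simp [hq] at h

theorem nerve_const (hO : HO ℓ O) {Q : Set X} (hQn : Q.Nonempty)
    (hsc : ∀ k, SC (ℓ k) Q) (m : ℕ) (hF : ∀ q ∈ Q, Fill K (Zp R0 O q) m) : Fill K (Zc R0 O Q) m := by
  obtain ⟨q, hq⟩ := hQn
  refine (hF q hq).congr ?_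
  intro l
  constructor
  · rintro ⟨h1, h2⟩
    exact ⟨h1, q, hq, h2⟩
  · rintro ⟨h1, q', hq', h2⟩
    refine ⟨h1, fun v hv => ?_⟩
    obtain ⟨A, hA⟩ := hO v
    have := h2 v hv
    rw [hA] at this ⊢
    intro x hx
    exact hsc x.1 q' hq' q hq _ (this x hx)

theorem nerve2 [DecidableEq κ] (h0 : Cl R0) (hn : R0 []) (hℓ : ∀ k, Aff (ℓ k)) (hO : HO ℓ O) (Kk : Finset κ) :
    ∀ (Q : Set X) (m : ℕ), Convex ℝ Q → Q.Nonempty → (∀ k ∉ Kk, SC (ℓ k) Q) →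
    (∀ q ∈ Q, ∀ m' ≤ m, Fill K (Zp R0 O q) m') → Fill K (Zc R0 O Q) m := by
  induction Kk using Finset.induction_on with
  | empty =>
    intro Q m hQ hQn hsc hF
    exact nerve_const hO hQn (fun k => hsc k (by simp)) m (fun q hq => hF q hq m le_rfl)
  | insert k K' hk ih =>
    intro Q m hQ hQn hsc hF
    by_cases hcase : ∃ q ∈ Q, ℓ k q ≠ 0
    · refine nerve_step h0 hn hℓ hO hQ k hcase m ?_ ?_
      · intro s hs hne
        refine ih _ m (convex_sep hℓ hQ k s) hne ?_ (fun q hq => hF q hq.1)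
        intro k' hk'
        by_cases h : k' = k
        · subst h; exact SC_sep s
        · exact (hsc k' (by simp [h, hk'])).mono (fun q hq => hq.1)
      · intro m' hm' hne
        refine ih _ m' (convex_zero hℓ hQ k) hne ?_ (fun q hq m'' h => hF q hq.1 m'' (by omega))
        intro k' hk'
        by_cases h : k' = k
        · subst h; exact SC_zero
        · exact (hsc k' (by simp [h, hk'])).mono (fun q hq => hq.1)
    · push Not at hcase
      refine ih Q m hQ hQn ?_ hF
      intro k' hk'
      by_cases h : k' = k
      · subst h
        intro q hq q' hq' s hs
        simp [hcase q hq] at hs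
      · exact hsc k' (by simp [h, hk'])

/-- the item version: `It` is the set of items in general position. -/
theorem nerve1 [DecidableEq κ] [Fintype κ] (h0 : Cl R0) (hn : R0 []) (hℓ : ∀ k, Aff (ℓ k)) (hO : HO ℓ O)
    (It : Finset κ)
    (hgen : ∀ T : Finset κ, T ⊆ It → ∀ k ∈ It, k ∉ T → ∀ q, (∀ i ∈ T, ℓ i q = 0) → ℓ k q = 0 →
      ∃ q', (∀ i ∈ T, ℓ i q' = 0) ∧ ℓ k q' ≠ 0) (Kk : Finset κ) :
    ∀ (m : ℕ) (σ : κ → ℝ), Kk ⊆ It → ∀ Q : Set X,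
    Q = {q | ∀ k ∈ It, k ∉ Kk → ((σ k = 0 ∧ ℓ k q = 0) ∨ (0 < σ k * ℓ k q))} → Q.Nonempty →
    Convex ℝ Q →
    (∀ q ∈ Q, ∀ m', m' + (Kk.filter (fun k => ℓ k q = 0)).card ≤ m → Fill K (Zp R0 O q) m') →
    Fill K (Zc R0 O Q) m := by
  induction Kk using Finset.induction_on with
  | empty =>
    intro m σ _ Q hQ hQn hQc hF
    refine nerve2 h0 hn hℓ hO (Finset.univ \ It) Q m hQc hQn ?_ (fun q hq m' h => hF q hq m' (by simpa using h))
    intro k hk q hq q' hq' s hs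
    rw [hQ] at hq hq'
    have hk' : k ∈ It := by simpa using hk
    rcases hq k hk' (by simp) with ⟨h1, h2⟩ | h1
    · simp [h2] at hs
    · rcases hq' k hk' (by simp) with ⟨h3, -⟩ | h3
      · simp [h3] at h1
      · exact SC_sep (f := ℓ k) (Q := Set.univ) (σ k) q ⟨trivial, h1⟩ q' ⟨trivial, h3⟩ s hs
  | insert k K' hk ih =>
    intro m σ hsub Q hQ hQn hQc hF
    have hkIt : k ∈ It := hsub (by simp)
    have hsub' : K' ⊆ It := fun x hx => hsub (by simp [hx])
    have hcase : ∃ q ∈ Q, ℓ k q ≠ 0 := by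
      obtain ⟨q, hq⟩ := hQn
      by_contra hcon
      push Not at hcon
      have hq0 := hcon q hq
      obtain ⟨q', h1, h2⟩ := hgen (It.filter (fun i => i ∉ insert k K' ∧ σ i = 0)) (Finset.filter_subset _ _) k hkIt
        (by simp) q (by
          intro i hi
          rw [Finset.mem_filter] at hi
          rw [hQ] at hq
          rcases hq i hi.1 hi.2.1 with h | h
          · exact h.2
          · simp [hi.2.2] at h) hq0
      have ev : ∀ᶠ t in nhdsWithin (0:ℝ) (Set.Ioi 0), ∀ i ∈ It, i ∉ insert k K' →
          ((σ i = 0 ∧ ℓ i ((1 - t) • q + t • q') = 0) ∨ (0 < σ i * ℓ i ((1 - t) • q + t • q'))) := by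
        rw [Filter.eventually_all_finset]
        intro i hi
        rw [hQ] at hq
        by_cases h3 : i ∈ insert k K'
        · exact Filter.Eventually.of_forall (fun t h => absurd h3 h)
        rcases hq i hi h3 with h | h
        · refine Filter.Eventually.of_forall (fun t _ => Or.inl ⟨h.1, ?_⟩)
          rw [hℓ, h.2, h1 i (by rw [Finset.mem_filter]; exact ⟨hi, h3, h.1⟩)]; ring
        · exact (ev_pos (hℓ i) q q' _ h).mono (fun t ht _ => Or.inr ht)
      have e3 : ∀ᶠ t in nhdsWithin (0:ℝ) (Set.Ioi 0), 0 < t := eventually_mem_nhdsWithin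
      obtain ⟨t, ht, ht0⟩ := (ev.and e3).exists
      have := hcon ((1 - t) • q + t • q') (by rw [hQ]; exact ht)
      rw [hℓ, hq0, mul_zero, zero_add] at this
      rcases mul_eq_zero.1 this with h | h
      · exact ht0.ne' h
      · exact h2 h
    refine nerve_step h0 hn hℓ hO hQc k hcase m ?_ ?_
    · intro s hs hne
      refine ih m (Function.update σ k s) hsub' _ ?_ hne (convex_sep hℓ hQc k s) ?_
      · ext q
        rw [hQ]
        constructor
        · rintro ⟨h1, h2⟩ i hi hi'
          by_cases h : i = k
          · subst h; simp [h2]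
          · have := h1 i hi (by simp [h, hi'])
            simpa [h] using this
        · intro h1
          refine ⟨fun i hi hi' => ?_, ?_⟩
          · rw [Finset.mem_insert, not_or] at hi'
            have := h1 i hi hi'.2
            simpa [hi'.1] using this
          · have := h1 k hkIt hk
            simpa [hs] using this
      · intro q hq m' hm'
        refine hF q hq.1 m' ?_
        rw [Finset.filter_insert, if_neg]
        · exact hm'
        · intro h; have := hq.2; simp [h] at this
    · intro m' hm' hne
      refine ih m' (Function.update σ k 0) hsub' _ ?_ hne (convex_zero hℓ hQc k) ?_
      · ext q
        rw [hQ]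
        constructor
        · rintro ⟨h1, h2⟩ i hi hi'
          by_cases h : i = k
          · subst h; simp [h2]
          · have := h1 i hi (by simp [h, hi'])
            simpa [h] using this
        · intro h1
          refine ⟨fun i hi hi' => ?_, ?_⟩
          · rw [Finset.mem_insert, not_or] at hi'
            have := h1 i hi hi'.2
            simpa [hi'.1] using this
          · have := h1 k hkIt hk
            simpa using this
      · intro q hq m'' hm''
        refine hF q hq.1 m'' ?_
        rw [Finset.filter_insert, if_pos hq.2, Finset.card_insert_of_notMem (by simp [hk])]
        omega

end nerve
end DCT


namespace DCT
open Finsupp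

section chess
variable {K : Type*} [Field K] {V I C G : Type*} [DecidableEq I] [DecidableEq C] [DecidableEq G] [Fintype C]

/-- colored chessboard complexes -/
def Ck (u : I → G → V) (col : I → C) (T : Finset I) (Sb : C → Finset G) (l : List V) : Prop :=
  (∀ v ∈ l, ∃ i ∈ T, ∃ b ∈ Sb (col i), v = u i b) ∧
  (∀ i b i' b', u i b ∈ l → u i' b' ∈ l → (i = i' → b = b') ∧ (col i = col i' → b = b' → i = i'))

theorem Ck_sub {u : I → G → V} {col : I → C} {T : Finset I} {Sb : C → Finset G} {l l' : List V}
    (hs : l' ⊆ l) (h : Ck u col T Sb l) : Ck u col T Sb l' :=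
  ⟨fun v hv => h.1 v (hs hv), fun i b i' b' h1 h2 => h.2 i b i' b' (hs h1) (hs h2)⟩

theorem Ck_cover {u : I → G → V} (hu : ∀ i b i' b', u i b = u i' b' → i = i' ∧ b = b') {col : I → C}
    {T : Finset I} {Sb : C → Finset G} {l : List V} (h : Ck u col T Sb l) (c : C) (b : G) (hb : b ∈ Sb c)
    (hc : (Sb c).card ≤ (T.filter (fun i => col i = c)).card) :
    ∃ i ∈ T.filter (fun i => col i = c), Ck u col T Sb (u i b :: l) := by
  classical
  by_cases hex : ∃ i, col i = c ∧ u i b ∈ l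
  · obtain ⟨i, hi, hil⟩ := hex
    obtain ⟨i', hi', b', -, he⟩ := h.1 _ hil
    obtain ⟨rfl, rfl⟩ := hu _ _ _ _ he
    refine ⟨i, by simp [hi, hi'], Ck_sub ?_ h⟩
    intro x hx
    rcases List.mem_cons.1 hx with rfl | hx
    · exact hil
    · exact hx
  · push Not at hex
    have : ∃ i ∈ T.filter (fun i => col i = c), ∀ b', u i b' ∉ l := by
      by_contra hcon
      push Not at hcon
      haveI : Nonempty G := ⟨b⟩
      choose! f hf using hcon
      have h1 : Set.MapsTo f (T.filter (fun i => col i = c) : Finset I) ((Sb c).erase b : Finset G) := by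
        intro i hi
        have hi' := hf i hi
        have hic : col i = c := (Finset.mem_filter.1 hi).2
        obtain ⟨i', h1, b', h2, he⟩ := h.1 _ hi'
        obtain ⟨rfl, h3⟩ := hu _ _ _ _ he
        rw [Finset.mem_coe, Finset.mem_erase]
        refine ⟨?_, ?_⟩
        · intro h4
          rw [h4] at hi'
          exact hex i hic hi'
        · rw [h3, ← hic]; exact h2
      have h2 := Finset.card_le_card_of_injOn f h1 (by
        intro i hi i' hi' he
        exact (h.2 _ _ _ _ (hf i hi) (hf i' hi')).2
          ((Finset.mem_filter.1 hi).2.trans (Finset.mem_filter.1 hi').2.symm) he)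
      rw [Finset.card_erase_of_mem hb] at h2
      have : 0 < (Sb c).card := Finset.card_pos.2 ⟨b, hb⟩
      omega
    obtain ⟨i, hi, hi'⟩ := this
    have hi2 := Finset.mem_filter.1 hi
    refine ⟨i, hi, ?_, ?_⟩
    · intro v hv
      rcases List.mem_cons.1 hv with rfl | hv
      · exact ⟨i, hi2.1, b, by rw [hi2.2]; exact hb, rfl⟩
      · exact h.1 v hv
    · intro j1 b1 j2 b2 e1 e2
      rcases List.mem_cons.1 e1 with h1 | h1 <;> rcases List.mem_cons.1 e2 with h2 | h2
      · obtain ⟨rfl, rfl⟩ := hu _ _ _ _ h1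
        obtain ⟨rfl, rfl⟩ := hu _ _ _ _ h2
        simp
      · obtain ⟨rfl, rfl⟩ := hu _ _ _ _ h1
        refine ⟨?_, ?_⟩
        · rintro rfl; exact absurd h2 (hi' _)
        · rintro h3 rfl; exact absurd h2 (hex _ (h3.symm.trans hi2.2))
      · obtain ⟨rfl, rfl⟩ := hu _ _ _ _ h2
        refine ⟨?_, ?_⟩
        · rintro rfl; exact absurd h1 (hi' _)
        · rintro h3 rfl; exact absurd h1 (hex _ (h3.trans hi2.2))
      · exact h.2 _ _ _ _ h1 h2

theorem Ck_inter {u : I → G → V} (hu : ∀ i b i' b', u i b = u i' b' → i = i' ∧ b = b') {col : I → C}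
    {T : Finset I} {Sb : C → Finset G} {l : List V} (c : C) (b : G) (hb : b ∈ Sb c)
    (Tq : Finset I) (hTq : Tq ⊆ T.filter (fun i => col i = c)) (h2 : 2 ≤ Tq.card) :
    (∀ i ∈ Tq, Ck u col T Sb (u i b :: l)) ↔
      Ck u col (T \ Tq) (Function.update Sb c ((Sb c).erase b)) l := by
  have two : ∀ i, ∃ i' ∈ Tq, i' ≠ i := by
    intro i
    obtain ⟨a, ha, b, hb, hab⟩ := Finset.one_lt_card.1 h2
    by_cases h : a = i
    · exact ⟨b, hb, by rintro rfl; exact hab h⟩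
    · exact ⟨a, ha, h⟩
  have hcolq : ∀ i ∈ Tq, i ∈ T ∧ col i = c := fun i hi => Finset.mem_filter.1 (hTq hi)
  constructor
  · intro h
    have key : ∀ i', col i' = c → u i' b ∉ l := by
      intro i' hi' hmem
      obtain ⟨i, hi, hne⟩ := two i'
      exact hne (((h i hi).2 i b i' b (by simp) (by simp [hmem])).2 ((hcolq i hi).2.trans hi'.symm) rfl)
    obtain ⟨i0, hi0⟩ : Tq.Nonempty := Finset.card_pos.1 (by omega)
    refine ⟨?_, ?_⟩
    · intro v hv
      obtain ⟨i', h1, b', h3, rfl⟩ := (h i0 hi0).1 v (by simp [hv])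
      refine ⟨i', ?_, b', ?_, rfl⟩
      · rw [Finset.mem_sdiff]
        refine ⟨h1, fun hq => ?_⟩
        have := ((h i' hq).2 i' b i' b' (by simp) (by simp [hv])).1 rfl
        subst this
        exact key i' (hcolq i' hq).2 hv
      · by_cases hcc : col i' = c
        · rw [hcc, Function.update_self, Finset.mem_erase]
          refine ⟨?_, hcc ▸ h3⟩
          rintro rfl
          exact key i' hcc hv
        · rw [Function.update_of_ne hcc]; exact h3
    · intro i b i' b' h3 h4
      exact (h i0 hi0).2 i b i' b' (by simp [h3]) (by simp [h4])
  · intro h i hi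
    have key : ∀ i' b', u i' b' ∈ l → i' ∉ Tq ∧ i' ∈ T ∧ b' ∈ Sb (col i') ∧ (col i' = c → b' ≠ b) := by
      intro i' b' hm
      obtain ⟨j, h1, b'', h3, he⟩ := h.1 _ hm
      obtain ⟨rfl, rfl⟩ := hu _ _ _ _ he
      rw [Finset.mem_sdiff] at h1
      refine ⟨h1.2, h1.1, ?_⟩
      by_cases hcc : col i' = c
      · rw [hcc, Function.update_self, Finset.mem_erase] at h3
        exact ⟨hcc ▸ h3.2, fun _ => h3.1⟩
      · rw [Function.update_of_ne hcc] at h3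
        exact ⟨h3, fun h => absurd h hcc⟩
    refine ⟨?_, ?_⟩
    · intro v hv
      rcases List.mem_cons.1 hv with rfl | hv
      · exact ⟨i, (hcolq i hi).1, b, by rw [(hcolq i hi).2]; exact hb, rfl⟩
      · obtain ⟨i', h1, b', h3, rfl⟩ := h.1 v hv
        exact ⟨i', (key _ _ hv).2.1, b', (key _ _ hv).2.2.1, rfl⟩
    · intro j1 b1 j2 b2 e1 e2
      rcases List.mem_cons.1 e1 with h1 | h1 <;> rcases List.mem_cons.1 e2 with h2 | h2
      · obtain ⟨rfl, rfl⟩ := hu _ _ _ _ h1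
        obtain ⟨rfl, rfl⟩ := hu _ _ _ _ h2
        simp
      · obtain ⟨rfl, rfl⟩ := hu _ _ _ _ h1
        have := key _ _ h2
        refine ⟨?_, ?_⟩
        · rintro rfl; exact absurd hi this.1
        · rintro h3 rfl; exact absurd rfl (this.2.2.2 (h3.symm.trans (hcolq _ hi).2))
      · obtain ⟨rfl, rfl⟩ := hu _ _ _ _ h2
        have := key _ _ h1
        refine ⟨?_, ?_⟩
        · rintro rfl; exact absurd hi this.1
        · rintro h3 rfl; exact absurd rfl (this.2.2.2 (h3.trans (hcolq _ hi).2))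
      · exact h.2 _ _ _ _ h1 h2

theorem chess {u : I → G → V} (hu : ∀ i b i' b', u i b = u i' b' → i = i' ∧ b = b') (col : I → C) (N : ℕ) :
    ∀ (T : Finset I) (Sb : C → Finset G) (s : C → ℕ) (m : ℕ), ∑ c, (Sb c).card ≤ N →
    (∀ c, 2 * (Sb c).card ≤ (T.filter (fun i => col i = c)).card + 1 + s c) →
    m + 1 ≤ ∑ c, ((Sb c).card - s c) → Fill K (Ck u col T Sb) m := by
  induction N with
  | zero =>
    intro T Sb s m h1 h2 h3
    have : ∑ c, ((Sb c).card - s c) ≤ ∑ c, (Sb c).card := Finset.sum_le_sum (fun c _ => Nat.sub_le _ _)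
    omega
  | succ N ih =>
    intro T Sb s m h1 h2 h3
    obtain ⟨c, hc⟩ : ∃ c, 1 ≤ (Sb c).card - s c := by
      by_contra hcon
      push Not at hcon
      have : ∑ c, ((Sb c).card - s c) = 0 := Finset.sum_eq_zero (fun c _ => by have := hcon c; omega)
      omega
    obtain ⟨b, hb⟩ : (Sb c).Nonempty := Finset.card_pos.1 (by omega)
    have hc2 := h2 c
    have hne : (T.filter (fun i => col i = c)).Nonempty := Finset.card_pos.1 (by omega)
    have hcov : ∀ l, (∃ i ∈ T.filter (fun i => col i = c), Ck u col T Sb (u i b :: l)) ↔ Ck u col T Sb l := by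
      intro l
      constructor
      · rintro ⟨i, -, h⟩
        exact Ck_sub (List.subset_cons_self _ _) h
      · intro h
        exact Ck_cover hu h c b hb (by omega)
    -- extend star to all indices harmlessly
    refine (fill_union (T.filter (fun i => col i = c)) hne
      (fun i l => i ∈ T.filter (fun i => col i = c) → Ck u col T Sb (u i b :: l)) m ?_ ?_ ?_).congr ?_
    · intro i l l' hl h hi
      exact Ck_sub (List.cons_subset_cons _ hl.subset) (h hi)
    · intro i hi
      have hi := Finset.mem_filter.1 hi
      refine ⟨?_, ?_⟩
      · intro v hv
        rw [List.mem_singleton] at hv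
        exact ⟨i, hi.1, b, by rw [hi.2]; exact hb, hv⟩
      · intro j1 b1 j2 b2 e1 e2
        rw [List.mem_singleton] at e1 e2
        obtain ⟨rfl, rfl⟩ := hu _ _ _ _ e1
        obtain ⟨rfl, rfl⟩ := hu _ _ _ _ e2
        simp
    · intro Tq hTq hTn m' hm'
      have hTq' : ∀ l, (∀ i ∈ Tq, Ck u col T Sb (u i b :: l)) ↔
          (∀ i ∈ Tq, i ∈ T.filter (fun i => col i = c) → Ck u col T Sb (u i b :: l)) := by
        intro l
        exact forall₂_congr fun i hi => ⟨fun h _ => h, fun h => h (hTq hi)⟩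
      refine Fill.congr ?_ hTq'
      have hTc : 1 ≤ Tq.card := Finset.card_pos.2 hTn
      rcases hTc.eq_or_lt with h1c | h2c
      · obtain ⟨i, rfl⟩ := Finset.card_eq_one.1 h1c.symm
        refine fill_cone (u i b) ?_ m'
        intro l hl j hj
        rw [Finset.mem_singleton] at hj
        subst hj
        refine Ck_sub ?_ (hl j (by simp))
        intro x hx
        simpa using hx
      · refine Fill.congr ?_ (fun l => (Ck_inter hu c b hb Tq hTq h2c).symm)
        have hle : Tq.card ≤ (T.filter (fun i => col i = c)).card := Finset.card_le_card hTq
        have hpos : 1 ≤ (Sb c).card := by omega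
        refine ih _ _ (Function.update s c (s c + Tq.card - 2)) m' ?_ ?_ ?_
        · have : ∑ c', (Function.update Sb c ((Sb c).erase b) c').card < ∑ c, (Sb c).card := by
            refine Finset.sum_lt_sum ?_ ⟨c, Finset.mem_univ _, ?_⟩
            · intro c' _
              by_cases h : c' = c
              · subst h; rw [Function.update_self]; exact Finset.card_le_card (Finset.erase_subset _ _)
              · rw [Function.update_of_ne h]
            · rw [Function.update_self, Finset.card_erase_of_mem hb]; omega
          omega
        · intro c'
          by_cases h : c' = c
          · subst h
            have : ((T \ Tq).filter (fun i => col i = c')) = (T.filter (fun i => col i = c')) \ Tq := by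
              ext x; simp; tauto
            rw [Function.update_self, Function.update_self, Finset.card_erase_of_mem hb, this,
              Finset.card_sdiff_of_subset hTq]
            omega
          · have : ((T \ Tq).filter (fun i => col i = c')) = T.filter (fun i => col i = c') := by
              ext x
              simp only [Finset.mem_filter, Finset.mem_sdiff]
              constructor
              · tauto
              · rintro ⟨h3, h4⟩
                refine ⟨⟨h3, fun h5 => h ?_⟩, h4⟩
                rw [← h4, (Finset.mem_filter.1 (hTq h5)).2]
            rw [Function.update_of_ne h, Function.update_of_ne h, this]
            exact h2 c'
        · have : ∑ c', ((Sb c').card - s c') ≤ ∑ c', (((Function.update Sb c ((Sb c).erase b) c').card -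
              Function.update s c (s c + Tq.card - 2) c') + if c' = c then Tq.card - 1 else 0) := by
            refine Finset.sum_le_sum ?_
            intro c' _
            by_cases h : c' = c
            · subst h
              rw [Function.update_self, Function.update_self, if_pos rfl, Finset.card_erase_of_mem hb]
              omega
            · rw [Function.update_of_ne h, Function.update_of_ne h, if_neg h]; omega
          rw [Finset.sum_add_distrib, Finset.sum_ite_eq' Finset.univ c, if_pos (Finset.mem_univ _)] at this
          omega
    · intro l
      rw [← hcov l]
      exact exists_congr fun i => ⟨fun h => ⟨h.1, h.2 h.1⟩, fun h => ⟨h.1, fun _ => h.2⟩⟩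

end chess
end DCT


namespace DCT
open Finsupp

theorem sum_pow_comm {R : Type*} [Ring R] {p : ℕ} (hp : p.Prime) (hpR : (p : R) = 0) {ι : Type*} (s : Finset ι)
    (f : ι → R) (hc : ∀ i j, Commute (f i) (f j)) : (∑ i ∈ s, f i) ^ p = ∑ i ∈ s, f i ^ p := by
  classical
  induction s using Finset.induction_on with
  | empty => simp [hp.ne_zero]
  | insert a s ha ih =>
    rw [Finset.sum_insert ha, Finset.sum_insert ha]
    obtain ⟨r, hr⟩ := Commute.exists_add_pow_prime_eq hp
      (show Commute (f a) (∑ i ∈ s, f i) from Commute.sum_right _ _ _ (fun i _ => hc a i))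
    rw [hr, ih, hpR]; simp

theorem sub_pow_comm {R : Type*} [Ring R] {p : ℕ} (hp : p.Prime) (hpR : (p : R) = 0)
    (x y : R) (hc : Commute x y) : (x - y) ^ p = x ^ p - y ^ p := by
  obtain ⟨r, hr⟩ := Commute.exists_add_pow_prime_eq hp (show Commute (x - y) y from hc.sub_left (Commute.refl y))
  rw [hpR] at hr
  simp at hr
  rw [hr]; simp

structure IsAct {G B : Type*} [AddCommGroup G] (a : G → B → B) : Prop where
  zero : ∀ x, a 0 x = x
  add : ∀ g h x, a (g + h) x = a g (a h x)

section weyl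
variable {K : Type*} [Field K] {B : Type*} {G : Type*} [AddCommGroup G]

noncomputable def Tg (K : Type*) [Field K] (a : G → B → B) (g : G) : Module.End K (B →₀ K) :=
  Finsupp.lmapDomain K K (a g)

@[simp] theorem Tg_single (a : G → B → B) (g : G) (b : B) (x : K) :
    Tg K a g (single b x) = single (a g b) x := by simp [Tg, Finsupp.mapDomain_single]

noncomputable def Dg (w : B → K) : Module.End K (B →₀ K) :=
  Finsupp.linearCombination K (fun b => single b (w b))

@[simp] theorem Dg_single (w : B → K) (b : B) (x : K) : Dg w (single b x) = single b (x * w b) := by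
  simp [Dg]

theorem Dg_mul (w w' : B → K) : Dg w * Dg w' = Dg (fun b => w b * w' b) := by
  refine Finsupp.lhom_ext fun b x => ?_
  simp only [Module.End.mul_apply, Dg_single]; congr 1; ring

theorem Dg_comm (w w' : B → K) : Commute (Dg w) (Dg w') := by
  rw [commute_iff_eq, Dg_mul, Dg_mul]; congr 1; ext b; ring

theorem Dg_T (a : G → B → B) (g : G) (w : B → K) (hw : ∀ g b, w (a g b) = w b) :
    Commute (Dg w) (Tg K a g) := by
  refine Finsupp.lhom_ext fun b x => ?_
  simp only [Module.End.mul_apply, Dg_single, Tg_single, hw]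

theorem cs_right {M : Type*} [AddCommGroup M] [Module K M] {x y : Module.End K M} (h : Commute x y) :
    Commute x (y - 1) := by
  rw [commute_iff_eq, mul_sub, sub_mul, h.eq, mul_one, one_mul]

theorem cs_left {M : Type*} [AddCommGroup M] [Module K M] {x y : Module.End K M} (h : Commute x y) :
    Commute (x - 1) y := (cs_right h.symm).symm

variable {a : G → B → B} (ha : IsAct a)
include ha

theorem Tg_add (g h : G) : Tg K a (g + h) = Tg K a g * Tg K a h := by
  refine Finsupp.lhom_ext fun b x => ?_
  simp [Module.End.mul_apply, ha.add]

theorem Tg_zero : Tg K a 0 = 1 := by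
  refine Finsupp.lhom_ext fun b x => ?_
  simp [ha.zero]

theorem Tg_comm (g h : G) : Commute (Tg K a g) (Tg K a h) := by
  rw [commute_iff_eq, ← Tg_add ha, ← Tg_add ha, add_comm]

theorem Tg_pow (g : G) (n : ℕ) : Tg K a g ^ n = Tg K a (n • g) := by
  induction n with
  | zero => simp [Tg_zero ha]
  | succ n ih => rw [pow_succ, ih, succ_nsmul, Tg_add ha]

end weyl

section tau
variable {p : ℕ} [Fact p.Prime] {K : Type*} [Field K] [Algebra (ZMod p) K] {ι : Type*} [Fintype ι]
  {B : Type*}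

noncomputable def tau (bs : ι → K) (a : K → B → B) : Module.End K (B →₀ K) :=
  ∑ i, bs i • (Tg K a (bs i) - 1)

theorem charK (p : ℕ) {K : Type*} [Field K] [Algebra (ZMod p) K] : (p : K) = 0 := by
  have := map_natCast (algebraMap (ZMod p) K) p
  simpa using this.symm

theorem charEnd (p : ℕ) (K : Type*) [Field K] [Algebra (ZMod p) K] (M : Type*) [AddCommGroup M] [Module K M] :
    (p : Module.End K M) = 0 := by
  have := map_natCast (algebraMap K (Module.End K M)) p
  rw [charK p (K := K), map_zero] at this
  exact this.symm

theorem Tsub_pow {a : K → B → B} (ha : IsAct a) (g : K) : (Tg K a g - 1) ^ p = 0 := by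
  rw [sub_pow_comm (Fact.out : p.Prime) (charEnd p K _) _ _ (Commute.one_right _), Tg_pow ha, one_pow]
  have : p • g = 0 := by rw [nsmul_eq_mul, charK p, zero_mul]
  rw [this, Tg_zero ha, sub_self]

theorem tau_pow {a : K → B → B} (ha : IsAct a) (bs : ι → K) : tau bs a ^ p = 0 := by
  rw [tau, sum_pow_comm (Fact.out : p.Prime) (charEnd p K _)]
  · refine Finset.sum_eq_zero fun i _ => ?_
    rw [smul_pow, Tsub_pow ha, smul_zero]
  · intro i j
    refine Commute.smul_left (Commute.smul_right ?_ _) _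
    exact cs_right (cs_left (Tg_comm ha _ _))

omit [Algebra (ZMod p) K] [Fact p.Prime] in
theorem comm_tau {a : K → B → B} (bs : ι → K) (f : Module.End K (B →₀ K))
    (hf : ∀ g, Commute f (Tg K a g)) : Commute f (tau bs a) := by
  refine Commute.sum_right _ _ _ fun i _ => Commute.smul_right (cs_right (hf _)) _

/-- orbit data -/
theorem orbit_data {a : K → B → B} (ha : IsAct a) :
    ∃ (lam : B → (K →ₗ[ZMod p] ZMod p)) (xi : B → ZMod p),
      (∀ g b, lam (a g b) = lam b) ∧ (∀ g b, xi (a g b) = xi b + lam b g) ∧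
      (∀ b, (∃ g, a g b ≠ b) → lam b ≠ 0) ∧ (∀ b, (∀ g, a g b = b) → lam b = 0) := by
  classical
  let st : Setoid B := ⟨fun x y => ∃ g, a g x = y, ⟨fun x => ⟨0, ha.zero x⟩,
    fun {x y} h => by
      obtain ⟨g, rfl⟩ := h
      exact ⟨-g, by rw [← ha.add, neg_add_cancel, ha.zero]⟩,
    fun {x y z} h h' => by
      obtain ⟨g, rfl⟩ := h
      obtain ⟨g', rfl⟩ := h'
      exact ⟨g' + g, ha.add _ _ _⟩⟩⟩
  let rep : B → B := fun b => (Quotient.mk st b).out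
  have hrep : ∀ b, ∃ g, a g (rep b) = b := fun b => Quotient.exact (Quotient.out_eq (Quotient.mk st b))
  choose h hh using hrep
  have hrepa : ∀ g b, rep (a g b) = rep b := by
    intro g b
    have : Quotient.mk st (a g b) = Quotient.mk st b := Quotient.sound (Setoid.symm ⟨g, rfl⟩)
    simp only [rep, this]
  let St : B → AddSubgroup K := fun β =>
    { carrier := {g | a g β = β}
      zero_mem' := ha.zero β
      add_mem' := fun {x y} hx hy => by
        change a (x + y) β = β
        rw [ha.add, show a y β = β from hy, show a x β = β from hx]
      neg_mem' := fun {x} hx => by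
        change a (-x) β = β
        conv_lhs => rw [← show a x β = β from hx]
        rw [← ha.add, neg_add_cancel, ha.zero] }
  have hL : ∀ β, ∃ f : K →ₗ[ZMod p] ZMod p, (∀ g, a g β = β → f g = 0) ∧ ((∃ g, a g β ≠ β) → f ≠ 0) := by
    intro β
    by_cases hm : ∃ g, a g β ≠ β
    · obtain ⟨g, hg⟩ := hm
      have : AddSubgroup.toZModSubmodule p (St β) < ⊤ := by
        rw [lt_top_iff_ne_top]
        intro htop
        have : g ∈ AddSubgroup.toZModSubmodule p (St β) := by rw [htop]; trivial
        exact hg this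
      obtain ⟨f, hf, hf'⟩ := Submodule.exists_le_ker_of_lt_top _ this
      exact ⟨f, fun x hx => hf' (show x ∈ AddSubgroup.toZModSubmodule p (St β) from hx), fun _ => hf⟩
    · exact ⟨0, fun _ _ => rfl, fun h => absurd h hm⟩
  choose L hL1 hL2 using hL
  have hmove : ∀ b g, a g b = b ↔ a g (rep b) = rep b := by
    intro b g
    constructor
    · intro hg
      have h1 : a (-(h b)) b = rep b := by
        have h2 : a (-(h b)) (a (h b) (rep b)) = rep b := by rw [← ha.add, neg_add_cancel, ha.zero]
        rwa [hh b] at h2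
      rw [← h1, ← ha.add, add_comm, ha.add, hg]
    · intro hg
      have h2 : a g (a (h b) (rep b)) = a (h b) (rep b) := by rw [← ha.add, add_comm, ha.add, hg]
      rwa [hh b] at h2
  refine ⟨fun b => L (rep b), fun b => L (rep b) (h b), ?_, ?_, ?_, ?_⟩
  · intro g b; simp only [hrepa]
  · intro g b
    simp only [hrepa]
    have : a (h (a g b) - (h b + g)) (rep b) = rep b := by
      have e1 : a (h (a g b)) (rep b) = a g b := by
        have := hh (a g b); rwa [hrepa] at this
      have e2 : a (h b + g) (rep b) = a g b := by rw [add_comm, ha.add, hh]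
      have : a (-(h b + g)) (a (h b + g) (rep b)) = rep b := by rw [← ha.add, neg_add_cancel, ha.zero]
      rw [sub_eq_add_neg, add_comm, ha.add, e1, ← e2, this]
    have := hL1 _ _ this
    rw [map_sub, map_add, sub_eq_zero] at this
    exact this
  · rintro b ⟨g, hg⟩
    exact hL2 _ ⟨g, fun h => hg ((hmove b g).2 h)⟩
  · intro b hb
    ext g
    exact hL1 _ _ ((hmove b g).1 (hb g))

noncomputable def movedInd (K : Type*) [Field K] (a : K → B → B) : B → K :=
  open Classical in fun b => if ∃ g, a g b ≠ b then 1 else 0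

omit [Fact p.Prime] [Algebra (ZMod p) K] in
theorem movedInd_inv {a : K → B → B} (ha : IsAct a) (g : K) (b : B) :
    movedInd K a (a g b) = movedInd K a b := by
  have : (∃ h, a h (a g b) ≠ a g b) ↔ (∃ h, a h b ≠ b) := by
    refine exists_congr fun h => not_congr ?_
    rw [← ha.add, add_comm, ha.add]
    constructor
    · intro he
      have := congrArg (a (-g)) he
      rwa [← ha.add, ← ha.add, neg_add_cancel, zero_add, ← ha.add, neg_add_cancel, ha.zero] at this
    · intro he; rw [he]
  unfold movedInd
  by_cases h : ∃ h, a h b ≠ b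
  · rw [if_pos h, if_pos (this.2 h)]
  · rw [if_neg h, if_neg (fun h' => h (this.1 h'))]

theorem exists_Y {a : K → B → B} (ha : IsAct a) (bs : ι → K) (hb : LinearIndependent (ZMod p) bs)
    (hspan : ⊤ ≤ Submodule.span (ZMod p) (Set.range bs)) :
    ∃ Y : Module.End K (B →₀ K), Y * tau bs a - tau bs a * Y = Dg (movedInd K a) ∧
      (∀ w : B → K, (∀ g b, w (a g b) = w b) → Commute Y (Dg w)) ∧
      Y * Dg (movedInd K a) = Y := by
  classical
  obtain ⟨lam, xi, h1, h2, h3, h4⟩ := orbit_data (p := p) ha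
  let kap : B → K := fun b => ∑ i, lam b (bs i) • bs i
  have hkap : ∀ b, (∃ g, a g b ≠ b) → kap b ≠ 0 := by
    intro b hbm hk
    refine h3 b hbm ?_
    have h0 : ∀ i, lam b (bs i) = 0 := Fintype.linearIndependent_iff.1 hb _ hk
    refine LinearMap.ext_on_range (v := bs) (top_le_iff.1 hspan) (by simpa using h0)
  have hkinv : ∀ g b, kap (a g b) = kap b := fun g b => by simp only [kap, h1]
  let X : Module.End K (B →₀ K) := Dg (fun b => (kap b)⁻¹ * algebraMap (ZMod p) K (xi b))
  let mu : ι → B → K := fun i b => bs i * ((kap b)⁻¹ * algebraMap (ZMod p) K (lam b (bs i)))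
  have hmu : ∀ i g b, mu i (a g b) = mu i b := fun i g b => by simp only [mu, hkinv, h1]
  let nu : Module.End K (B →₀ K) := ∑ i, Dg (mu i) * (Tg K a (bs i) - 1)
  let Pi : Module.End K (B →₀ K) := Dg (movedInd K a)
  have hPiinv := movedInd_inv (K := K) ha
  have kap0 : ∀ b, movedInd K a b = 0 → kap b = 0 := by
    intro b hb0
    have : ∀ g, a g b = b := by
      by_contra hcon
      push Not at hcon
      simp [movedInd, hcon] at hb0
    simp [kap, h4 b this]
  have kap1 : ∀ b, (kap b)⁻¹ * kap b = movedInd K a b := by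
    intro b
    by_cases hm : ∃ g, a g b ≠ b
    · rw [inv_mul_cancel₀ (hkap b hm)]; simp only [movedInd, if_pos hm]
    · have : movedInd K a b = 0 := by simp only [movedInd, if_neg hm]
      rw [kap0 b this, this]; simp
  have kapPi : ∀ b, (kap b)⁻¹ * movedInd K a b = (kap b)⁻¹ := by
    intro b
    by_cases hm : ∃ g, a g b ≠ b
    · simp only [movedInd, if_pos hm, mul_one]
    · have : movedInd K a b = 0 := by simp only [movedInd, if_neg hm]
      rw [kap0 b this, this]; simp
  have hX : X * tau bs a - tau bs a * X = Pi + nu := by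
    refine Finsupp.lhom_ext fun b x => ?_
    have e1 : Pi (single b x) = ∑ i, single b (x * mu i b) := by
      have : ∑ i, single b (x * mu i b) = single b (∑ i, x * mu i b) := by
        rw [← Finsupp.singleAddHom_apply, map_sum]; rfl
      rw [this]
      simp only [Pi, Dg_single]
      congr 1
      rw [← Finset.mul_sum, ← kap1, Finset.mul_sum]
      congr 1
      refine Finset.sum_congr rfl fun i _ => ?_
      simp only [mu, Algebra.smul_def]; ring
    simp only [LinearMap.sub_apply, LinearMap.add_apply, Module.End.mul_apply, e1, tau, nu,
      LinearMap.sum_apply, LinearMap.smul_apply, map_sum, map_smul, X, Module.End.one_apply,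
      map_sub, Tg_single, Dg_single]
    rw [← Finset.sum_sub_distrib, ← Finset.sum_add_distrib]
    refine Finset.sum_congr rfl fun i _ => ?_
    rw [h2, hkinv, hmu]
    simp only [smul_sub, Finsupp.smul_single, smul_eq_mul, map_add, mu]
    rw [show ∀ u v w z : B →₀ K, u - v - (w - z) = (u - w) + (z - v) from fun u v w z => by abel,
      ← Finsupp.single_sub]
    rw [show ∀ u v : B →₀ K, u + (v - u) = v + 0 from fun u v => by abel]
    congr 1
    · congr 1; ring
    · exact sub_eq_zero.2 (by congr 1)
  have hcommN : ∀ w : B → K, (∀ g b, w (a g b) = w b) → Commute (Dg w) nu := by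
    intro w hw
    refine Commute.sum_right _ _ _ fun i _ => ?_
    exact (Dg_comm _ _).mul_right (cs_right (Dg_T a _ w hw))
  have hcommT : ∀ g, Commute nu (Tg K a g) := by
    intro g
    refine Commute.sum_left _ _ _ fun i _ => ?_
    exact (Dg_T a g _ (hmu i)).mul_left (cs_left (Tg_comm ha _ _))
  have hnil : ∃ n, nu ^ n = 0 := by
    refine ⟨p, ?_⟩
    simp only [nu]
    rw [sum_pow_comm (Fact.out : p.Prime) (charEnd p K _)]
    · refine Finset.sum_eq_zero fun i _ => ?_
      rw [(cs_right (Dg_T a (bs i) _ (hmu i))).mul_pow, Tsub_pow ha, mul_zero]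
    · intro i j
      have c1 : ∀ i j, Commute (Dg (mu i)) (Tg K a (bs j) - 1) := fun i j =>
        cs_right (Dg_T a (bs j) _ (hmu i))
      have c2 : Commute (Tg K a (bs i) - 1) (Tg K a (bs j) - 1) :=
        cs_right (cs_left (Tg_comm ha _ _))
      exact ((Dg_comm _ _).mul_right (c1 i j)).mul_left ((c1 j i).symm.mul_right c2)
  obtain ⟨ρ, hρ⟩ := IsNilpotent.isUnit_one_add (R := Module.End K (B →₀ K)) (r := nu)
    (by obtain ⟨n, hn⟩ := hnil; exact ⟨n, hn⟩)
  have hPinu : Pi * nu = nu := by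
    simp only [nu, Pi, Finset.mul_sum]
    refine Finset.sum_congr rfl fun i _ => ?_
    rw [← mul_assoc, Dg_mul]
    congr 2
    ext b
    simp only [mu]
    rw [← kapPi b]
    have : movedInd K a b * movedInd K a b = movedInd K a b := by
      simp only [movedInd]; split_ifs <;> simp
    linear_combination (bs i * (kap b)⁻¹ * (algebraMap (ZMod p) K) ((lam b) (bs i))) * this
  have hX2 : X * tau bs a - tau bs a * X = Pi * ρ := by
    rw [hX, hρ, mul_add, mul_one, hPinu]
  have hρt : Commute (ρ : Module.End K (B →₀ K)) (tau bs a) := by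
    rw [hρ]
    exact (Commute.one_left _).add_left (comm_tau bs _ hcommT)
  have hρt' : Commute (↑ρ⁻¹ : Module.End K (B →₀ K)) (tau bs a) := hρt.units_inv_left
  have hρD : ∀ w : B → K, (∀ g b, w (a g b) = w b) → Commute (↑ρ⁻¹ : Module.End K (B →₀ K)) (Dg w) := by
    intro w hw
    refine Commute.units_inv_left ?_
    rw [hρ]
    exact (Commute.one_left _).add_left (hcommN w hw).symm
  refine ⟨X * ↑ρ⁻¹, ?_, ?_, ?_⟩
  · rw [mul_assoc, hρt'.eq, ← mul_assoc, ← mul_assoc,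
      show ∀ x y z : Module.End K (B →₀ K), x * z - y * z = (x - y) * z from fun x y z => (sub_mul x y z).symm, hX2, mul_assoc, Units.mul_inv, mul_one]
  · intro w hw
    exact (Dg_comm _ _).mul_left (hρD w hw)
  · rw [mul_assoc, (hρD _ (movedInd_inv ha)).eq, ← mul_assoc]
    congr 1
    simp only [X]
    rw [Dg_mul]
    congr 1
    ext b
    have := kapPi b
    linear_combination (algebraMap (ZMod p) K (xi b)) * this

end tau

section average
variable {p : ℕ} [Fact p.Prime] {K : Type*} [Field K] [Algebra (ZMod p) K]
  {M N : Type*} [AddCommGroup M] [Module K M] [AddCommGroup N] [Module K N]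

noncomputable def adL (t2 : Module.End K N) : Module.End K (M →ₗ[K] N) where
  toFun ψ := t2 ∘ₗ ψ
  map_add' x y := by simp [LinearMap.comp_add]
  map_smul' c x := by simp [LinearMap.comp_smul]

noncomputable def adR (t1 : Module.End K M) : Module.End K (M →ₗ[K] N) where
  toFun ψ := ψ ∘ₗ t1
  map_add' x y := by simp [LinearMap.add_comp]
  map_smul' c x := by simp [LinearMap.smul_comp]

noncomputable def ad (t1 : Module.End K M) (t2 : Module.End K N) : Module.End K (M →ₗ[K] N) :=
  adL t2 - adR t1

theorem ad_apply (t1 : Module.End K M) (t2 : Module.End K N) (ψ : M →ₗ[K] N) :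
    ad t1 t2 ψ = t2 ∘ₗ ψ - ψ ∘ₗ t1 := rfl

theorem adL_pow (t2 : Module.End K N) (n : ℕ) (ψ : M →ₗ[K] N) : (adL t2 ^ n) ψ = (t2 ^ n) ∘ₗ ψ := by
  induction n with
  | zero => ext; simp
  | succ n ih => rw [pow_succ', Module.End.mul_apply, ih, pow_succ']; rfl

theorem adR_pow (t1 : Module.End K M) (n : ℕ) (ψ : M →ₗ[K] N) : (adR t1 ^ n) ψ = ψ ∘ₗ (t1 ^ n) := by
  induction n with
  | zero => ext; simp
  | succ n ih => rw [pow_succ', Module.End.mul_apply, ih, pow_succ]; rfl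

theorem ad_pow {t1 : Module.End K M} {t2 : Module.End K N} (h1 : t1 ^ p = 0) (h2 : t2 ^ p = 0)
    (ψ : M →ₗ[K] N) : (ad t1 t2 ^ p) ψ = 0 := by
  rw [ad, sub_pow_comm (Fact.out : p.Prime) (charEnd p K _) _ _ (by
    refine LinearMap.ext fun ψ => ?_
    rfl), LinearMap.sub_apply, adL_pow, adR_pow, h1, h2]
  simp

noncomputable def Av (p : ℕ) (t1 : Module.End K M) (t2 : Module.End K N) (Y : Module.End K M) (ψ : M →ₗ[K] N) :
    M →ₗ[K] N := ∑ j ∈ Finset.range p, ((Nat.factorial j : K)⁻¹) • ((ad t1 t2 ^ j) ψ ∘ₗ (Y ^ j))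

theorem Av_comm {t1 : Module.End K M} {t2 : Module.End K N} (h1 : t1 ^ p = 0) (h2 : t2 ^ p = 0)
    {Y Pi : Module.End K M} (hY : Y * t1 - t1 * Y = Pi) (hYP : Y * Pi = Y) (hPY : Pi * Y = Y)
    (ψ : M →ₗ[K] N) (hψ : (ad t1 t2 ψ) ∘ₗ Pi = ad t1 t2 ψ) :
    t2 ∘ₗ Av p t1 t2 Y ψ = Av p t1 t2 Y ψ ∘ₗ t1 := by
  have hp : p.Prime := Fact.out
  have hcomm : ∀ j : ℕ, t1 * Y ^ (j+1) - Y ^ (j+1) * t1 = -((j + 1 : ℕ) : K) • (Y ^ j * Pi) := by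
    intro j
    induction j with
    | zero => simp [← hY]
    | succ j ih =>
      have : t1 * Y ^ (j+1+1) - Y ^ (j+1+1) * t1 =
          (t1 * Y ^ (j+1) - Y ^ (j+1) * t1) * Y - Y ^ (j+1) * (Y * t1 - t1 * Y) := by
        rw [pow_succ Y (j+1)]; noncomm_ring
      rw [this, ih, hY, smul_mul_assoc, mul_assoc, hPY, ← pow_succ]
      have e : Y ^ (j+1) * Pi = Y ^ (j+1) := by rw [pow_succ, mul_assoc, hYP]
      rw [e]
      push_cast
      module
  let u : ℕ → (M →ₗ[K] N) := fun j => ((Nat.factorial j : K)⁻¹) • ((ad t1 t2 ^ (j+1)) ψ ∘ₗ (Y ^ j))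
  have hu : ∀ j, u j ∘ₗ Pi = u j := by
    intro j
    simp only [u, LinearMap.smul_comp]
    congr 1
    cases j with
    | zero =>
      rw [zero_add, pow_one, pow_zero, Module.End.one_eq_id, LinearMap.comp_id]; exact hψ
    | succ j =>
      rw [LinearMap.comp_assoc]
      congr 1
      change Y ^ (j+1) * Pi = Y ^ (j+1)
      rw [pow_succ, mul_assoc, hYP]
  have key : ∀ n, n < p → ∑ j ∈ Finset.range (n+1), ad t1 t2 (((Nat.factorial j : K)⁻¹) •
      ((ad t1 t2 ^ j) ψ ∘ₗ (Y ^ j))) = u n := by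
    intro n
    induction n with
    | zero =>
      intro _
      rw [zero_add, Finset.sum_range_one]
      simp only [u, map_smul]
      congr 1
    | succ n ih =>
      intro hn
      rw [Finset.sum_range_succ, ih (by omega)]
      have hfac : ((Nat.factorial (n+1) : K))⁻¹ * ((n + 1 : ℕ) : K) = (Nat.factorial n : K)⁻¹ := by
        have hne : ((n + 1 : ℕ) : K) ≠ 0 := by
          intro h0
          have h3 : algebraMap (ZMod p) K ((n+1 : ℕ) : ZMod p) = 0 := by rw [map_natCast]; exact h0
          rw [map_eq_zero, ZMod.natCast_eq_zero_iff] at h3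
          exact absurd (Nat.le_of_dvd (by omega) h3) (by omega)
        rw [Nat.factorial_succ, Nat.cast_mul, mul_inv_rev]
        field_simp
      have e1 : ad t1 t2 ((ad t1 t2 ^ (n+1)) ψ ∘ₗ (Y ^ (n+1))) =
          (ad t1 t2 ^ (n+1+1)) ψ ∘ₗ (Y ^ (n+1)) + (ad t1 t2 ^ (n+1)) ψ ∘ₗ (t1 * Y ^ (n+1) - Y ^ (n+1) * t1) := by
        rw [pow_succ' (ad t1 t2) (n+1), Module.End.mul_apply, ad_apply, ad_apply]
        ext x
        simp [Module.End.mul_apply]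
      rw [map_smul, e1, hcomm, smul_add]
      have e2 : ((Nat.factorial (n+1) : K))⁻¹ • ((ad t1 t2 ^ (n+1)) ψ ∘ₗ (-((n + 1 : ℕ) : K) • (Y ^ n * Pi)))
          = - u n := by
        rw [LinearMap.comp_smul, smul_smul, mul_neg, hfac, neg_smul]
        congr 1
        conv_rhs => rw [← hu n]
        rfl
      rw [e2]
      simp only [u]
      abel
  have hfin := key (p - 1) (by have := hp.pos; omega)
  rw [Nat.sub_add_cancel hp.pos] at hfin
  have h0 : ad t1 t2 (Av p t1 t2 Y ψ) = 0 := by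
    rw [Av, map_sum, hfin]
    simp only [u]
    rw [Nat.sub_add_cancel hp.pos, ad_pow h1 h2]
    simp
  rw [ad_apply, sub_eq_zero] at h0
  exact h0

omit [Fact p.Prime] [Algebra (ZMod p) K] in
theorem ad_comp_left {N' : Type*} [AddCommGroup N'] [Module K N'] {t1 : Module.End K M} {t2 : Module.End K N}
    {t3 : Module.End K N'} (L : N →ₗ[K] N') (hL : L ∘ₗ t2 = t3 ∘ₗ L) (j : ℕ) (ψ : M →ₗ[K] N) :
    (ad t1 t3 ^ j) (L ∘ₗ ψ) = L ∘ₗ ((ad t1 t2 ^ j) ψ) := by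
  induction j with
  | zero => rfl
  | succ j ih =>
    rw [pow_succ', pow_succ', Module.End.mul_apply, Module.End.mul_apply, ih, ad_apply, ad_apply,
      LinearMap.comp_sub, ← LinearMap.comp_assoc, ← LinearMap.comp_assoc, ← LinearMap.comp_assoc, hL]

omit [Fact p.Prime] [Algebra (ZMod p) K] in
theorem ad_comp_right {t1 : Module.End K M} {t2 : Module.End K N}
    (P : Module.End K M) (hP : P * t1 = t1 * P) (j : ℕ) (ψ : M →ₗ[K] N) :
    (ad t1 t2 ^ j) (ψ ∘ₗ P) = ((ad t1 t2 ^ j) ψ) ∘ₗ P := by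
  induction j with
  | zero => rfl
  | succ j ih =>
    rw [pow_succ', Module.End.mul_apply, Module.End.mul_apply, ih, ad_apply, ad_apply]
    ext x
    have := LinearMap.congr_fun hP x
    simp only [Module.End.mul_apply] at this
    simp [this]

omit [Fact p.Prime] [Algebra (ZMod p) K] in
theorem Av_comp_left {N' : Type*} [AddCommGroup N'] [Module K N'] {t1 : Module.End K M} {t2 : Module.End K N}
    {t3 : Module.End K N'} {Y : Module.End K M} (L : N →ₗ[K] N') (hL : L ∘ₗ t2 = t3 ∘ₗ L) (ψ : M →ₗ[K] N) :
    Av p t1 t3 Y (L ∘ₗ ψ) = L ∘ₗ Av p t1 t2 Y ψ := by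
  ext x
  simp only [Av, ad_comp_left L hL, LinearMap.sum_apply, LinearMap.comp_apply, LinearMap.smul_apply, map_sum,
    map_smul]

omit [Fact p.Prime] [Algebra (ZMod p) K] in
theorem Av_comp_right {t1 : Module.End K M} {t2 : Module.End K N} {Y : Module.End K M}
    (P : Module.End K M) (hP : P * t1 = t1 * P) (hPY : Commute P Y) (ψ : M →ₗ[K] N) :
    Av p t1 t2 Y (ψ ∘ₗ P) = Av p t1 t2 Y ψ ∘ₗ P := by
  ext x
  simp only [Av, ad_comp_right P hP, LinearMap.sum_apply, LinearMap.comp_apply, LinearMap.smul_apply]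
  refine Finset.sum_congr rfl fun j _ => ?_
  have := LinearMap.congr_fun (hPY.pow_right j).eq x
  simp only [Module.End.mul_apply] at this
  rw [this]

omit [Algebra (ZMod p) K] in
theorem Av_apply_zero {t1 : Module.End K M} {t2 : Module.End K N} {Y : Module.End K M} (ψ : M →ₗ[K] N) (x : M)
    (hx : Y x = 0) : Av p t1 t2 Y ψ x = ψ x := by
  have hp : p.Prime := Fact.out
  simp only [Av, LinearMap.sum_apply, LinearMap.smul_apply, LinearMap.comp_apply]
  rw [Finset.sum_eq_single_of_mem 0 (by simp [hp.pos])]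
  · simp
  · intro j _ hj
    obtain ⟨j, rfl⟩ := Nat.exists_eq_succ_of_ne_zero hj
    rw [Nat.succ_eq_add_one, pow_succ Y, Module.End.mul_apply, hx]; simp

omit [Algebra (ZMod p) K] in
theorem Av_eq_self {t1 : Module.End K M} {t2 : Module.End K N} {Y : Module.End K M} (ψ : M →ₗ[K] N)
    (h : t2 ∘ₗ ψ = ψ ∘ₗ t1) : Av p t1 t2 Y ψ = ψ := by
  have hp : p.Prime := Fact.out
  have h0 : ad t1 t2 ψ = 0 := by rw [ad_apply, h, sub_self]
  rw [Av, Finset.sum_eq_single_of_mem 0 (by simp [hp.pos])]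
  · ext; simp
  · intro j _ hj
    obtain ⟨j, rfl⟩ := Nat.exists_eq_succ_of_ne_zero hj
    rw [Nat.succ_eq_add_one, pow_succ (ad t1 t2), Module.End.mul_apply, h0]; simp

omit [Fact p.Prime] [Algebra (ZMod p) K] in
theorem Av_range {t1 : Module.End K M} {t2 : Module.End K N} {Y : Module.End K M} (ψ : M →ₗ[K] N)
    (U : Submodule K N) (hU : ∀ x ∈ U, t2 x ∈ U) (hψ : ∀ x, ψ x ∈ U) (x : M) : Av p t1 t2 Y ψ x ∈ U := by
  have : ∀ j x, ((ad t1 t2 ^ j) ψ) x ∈ U := by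
    intro j
    induction j with
    | zero => simpa using hψ
    | succ j ih =>
      intro x
      rw [pow_succ', Module.End.mul_apply, ad_apply]
      exact Submodule.sub_mem _ (hU _ (ih x)) (ih _)
  simp only [Av, LinearMap.sum_apply, LinearMap.smul_apply, LinearMap.comp_apply]
  exact Submodule.sum_mem _ fun j _ => Submodule.smul_mem _ _ (this j _)

end average

theorem trace_moved {K : Type*} [Field K] {M : Type*} [AddCommGroup M] [Module K M] [FiniteDimensional K M]
    {t Y Pi f : Module.End K M} (hY : Y * t - t * Y = Pi) (hf : f * t = t * f) :
    LinearMap.trace K M (f * Pi) = 0 := by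
  rw [← hY, mul_sub, map_sub, ← mul_assoc, ← mul_assoc, hf, LinearMap.trace_mul_comm K (f * Y) t, mul_assoc, sub_self]

end DCT


namespace DCT
open Finsupp

section lef
variable {p : ℕ} [Fact p.Prime] {K : Type*} [Field K] [Algebra (ZMod p) K] {ι : Type*} [Fintype ι]
variable {V W : Type*}

def aL {G V : Type*} (a : G → V → V) (g : G) (l : List V) : List V := l.map (a g)

theorem aL_act {G V : Type*} [AddCommGroup G] {a : G → V → V} (ha : IsAct a) : IsAct (aL a) where
  zero l := by
    have : a 0 = id := funext ha.zero
    simp [aL, this]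
  add g h l := by
    have : a (g + h) = a g ∘ a h := funext (ha.add g h)
    simp [aL, this, List.map_map]

theorem aL_fix {G V : Type*} {a : G → V → V} {l : List V} : (∀ g, aL a g l = l) ↔ ∀ v ∈ l, ∀ g, a g v = v := by
  unfold aL
  constructor
  · intro h v hv g
    have h2 : l.map (a g) = l.map id := by rw [h g, List.map_id]
    exact List.map_inj_left.1 h2 v hv
  · intro h g
    conv_rhs => rw [← List.map_id l]
    exact List.map_inj_left.2 fun v hv => h v hv g

theorem bdl_map (f : V → W) (l : List V) :
    (bdl (l.map f) : List W →₀ K) = Finsupp.lmapDomain K K (List.map f) (bdl l) := by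
  induction l with
  | nil => simp [bdl]
  | cons v l ih =>
    have : ∀ x : List V →₀ K, consL (f v) (Finsupp.lmapDomain K K (List.map f) x) =
        Finsupp.lmapDomain K K (List.map f) (consL v x) := by
      intro x
      induction x using Finsupp.induction_linear with
      | zero => simp
      | add a b ha hb => simp only [map_add, ha, hb]
      | single l a => simp [Finsupp.mapDomain_single]
    rw [List.map_cons, bdl, bdl, map_sub, ih, this]
    simp [Finsupp.mapDomain_single]

theorem bd_T {G : Type*} [AddCommGroup G] (a : G → V → V) (g : G) (x : List V →₀ K) :
    bd (Tg K (aL a) g x) = Tg K (aL a) g (bd x) := by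
  induction x using Finsupp.induction_linear with
  | zero => simp
  | add a b ha hb => simp only [map_add, ha, hb]
  | single l c =>
    rw [Tg_single, bd_single, bd_single, map_smul]
    congr 1
    exact bdl_map _ _

theorem tau_comp {X Y : Type*} (bs : ι → K) {a : K → X → X} {a' : K → Y → Y} (f : (X →₀ K) →ₗ[K] (Y →₀ K))
    (N : Submodule K (X →₀ K))
    (h : ∀ g, ∀ x ∈ N, f (Tg K a g x) = Tg K a' g (f x)) (x : X →₀ K) (hx : x ∈ N) :
    f (tau bs a x) = tau bs a' (f x) := by
  simp [tau, LinearMap.sum_apply, map_sum, h _ x hx]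

theorem tau_fix {X : Type*} (bs : ι → K) {a : K → X → X} {b : X} (h : ∀ g, a g b = b) (x : K) :
    tau bs a (single b x) = 0 := by
  simp [tau, LinearMap.sum_apply, h]

theorem tau_mem {X : Type*} (bs : ι → K) {a : K → X → X} (N : Submodule K (X →₀ K))
    (h : ∀ g, ∀ x ∈ N, Tg K a g x ∈ N) (x : X →₀ K) (hx : x ∈ N) : tau bs a x ∈ N := by
  simp only [tau, LinearMap.sum_apply, LinearMap.smul_apply, LinearMap.sub_apply, Module.End.one_apply]
  exact Submodule.sum_mem _ fun i _ => Submodule.smul_mem _ _ (Submodule.sub_mem _ (h _ x hx) hx)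

theorem T_S {a : K → V → V} {Z : List V → Prop} (hZ : ∀ g l, Z l → Z (aL a g l)) (m : ℕ) (g : K)
    (x : List V →₀ K) (hx : x ∈ S K Z m) : Tg K (aL a) g x ∈ S K Z m := by
  refine S_map (f := Tg K (aL a) g) ?_ hx
  intro l h1 h2
  rw [Tg_single]
  exact single_mem_S (hZ g l h1) (by simp [aL, h2]) 1

theorem trace_Dg {B : Type*} [Fintype B] (w : B → K) : LinearMap.trace K (B →₀ K) (Dg w) = ∑ b, w b := by
  classical
  rw [LinearMap.trace_eq_matrix_trace K (Finsupp.basisSingleOne (R := K) (ι := B)), Matrix.trace]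
  refine Finset.sum_congr rfl fun b _ => ?_
  rw [Matrix.diag_apply, LinearMap.toMatrix_apply]
  simp

theorem tr_sub {M : Type*} [AddCommGroup M] [Module K M] (X Y : M →ₗ[K] M) :
    LinearMap.trace K M (X - Y) = LinearMap.trace K M X - LinearMap.trace K M Y :=
  map_sub (LinearMap.trace K M) X Y

theorem tr_neg {M : Type*} [AddCommGroup M] [Module K M] (X : M →ₗ[K] M) :
    LinearMap.trace K M (-X) = -LinearMap.trace K M X :=
  map_neg (LinearMap.trace K M) X

section B
variable (EP : List W → Prop)

abbrev BT := {l : List W // EP l}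

noncomputable def io (K : Type*) [Field K] : (BT EP →₀ K) →ₗ[K] (List W →₀ K) :=
  Finsupp.lmapDomain K K Subtype.val

noncomputable def ro (K : Type*) [Field K] : (List W →₀ K) →ₗ[K] (BT EP →₀ K) :=
  Finsupp.lsubtypeDomain {l | EP l}

@[simp] theorem io_single (b : BT EP) (x : K) : io EP K (single b x) = single b.1 x := by
  simp [io, Finsupp.mapDomain_single]

theorem ro_single (b : BT EP) (x : K) : ro EP K (single b.1 x) = single b x := by
  classical
  ext c
  change (single b.1 x) c.1 = _
  simp [Finsupp.single_apply, Subtype.ext_iff]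

theorem ro_io (x : BT EP →₀ K) : ro EP K (io EP K x) = x := by
  induction x using Finsupp.induction_linear with
  | zero => simp
  | add a b ha hb => simp only [map_add, ha, hb]
  | single l a => rw [io_single, ro_single]

theorem io_ro {m : ℕ} {x : List W →₀ K} (hx : x ∈ S K EP m) : io EP K (ro EP K x) = x := by
  refine S_ext (f := io EP K ∘ₗ ro EP K) (g := LinearMap.id) ?_ hx
  intro l h1 _
  rw [LinearMap.comp_apply, ro_single EP ⟨l, h1⟩, io_single]; rfl

/-- chains of length `m` in `BT` -/
def SB (K : Type*) [Field K] (m : ℕ) : Submodule K (BT EP →₀ K) :=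
  Finsupp.supported K K {b | b.1.length = m}

variable {EP}

theorem SB_map {M : Type*} [AddCommGroup M] [Module K M] {m : ℕ}
    {f : (BT EP →₀ K) →ₗ[K] M} {N : Submodule K M}
    (h : ∀ b : BT EP, b.1.length = m → f (single b 1) ∈ N) {c : BT EP →₀ K} (hc : c ∈ SB EP K m) :
    f c ∈ N := by
  have : SB EP K m ≤ N.comap f := by
    rw [SB, Finsupp.supported_eq_span_single, Submodule.span_le]
    rintro _ ⟨l, h1, rfl⟩
    exact h l h1
  exact this hc

theorem SB_ext {M : Type*} [AddCommGroup M] [Module K M] {m : ℕ}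
    {f g : (BT EP →₀ K) →ₗ[K] M}
    (h : ∀ b : BT EP, b.1.length = m → f (single b 1) = g (single b 1)) {c : BT EP →₀ K}
    (hc : c ∈ SB EP K m) : f c = g c := by
  have := SB_map (f := f - g) (N := ⊥) (fun b h1 => by simp [h b h1]) hc
  simpa [sub_eq_zero] using this

theorem ro_mem {m : ℕ} {x : List W →₀ K} (hx : x ∈ S K EP m) : ro EP K x ∈ SB EP K m := by
  refine S_map (f := ro EP K) ?_ hx
  intro l h1 h2
  rw [ro_single EP ⟨l, h1⟩]
  exact Finsupp.single_mem_supported K 1 h2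

theorem io_mem {m : ℕ} {x : BT EP →₀ K} (hx : x ∈ SB EP K m) : io EP K x ∈ S K EP m := by
  refine SB_map (f := io EP K) ?_ hx
  intro b h2
  rw [io_single]
  exact single_mem_S b.2 h2 1

noncomputable def dB (EP : List W → Prop) (K : Type*) [Field K] : Module.End K (BT EP →₀ K) :=
  ro EP K ∘ₗ bd ∘ₗ io EP K

theorem io_dB (hcl : Cl EP) (x : BT EP →₀ K) : io EP K (dB EP K x) = bd (io EP K x) := by
  induction x using Finsupp.induction_linear with
  | zero => simp
  | add a b ha hb => simp only [map_add, ha, hb]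
  | single b c =>
    rw [dB, LinearMap.comp_apply, LinearMap.comp_apply, io_single]
    rcases b with ⟨_ | ⟨v, l⟩, hb⟩
    · simp [bdl]
    · exact io_ro EP (bd_mem hcl (m := l.length) (single_mem_S hb rfl c))

theorem io_inj {x y : BT EP →₀ K} (h : io EP K x = io EP K y) : x = y := by
  rw [← ro_io EP x, h, ro_io]

theorem dB_mem (hcl : Cl EP) {m : ℕ} {x : BT EP →₀ K} (hx : x ∈ SB EP K (m+1)) : dB EP K x ∈ SB EP K m :=
  ro_mem (bd_mem hcl (io_mem hx))

theorem dB_zero {x : BT EP →₀ K} (hx : x ∈ SB EP K 0) : dB EP K x = 0 := by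
  rw [dB, LinearMap.comp_apply, LinearMap.comp_apply, bd_zero (io_mem hx), map_zero]

theorem dB_dB (hcl : Cl EP) (x : BT EP →₀ K) : dB EP K (dB EP K x) = 0 := by
  apply io_inj
  rw [io_dB hcl, io_dB hcl, bd_bd, map_zero]

def aB {aW : K → W → W} (hinv : ∀ g l, EP l → EP (aL aW g l)) (g : K) (b : BT EP) : BT EP :=
  ⟨aL aW g b.1, hinv g _ b.2⟩

theorem aB_act {aW : K → W → W} (haW : IsAct aW) (hinv : ∀ g l, EP l → EP (aL aW g l)) : IsAct (aB hinv) where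
  zero b := Subtype.ext ((aL_act haW).zero b.1)
  add g h b := Subtype.ext ((aL_act haW).add g h b.1)

theorem io_T {aW : K → W → W} (hinv : ∀ g l, EP l → EP (aL aW g l)) (g : K) (x : BT EP →₀ K) :
    io EP K (Tg K (aB hinv) g x) = Tg K (aL aW) g (io EP K x) := by
  induction x using Finsupp.induction_linear with
  | zero => simp
  | add a b ha hb => simp only [map_add, ha, hb]
  | single b c => simp [aB]

theorem lefschetz {aV : K → V → V} {aW : K → W → W} (haV : IsAct aV) (haW : IsAct aW)
    (bs : ι → K) (hb : LinearIndependent (ZMod p) bs) (hspan : ⊤ ≤ Submodule.span (ZMod p) (Set.range bs))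
    {Z : List V → Prop} (hZcl : Cl Z) (hZinv : ∀ g l, Z l → Z (aL aV g l))
    (hcl : Cl EP) (hinv : ∀ g l, EP l → EP (aL aW g l)) [Fintype (BT EP)] (D : ℕ)
    (hlen : ∀ l, EP l → l.length ≤ D) (hfill : ∀ m ≤ D, Fill K Z m)
    (Ψ : (List V →₀ K) →ₗ[K] (List W →₀ K))
    (hΨ1 : ∀ l, Z l → l.length ≤ D + 1 → Ψ (single l 1) ∈ S K EP l.length)
    (hΨ2 : ∀ l, Z l → l.length ≤ D + 1 → bd (Ψ (single l 1)) = Ψ (bdl l))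
    (hΨ3 : ∀ g l, Z l → l.length ≤ D + 1 → Ψ (single (aL aV g l) 1) = Tg K (aL aW) g (Ψ (single l 1)))
    (c : W → V) (hc : ∀ l, EP l → (∀ g, aL aW g l = l) → Z (l.map c) ∧ (∀ g, aL aV g (l.map c) = l.map c) ∧
      Ψ (single (l.map c) 1) = single l 1) (w : BT EP → K)
    (hw : ∀ b : BT EP, (∀ g, aL aW g b.1 = b.1) → w b = (-1) ^ b.1.length)
    (hw' : ∀ b : BT EP, ¬ (∀ g, aL aW g b.1 = b.1) → w b = 0) : ∑ b, w b = 0 := by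
  classical
  have haB := aB_act haW hinv
  set tB := tau bs (aB hinv) with htB
  set tV := tau bs (aL aV) with htV
  set tW := tau bs (aL aW) with htW
  obtain ⟨Y, hY1, hY2, hY3⟩ := exists_Y haB bs hb hspan
  set Pi := Dg (movedInd K (aB hinv)) with hPi
  have hfixB : ∀ b : BT EP, (∀ g, aB hinv g b = b) ↔ ∀ g, aL aW g b.1 = b.1 := by
    intro b
    exact forall_congr' fun g => ⟨fun h => congrArg Subtype.val h, fun h => Subtype.ext h⟩
  have hPi0 : ∀ b : BT EP, (∀ g, aL aW g b.1 = b.1) → Pi (single b 1) = 0 := by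
    intro b hb
    have h2 := (hfixB b).2 hb
    have : movedInd K (aB hinv) b = 0 := by
      unfold movedInd
      rw [if_neg]; push Not; exact h2
    rw [hPi, Dg_single, this]; simp
  have hPi1 : ∀ b : BT EP, ¬ (∀ g, aL aW g b.1 = b.1) → Pi (single b 1) = single b 1 := by
    intro b hb
    have h2 : ∃ g, aB hinv g b ≠ b := by
      by_contra hcon; push Not at hcon; exact hb ((hfixB b).1 hcon)
    have : movedInd K (aB hinv) b = 1 := by
      unfold movedInd
      rw [if_pos h2]
    rw [hPi, Dg_single, this]; simp
  have hY0 : ∀ b : BT EP, (∀ g, aL aW g b.1 = b.1) → Y (single b 1) = 0 := by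
    intro b hb
    rw [← hY3, Module.End.mul_apply, hPi0 b hb, map_zero]
  have hPY : Pi * Y = Y := by rw [← (hY2 _ (movedInd_inv haB)).eq, hY3]
  -- commutation facts
  have hbdt : bd ∘ₗ tV = tV ∘ₗ bd := by
    refine LinearMap.ext fun x => ?_
    exact tau_comp bs bd ⊤ (fun g x _ => bd_T aV g x) x trivial
  have hdT : ∀ g x, dB EP K (Tg K (aB hinv) g x) = Tg K (aB hinv) g (dB EP K x) := by
    intro g x
    apply io_inj
    rw [io_dB hcl, io_T, io_T, io_dB hcl, bd_T]
  have hdt : dB EP K * tB = tB * dB EP K := by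
    refine LinearMap.ext fun x => ?_
    exact tau_comp bs (dB EP K) ⊤ (fun g x _ => hdT g x) x trivial
  -- construct phi
  have phi : ∀ n, n ≤ D + 1 → ∃ φ : (BT EP →₀ K) →ₗ[K] (List V →₀ K), tV ∘ₗ φ = φ ∘ₗ tB ∧
      (∀ b : BT EP, b.1.length < n → φ (single b 1) ∈ S K Z b.1.length ∧
        bd (φ (single b 1)) = φ (dB EP K (single b 1)) ∧
        ((∀ g, aL aW g b.1 = b.1) → φ (single b 1) = single (b.1.map c) 1)) ∧
      (∀ b : BT EP, n ≤ b.1.length → φ (single b 1) = 0) := by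
    intro n
    induction n with
    | zero => exact fun _ => ⟨0, by simp, by simp, by simp⟩
    | succ n ih =>
      intro hn
      obtain ⟨φ, h1, h2, h3⟩ := ih (by omega)
      have hch : ∀ b : BT EP, ∃ y : List V →₀ K, b.1.length = n → (y ∈ S K Z n ∧ bd y = φ (dB EP K (single b 1)) ∧
          ((∀ g, aL aW g b.1 = b.1) → y = single (b.1.map c) 1)) := by
        intro b
        by_cases hbn : b.1.length = n
        swap
        · exact ⟨0, fun h => absurd h hbn⟩
        have hbS : single b (1:K) ∈ SB EP K n := Finsupp.single_mem_supported K 1 hbn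
        by_cases hfix : ∀ g, aL aW g b.1 = b.1
        · refine ⟨single (b.1.map c) 1, fun _ => ⟨single_mem_S (hc b.1 b.2 hfix).1 (by simp [hbn]) 1, ?_, fun _ => rfl⟩⟩
          rw [bd_single, one_smul, bdl_map]
          have e1 : (bdl b.1 : List W →₀ K) = io EP K (dB EP K (single b 1)) := by
            rw [io_dB hcl]; simp
          rw [e1]
          cases n with
          | zero => rw [dB_zero hbS]; simp
          | succ n =>
            have hsub : dB EP K (single b 1) ∈ Finsupp.supported K K
                {b' : BT EP | b'.1.Sublist b.1 ∧ b'.1.length = n} := by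
              have e2 := bdl_mem (K := K) b.1 n hbn
              rw [e1] at e2
              rw [Finsupp.mem_supported]
              intro b' hb'
              rw [S, Finsupp.mem_supported] at e2
              have : b'.1 ∈ (io EP K (dB EP K (single b 1))).support := by
                rw [Finsupp.mem_support_iff]
                rw [Finset.mem_coe, Finsupp.mem_support_iff] at hb'
                have : (io EP K (dB EP K (single b 1))) b'.1 = dB EP K (single b 1) b' := by
                  simp only [io, Finsupp.lmapDomain_apply]
                  exact Finsupp.mapDomain_apply Subtype.val_injective _ _
                rw [this]; exact hb'
              exact e2 this
            have key : Finsupp.supported K K {b' : BT EP | b'.1.Sublist b.1 ∧ b'.1.length = n} ≤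
                LinearMap.ker ((Finsupp.lmapDomain K K (List.map c)) ∘ₗ io EP K - φ) := by
              rw [Finsupp.supported_eq_span_single, Submodule.span_le]
              rintro _ ⟨b', ⟨h4, h5⟩, rfl⟩
              have hfix' : ∀ g, aL aW g b'.1 = b'.1 :=
                aL_fix.2 fun v hv => aL_fix.1 hfix v (h4.subset hv)
              simp [Finsupp.mapDomain_single, (h2 b' (by omega)).2.2 hfix']
            have := key hsub
            rw [LinearMap.mem_ker, LinearMap.sub_apply, sub_eq_zero] at this
            exact this
        · have hn0 : n ≠ 0 := by
            rintro rfl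
            apply hfix
            rw [List.length_eq_zero_iff.1 hbn]; simp [aL]
          obtain ⟨n, rfl⟩ := Nat.exists_eq_succ_of_ne_zero hn0
          have hm := dB_mem hcl hbS
          have hz1 : φ (dB EP K (single b 1)) ∈ S K Z n :=
            SB_map (f := φ) (fun b' hb' => by
              have := (h2 b' (by omega)).1; rwa [hb'] at this) hm
          have hz2 : bd (φ (dB EP K (single b 1))) = 0 := by
            have := SB_ext (f := bd ∘ₗ φ) (g := φ ∘ₗ dB EP K) (fun b' hb' => (h2 b' (by omega)).2.1) hm
            simp only [LinearMap.comp_apply, dB_dB hcl, map_zero] at this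
            exact this
          obtain ⟨y, hy1, hy2⟩ := hfill n (by omega) _ hz1 hz2
          exact ⟨y, fun _ => ⟨hy1, hy2, fun h => absurd h hfix⟩⟩
      choose y hy using hch
      let P : Module.End K (BT EP →₀ K) := Dg (fun b => if b.1.length = n then 1 else 0)
      have hP1 : ∀ b : BT EP, b.1.length = n → P (single b 1) = single b 1 := by
        intro b hb; simp [P, hb]
      have hP0 : ∀ b : BT EP, b.1.length ≠ n → P (single b 1) = 0 := by
        intro b hb; simp [P, hb]
      have hPinv : ∀ g (b : BT EP), (if (aB hinv g b).1.length = n then (1:K) else 0) = if b.1.length = n then 1 else 0 := by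
        intro g b; simp [aB, aL]
      have hPt : P * tB = tB * P := comm_tau bs P fun g => Dg_T _ _ _ hPinv
      have hPYc : Commute P Y := (hY2 _ hPinv).symm
      let ψ : (BT EP →₀ K) →ₗ[K] (List V →₀ K) := Finsupp.linearCombination K y ∘ₗ P
      have hψ1 : ∀ b : BT EP, b.1.length = n → ψ (single b 1) = y b := by
        intro b hb; simp [ψ, hP1 b hb]
      have hψ0 : ∀ b : BT EP, b.1.length ≠ n → ψ (single b 1) = 0 := by
        intro b hb; simp [ψ, hP0 b hb]
      have hψP : ψ ∘ₗ P = ψ := by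
        have : P * P = P := by
          simp only [P]; rw [Dg_mul]; congr 1; ext b; simp
        simp only [ψ]
        rw [LinearMap.comp_assoc]
        congr 1
      set A := Av p tB tV Y ψ with hA
      have hAP : A ∘ₗ P = A := by rw [hA, ← Av_comp_right P hPt hPYc, hψP]
      have hA0 : ∀ b : BT EP, b.1.length ≠ n → A (single b 1) = 0 := by
        intro b hb
        rw [← hAP, LinearMap.comp_apply, hP0 b hb, map_zero]
      have hAfix : ∀ b : BT EP, (∀ g, aL aW g b.1 = b.1) → A (single b 1) = ψ (single b 1) := by
        intro b hb
        exact Av_apply_zero ψ _ (hY0 b hb)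
      have hAt : tV ∘ₗ A = A ∘ₗ tB := by
        refine Av_comm (tau_pow haB bs) (tau_pow (aL_act haV) bs) hY1 hY3 hPY ψ ?_
        refine Finsupp.lhom_ext' fun b => LinearMap.ext_ring ?_
        simp only [LinearMap.comp_apply, Finsupp.lsingle_apply]
        by_cases hfix : ∀ g, aL aW g b.1 = b.1
        · rw [hPi0 b hfix, map_zero, ad_apply]
          change _ = tV (ψ (single b 1)) - ψ (tB (single b 1))
          rw [show tB (single b (1:K)) = 0 from tau_fix bs ((hfixB b).2 hfix) 1, map_zero, sub_zero]
          by_cases hbn : b.1.length = n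
          · rw [hψ1 b hbn, (hy b hbn).2.2 hfix]
            exact (tau_fix bs (hc b.1 b.2 hfix).2.1 1).symm
          · rw [hψ0 b hbn, map_zero]
        · rw [hPi1 b hfix]
      have hbdψ : bd ∘ₗ ψ = φ ∘ₗ dB EP K ∘ₗ P := by
        refine Finsupp.lhom_ext' fun b => LinearMap.ext_ring ?_
        simp only [LinearMap.comp_apply, Finsupp.lsingle_apply]
        by_cases hbn : b.1.length = n
        · rw [hψ1 b hbn, (hy b hbn).2.1, hP1 b hbn]
        · rw [hψ0 b hbn, hP0 b hbn]; simp
      have hbdA : bd ∘ₗ A = φ ∘ₗ dB EP K ∘ₗ P := by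
        have hcl2 : Av p tB tV Y (bd ∘ₗ ψ) = bd ∘ₗ Av p tB tV Y ψ :=
          Av_comp_left (p := p) (t1 := tB) (t2 := tV) (t3 := tV) (Y := Y) bd hbdt ψ
        rw [hA, ← hcl2, hbdψ]
        refine Av_eq_self _ ?_
        rw [← LinearMap.comp_assoc, h1]
        have e1 : tB * (dB EP K * P) = (dB EP K * P) * tB := by
          rw [← mul_assoc, ← hdt, mul_assoc, ← hPt, mul_assoc]
        rw [LinearMap.comp_assoc, LinearMap.comp_assoc]
        exact congrArg (fun z => φ ∘ₗ z) e1
      have hAdB : ∀ b : BT EP, b.1.length ≤ n → A (dB EP K (single b 1)) = 0 := by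
        intro b hbn
        have hbS : single b (1:K) ∈ SB EP K b.1.length := Finsupp.single_mem_supported K 1 rfl
        rcases hk : b.1.length with _ | k
        · rw [hk] at hbS
          rw [dB_zero hbS, map_zero]
        · rw [hk] at hbS
          exact SB_ext (f := A) (g := 0) (fun b' hb' => hA0 b' (by omega)) (dB_mem hcl hbS)
      refine ⟨φ + A, ?_, ?_, ?_⟩
      · rw [LinearMap.comp_add, LinearMap.add_comp, h1, hAt]
      · intro b hbn
        rcases Nat.lt_succ_iff_lt_or_eq.1 hbn with hlt | heq
        · simp only [LinearMap.add_apply, hA0 b hlt.ne, add_zero, hAdB b hlt.le]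
          exact h2 b hlt
        · simp only [LinearMap.add_apply, h3 b heq.ge, zero_add, hAdB b heq.le, add_zero]
          refine ⟨?_, ?_, ?_⟩
          · rw [heq]
            refine Av_range ψ (S K Z n) ?_ ?_ _
            · exact tau_mem bs _ (T_S hZinv n)
            · intro x
              induction x using Finsupp.induction_linear with
              | zero => simp
              | add a b ha hb => rw [map_add]; exact Submodule.add_mem _ ha hb
              | single b' x =>
                rw [← mul_one x, ← smul_eq_mul, ← Finsupp.smul_single, map_smul]
                refine Submodule.smul_mem _ _ ?_
                by_cases hbn : b'.1.length = n
                · rw [hψ1 b' hbn]; exact (hy b' hbn).1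
                · rw [hψ0 b' hbn]; exact Submodule.zero_mem _
          · have := LinearMap.congr_fun hbdA (single b 1)
            simp only [LinearMap.comp_apply, hP1 b heq] at this
            exact this
          · intro hfix
            rw [hAfix b hfix, hψ1 b heq, (hy b heq).2.2 hfix]
      · intro b hbn
        rw [LinearMap.add_apply, h3 b (by omega), hA0 b (by omega), add_zero]
  obtain ⟨φ, hφt, hφ, -⟩ := phi (D+1) le_rfl
  have hlenB : ∀ b : BT EP, b.1.length < D + 1 := fun b => Nat.lt_succ_of_le (hlen b.1 b.2)
  have hφd : bd ∘ₗ φ = φ ∘ₗ dB EP K :=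
    Finsupp.lhom_ext' fun b => LinearMap.ext_ring (hφ b (hlenB b)).2.1
  -- null homotopy
  have hom : ∀ n, n ≤ D + 1 → ∃ s : (BT EP →₀ K) →ₗ[K] (List V →₀ K),
      (∀ b : BT EP, b.1.length < n → s (single b 1) ∈ S K Z (b.1.length + 1) ∧
        bd (s (single b 1)) + s (dB EP K (single b 1)) = φ (single b 1)) := by
    intro n
    induction n with
    | zero => exact fun _ => ⟨0, by simp⟩
    | succ n ih =>
      intro hn
      obtain ⟨s, hs⟩ := ih (by omega)
      have hch : ∀ b : BT EP, ∃ y : List V →₀ K, b.1.length = n → (y ∈ S K Z (n+1) ∧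
          bd y = φ (single b 1) - s (dB EP K (single b 1))) := by
        intro b
        by_cases hbn : b.1.length = n
        swap
        · exact ⟨0, fun h => absurd h hbn⟩
        have hbS : single b (1:K) ∈ SB EP K n := Finsupp.single_mem_supported K 1 hbn
        have hφb := (hφ b (hlenB b)).1
        rw [hbn] at hφb
        have hz1 : s (dB EP K (single b 1)) ∈ S K Z n := by
          cases n with
          | zero => rw [dB_zero hbS, map_zero]; exact Submodule.zero_mem _
          | succ n =>
            exact SB_map (f := s) (fun b' hb' => by
              have := (hs b' (by omega)).1; rwa [hb'] at this) (dB_mem hcl hbS)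
        have hz2 : bd (φ (single b 1) - s (dB EP K (single b 1))) = 0 := by
          rw [map_sub, (hφ b (hlenB b)).2.1, sub_eq_zero]
          cases n with
          | zero => rw [dB_zero hbS]; simp
          | succ n =>
            have := SB_ext (f := bd ∘ₗ s + s ∘ₗ dB EP K) (g := φ) (fun b' hb' => (hs b' (by omega)).2)
              (dB_mem hcl hbS)
            simp only [LinearMap.add_apply, LinearMap.comp_apply, dB_dB hcl, map_zero, add_zero] at this
            exact this.symm
        obtain ⟨y, hy1, hy2⟩ := hfill n (by omega) _ (Submodule.sub_mem _ hφb hz1) hz2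
        exact ⟨y, fun _ => ⟨hy1, hy2⟩⟩
      choose y hy using hch
      let s' : (BT EP →₀ K) →ₗ[K] (List V →₀ K) :=
        Finsupp.linearCombination K (fun b => if b.1.length = n then y b else s (single b 1))
      have hs1 : ∀ b : BT EP, b.1.length = n → s' (single b 1) = y b := fun b hb => by simp [s', hb]
      have hs0 : ∀ b : BT EP, b.1.length ≠ n → s' (single b 1) = s (single b 1) := fun b hb => by simp [s', hb]
      have hsd : ∀ b : BT EP, b.1.length ≤ n → s' (dB EP K (single b 1)) = s (dB EP K (single b 1)) := by
        intro b hbn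
        have hbS : single b (1:K) ∈ SB EP K b.1.length := Finsupp.single_mem_supported K 1 rfl
        rcases hk : b.1.length with _ | k
        · rw [hk] at hbS
          rw [dB_zero hbS, map_zero, map_zero]
        · rw [hk] at hbS
          exact SB_ext (fun b' hb' => hs0 b' (by omega)) (dB_mem hcl hbS)
      refine ⟨s', ?_⟩
      intro b hbn
      rcases Nat.lt_succ_iff_lt_or_eq.1 hbn with hlt | heq
      · rw [hs0 b hlt.ne, hsd b hlt.le]; exact hs b hlt
      · rw [hs1 b heq, hsd b heq.le]
        refine ⟨heq ▸ (hy b heq).1, ?_⟩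
        rw [(hy b heq).2]; abel
  obtain ⟨s, hs⟩ := hom (D+1) le_rfl
  -- Ψ facts
  have hΨS : ∀ m ≤ D + 1, ∀ x ∈ S K Z m, Ψ x ∈ S K EP m := fun m hm x hx =>
    S_map (f := Ψ) (fun l h1 h2 => h2 ▸ hΨ1 l h1 (h2 ▸ hm)) hx
  have hΨbd : ∀ m ≤ D + 1, ∀ x ∈ S K Z m, bd (Ψ x) = Ψ (bd x) := fun m hm x hx =>
    S_ext (f := bd ∘ₗ Ψ) (g := Ψ ∘ₗ bd) (fun l h1 h2 => by
      simpa using hΨ2 l h1 (h2 ▸ hm)) hx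
  have hΨT : ∀ m ≤ D + 1, ∀ g, ∀ x ∈ S K Z m, Ψ (Tg K (aL aV) g x) = Tg K (aL aW) g (Ψ x) := fun m hm g x hx =>
    S_ext (f := Ψ ∘ₗ Tg K (aL aV) g) (g := Tg K (aL aW) g ∘ₗ Ψ) (fun l h1 h2 => by
      simpa using hΨ3 g l h1 (h2 ▸ hm)) hx
  let f : Module.End K (BT EP →₀ K) := ro EP K ∘ₗ Ψ ∘ₗ φ
  let h : Module.End K (BT EP →₀ K) := ro EP K ∘ₗ Ψ ∘ₗ s
  have hiof : ∀ x, io EP K (f x) = Ψ (φ x) := by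
    intro x
    induction x using Finsupp.induction_linear with
    | zero => simp
    | add a b ha hb => simp only [map_add, ha, hb]
    | single b c =>
      rw [← mul_one c, ← smul_eq_mul, ← Finsupp.smul_single, map_smul, map_smul, map_smul, map_smul]
      congr 1
      exact io_ro EP (hΨS _ (hlenB b).le _ (hφ b (hlenB b)).1)
  have hf : f = dB EP K * h + h * dB EP K := by
    refine Finsupp.lhom_ext' fun b => LinearMap.ext_ring ?_
    simp only [LinearMap.comp_apply, Finsupp.lsingle_apply]
    have hsb := hs b (hlenB b)
    have e1 : dB EP K (h (single b 1)) = ro EP K (bd (Ψ (s (single b 1)))) := by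
      simp only [dB, h, LinearMap.comp_apply]
      rw [io_ro EP (hΨS _ (by have := hlenB b; omega) _ hsb.1)]
    rw [LinearMap.add_apply, Module.End.mul_apply, Module.End.mul_apply, e1,
      hΨbd _ (by have := hlenB b; omega) _ hsb.1]
    simp only [f, h, LinearMap.comp_apply]
    rw [← map_add, ← map_add, hsb.2]
  let sg : Module.End K (BT EP →₀ K) := Dg (fun b => (-1) ^ b.1.length)
  have hsd : dB EP K * sg = - (sg * dB EP K) := by
    refine Finsupp.lhom_ext' fun b => LinearMap.ext_ring ?_
    simp only [LinearMap.comp_apply, Finsupp.lsingle_apply, Module.End.mul_apply, LinearMap.neg_apply]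
    have hbS : single b (1:K) ∈ SB EP K b.1.length := Finsupp.single_mem_supported K 1 rfl
    have e1 : sg (single b 1) = ((-1:K) ^ b.1.length) • single b 1 := by
      simp [sg]
    rw [e1, map_smul]
    rcases hk : b.1.length with _ | k
    · rw [hk] at hbS
      rw [dB_zero hbS]; simp
    · rw [hk] at hbS
      have : sg (dB EP K (single b 1)) = ((-1:K) ^ k • LinearMap.id) (dB EP K (single b 1)) :=
        SB_ext (f := sg) (fun b' hb' => by simp [sg, hb']) (dB_mem hcl hbS)
      rw [this, pow_succ]; simp
  have htr0 : LinearMap.trace K _ (f * sg) = 0 := by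
    rw [hf, add_mul, map_add, mul_assoc h, hsd, show h * -(sg * dB EP K) = -(h * (sg * dB EP K)) from LinearMap.comp_neg _ _, tr_neg, ← mul_assoc h, LinearMap.trace_mul_comm K (h * sg),
      mul_assoc, add_neg_cancel]
  have hft : (f * sg) * tB = tB * (f * sg) := by
    have e1 : sg * tB = tB * sg := comm_tau bs sg fun g => Dg_T _ _ _ (fun g b => by simp [aB, aL])
    have e2 : f * tB = tB * f := by
      refine Finsupp.lhom_ext' fun b => LinearMap.ext_ring ?_
      simp only [LinearMap.comp_apply, Finsupp.lsingle_apply, Module.End.mul_apply]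
      apply io_inj
      rw [hiof]
      have e3 : φ (tB (single b 1)) = tV (φ (single b 1)) := (LinearMap.congr_fun hφt (single b 1)).symm
      have e4 : io EP K (tB (f (single b 1))) = tW (io EP K (f (single b 1))) :=
        tau_comp bs (io EP K) ⊤ (fun g x _ => io_T hinv g x) _ trivial
      rw [e3, e4, hiof]
      exact tau_comp bs Ψ (S K Z b.1.length) (fun g x hx => hΨT _ (hlenB b).le g x hx) _ (hφ b (hlenB b)).1
    rw [mul_assoc, e1, ← mul_assoc, e2, mul_assoc]
  have htr1 := trace_moved hY1 hft
  have hDw : f * sg - f * sg * Pi = Dg w := by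
    refine Finsupp.lhom_ext' fun b => LinearMap.ext_ring ?_
    simp only [LinearMap.comp_apply, Finsupp.lsingle_apply, Module.End.mul_apply, LinearMap.sub_apply]
    by_cases hfix : ∀ g, aL aW g b.1 = b.1
    · rw [hPi0 b hfix, map_zero, map_zero, sub_zero, show Dg w (single b 1) = single b ((-1) ^ b.1.length) by rw [Dg_single, hw b hfix, one_mul]]
      have e1 : sg (single b 1) = ((-1:K) ^ b.1.length) • single b 1 := by
        simp [sg]
      rw [e1, map_smul]
      have e2 : f (single b 1) = single b 1 := by
        apply io_inj
        rw [hiof, (hφ b (hlenB b)).2.2 hfix, (hc b.1 b.2 hfix).2.2, io_single]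
      rw [e2]; simp
    · rw [hPi1 b hfix, sub_self, Dg_single, hw' b hfix]; simp
  rw [← trace_Dg, ← hDw, show LinearMap.trace K _ (f * sg - f * sg * Pi) = LinearMap.trace K _ (f * sg) - LinearMap.trace K _ (f * sg * Pi) from tr_sub _ _, htr0, htr1, sub_zero]

end B
end lef
end DCT


namespace DCT
open Finsupp

section carrier
variable {K : Type*} [Field K] {V W : Type*}

theorem T_fix_S {G : Type*} [AddCommGroup G] {aW : G → W → W} {P : List W → Prop}
    (h : ∀ l, P l → ∀ g, aL aW g l = l) {m : ℕ} {x : List W →₀ K} (hx : x ∈ S K P m) (g : G) :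
    Tg K (aL aW) g x = x := by
  refine S_ext (f := Tg K (aL aW) g) (g := LinearMap.id) ?_ hx
  intro l h1 _
  rw [Tg_single, h l h1 g]; rfl

theorem carrier_map {G : Type*} [AddCommGroup G] {aV : G → V → V} {aW : G → W → W} (haV : IsAct aV) (haW : IsAct aW)
    {Z : List V → Prop} (hZcl : Cl Z) (hZinv : ∀ g l, Z l → Z (aL aV g l))
    (Γ : List V → List W → Prop) (hmono : ∀ l l', l'.Sublist l → ∀ m, Γ l' m → Γ l m)
    (heq : ∀ g l m, Γ l m → Γ (aL aV g l) (aL aW g m))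
    (hfill : ∀ l, Z l → l ≠ [] → ∀ m, Fill K (Γ l) m)
    (bx : List V → G)
    (hbx : ∀ l, (∀ g, bx (aL aV g l) = g + bx l) ∨
      ((∀ g, aL aV g l = l) ∧ ∀ m, Γ l m → ∀ g, aL aW g m = m))
    (ρ : V → W) (Pr : List V → Prop) (hPr : Cl Pr) (hPn : Pr []) (hPΓ : ∀ l, Pr l → Γ l (l.map ρ))
    (hPfix : ∀ l, Pr l → (∀ g, aL aV g l = l) ∧ ∀ m, Γ l m → ∀ g, aL aW g m = m) (n : ℕ) :
    ∃ Ψ : (List V →₀ K) →ₗ[K] (List W →₀ K), ∀ l, Z l → l.length ≤ n →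
      Ψ (single l 1) ∈ S K (Γ l) l.length ∧ bd (Ψ (single l 1)) = Ψ (bdl l) ∧
      (∀ g, Ψ (single (aL aV g l) 1) = Tg K (aL aW) g (Ψ (single l 1))) ∧
      (Pr l → Ψ (single l 1) = single (l.map ρ) 1) := by
  classical
  have hAV := aL_act haV
  have hAW := aL_act haW
  have hneg : ∀ g l, aL aV g (aL aV (-g) l) = l := fun g l => by
    rw [← hAV.add, add_neg_cancel, hAV.zero]
  induction n with
  | zero =>
    refine ⟨Finsupp.linearCombination K (fun l => if l = [] then single [] 1 else 0), ?_⟩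
    intro l hl hlen
    have : l = [] := List.length_eq_zero_iff.1 (Nat.le_zero.1 hlen)
    subst this
    refine ⟨?_, ?_, ?_, ?_⟩
    · simp only [Finsupp.linearCombination_single, if_true, one_smul]
      exact single_mem_S (by simpa using hPΓ [] hPn) rfl 1
    · simp [bdl]
    · intro g; simp [aL]
    · intro _; simp
  | succ n ih =>
    obtain ⟨Ψ, hΨ⟩ := ih
    -- facts about boundaries
    have hT : ∀ l, Z l → l.length = n + 1 → Ψ (bdl l) ∈ S K (Γ l) n ∧ bd (Ψ (bdl l)) = 0 ∧
        (∀ g, Ψ (bdl (aL aV g l)) = Tg K (aL aW) g (Ψ (bdl l))) ∧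
        (Pr l → Ψ (bdl l) = bdl (l.map ρ)) := by
      intro l hl hlen
      have hb := bdl_mem (K := K) l n hlen
      refine ⟨?_, ?_, ?_, ?_⟩
      · refine S_map (f := Ψ) ?_ hb
        intro l' h1 h2
        have := (hΨ l' (hZcl _ _ h1 hl) h2.le).1
        rw [h2] at this
        exact S_mono (fun m _ h => hmono _ _ h1 m h) this
      · have : bd (Ψ (bdl l)) = Ψ (bd (bdl l)) := by
          refine S_ext (f := bd ∘ₗ Ψ) (g := Ψ ∘ₗ bd) ?_ hb
          intro l' h1 h2
          simp only [LinearMap.comp_apply]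
          rw [(hΨ l' (hZcl _ _ h1 hl) h2.le).2.1, bd_single, one_smul]
        rw [this]
        have h2 := bd_bd (K := K) (single l 1)
        rw [bd_single, one_smul] at h2
        rw [h2, map_zero]
      · intro g
        have e1 : bdl (aL aV g l) = Tg K (aL aV) g (bdl l) := bdl_map _ _
        rw [e1]
        refine S_ext (f := Ψ ∘ₗ Tg K (aL aV) g) (g := Tg K (aL aW) g ∘ₗ Ψ) ?_ hb
        intro l' h1 h2
        simp only [LinearMap.comp_apply, Tg_single]
        exact (hΨ l' (hZcl _ _ h1 hl) h2.le).2.2.1 g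
      · intro hp
        rw [bdl_map]
        refine S_ext (f := Ψ) ?_ hb
        intro l' h1 h2
        rw [(hΨ l' (hZcl _ _ h1 hl) h2.le).2.2.2 (hPr _ _ h1 hp)]
        simp [Finsupp.mapDomain_single]
    have hch : ∀ l, ∃ y : List W →₀ K, Z l → l.length = n + 1 → y ∈ S K (Γ l) (n+1) ∧ bd y = Ψ (bdl l) ∧
        (Pr l → y = single (l.map ρ) 1) := by
      intro l
      by_cases hl : Z l ∧ l.length = n + 1
      · obtain ⟨hl, hlen⟩ := hl
        obtain ⟨h1, h2, h3, h4⟩ := hT l hl hlen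
        by_cases hp : Pr l
        · refine ⟨single (l.map ρ) 1, fun _ _ => ⟨single_mem_S (hPΓ l hp) (by simpa using hlen) 1, ?_, fun _ => rfl⟩⟩
          rw [bd_single, one_smul, h4 hp]
        · obtain ⟨y, hy1, hy2⟩ := hfill l hl (by rintro rfl; simp at hlen) n _ h1 h2
          exact ⟨y, fun _ _ => ⟨hy1, hy2, fun h => absurd h hp⟩⟩
      · exact ⟨0, fun h1 h2 => absurd ⟨h1, h2⟩ hl⟩
    choose y hy using hch
    let Y : List V → (List W →₀ K) := fun l => Tg K (aL aW) (bx l) (y (aL aV (-(bx l)) l))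
    let Ψ' : (List V →₀ K) →ₗ[K] (List W →₀ K) :=
      Finsupp.linearCombination K (fun l => if l.length ≤ n then Ψ (single l 1) else Y l)
    have hlo : ∀ l, l.length ≤ n → Ψ' (single l 1) = Ψ (single l 1) := by
      intro l h; simp [Ψ', h]
    have hhi : ∀ l : List V, l.length = n + 1 → Ψ' (single l 1) = Y l := by
      intro l h; simp [Ψ', h]
    have hbdlo : ∀ l : List V, l.length ≤ n + 1 → Ψ' (bdl l) = Ψ (bdl l) := by
      intro l h
      rcases hk : l.length with _ | k
      · rw [List.length_eq_zero_iff.1 hk]; simp [bdl]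
      · exact S_ext (f := Ψ') (g := Ψ) (fun l' h1 h2 => hlo l' (by omega)) (bdl_mem (K := K) l k hk)
    have hlenA : ∀ g l, (aL aV g l).length = l.length := by intro g l; simp [aL]
    refine ⟨Ψ', ?_⟩
    intro l hl hlen
    rw [hbdlo l hlen]
    rcases Nat.lt_succ_iff_lt_or_eq.1 (Nat.lt_succ_of_le hlen) with hlt | hlen'
    · have hlt' : l.length ≤ n := by omega
      simp only [hlo l hlt', hlo _ ((hlenA _ l).le.trans hlt')]
      exact hΨ l hl hlt'
    · have hZm : Z (aL aV (-(bx l)) l) := hZinv _ _ hl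
      have hyl := hy _ hZm (by rw [hlenA, hlen'])
      have hYmem : Y l ∈ S K (Γ l) (n+1) := by
        refine S_map (f := Tg K (aL aW) (bx l)) ?_ hyl.1
        intro m h1 h2
        rw [Tg_single]
        refine single_mem_S ?_ (by simpa [aL] using h2) 1
        have := heq (bx l) _ _ h1
        rwa [hneg] at this
      have hYbd : bd (Y l) = Ψ (bdl l) := by
        simp only [Y]
        rw [bd_T, hyl.2.1, ← (hT _ hZm (by rw [hlenA, hlen'])).2.2.1, hneg]
      rw [hhi l hlen']
      refine ⟨by rw [hlen']; exact hYmem, hYbd, ?_, ?_⟩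
      · intro g
        rw [hhi _ (by rw [hlenA, hlen'])]
        rcases hbx l with h | ⟨h1, h2⟩
        · simp only [Y]
          rw [h g, neg_add_rev, hAV.add, ← hAV.add (-g), neg_add_cancel, hAV.zero, Tg_add hAW, Module.End.mul_apply]
        · rw [h1 g, T_fix_S h2 hYmem]
      · intro hp
        obtain ⟨h1, h2⟩ := hPfix l hp
        simp only [Y]
        have e1 : aL aV (-(bx l)) l = l := h1 _
        rw [e1] at hyl ⊢
        rw [T_fix_S h2 hyl.1, hyl.2.2 hp]

end carrier
end DCT


namespace DCT
open Finsupp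

section idx
variable {K : Type*} [Field K] [Fintype K] [DecidableEq K] {J L : Type*} [Fintype J] [DecidableEq J] [Fintype L]
  [DecidableEq L] {e : ℕ}

abbrev VV (J K : Type*) (e : ℕ) := (J × K) ⊕ Fin e
abbrev WW (L K : Type*) (e : ℕ) := Finset (L × K) ⊕ Fin e

def avv (J : Type*) {K : Type*} [Field K] (e : ℕ) (g : K) : VV J K e → VV J K e
  | Sum.inl (j, h) => Sum.inl (j, g + h)
  | Sum.inr i => Sum.inr i

def sh {L K : Type*} [Field K] [DecidableEq K] [DecidableEq L] (g : K) (A : Finset (L × K)) : Finset (L × K) :=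
  A.image (fun x => (x.1, g + x.2))

def aww (L : Type*) {K : Type*} [Field K] [DecidableEq K] [DecidableEq L] (e : ℕ) (g : K) : WW L K e → WW L K e
  | Sum.inl A => Sum.inl (sh g A)
  | Sum.inr i => Sum.inr i

theorem avv_act : IsAct (avv J (K := K) e) where
  zero := by rintro (⟨j, h⟩ | i) <;> simp [avv]
  add := by rintro g h (⟨j, h⟩ | i) <;> simp [avv, add_assoc]

omit [Fintype K] [Fintype L] in
theorem mem_sh (g : K) (A : Finset (L × K)) (l : L) (a : K) : (l, a) ∈ sh g A ↔ (l, -g + a) ∈ A := by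
  simp only [sh, Finset.mem_image, Prod.mk.injEq, Prod.exists]
  constructor
  · rintro ⟨l', a', h, rfl, rfl⟩; simpa using h
  · intro h; exact ⟨l, _, h, rfl, by simp⟩

omit [Fintype K] [Fintype L] in
theorem aww_act : IsAct (aww L (K := K) e) where
  zero := by
    rintro (A | i)
    · simp only [aww]; congr 1; ext ⟨l, a⟩; simp [mem_sh]
    · simp [aww]
  add := by
    rintro g h (A | i)
    · simp only [aww]; congr 1; ext ⟨l, a⟩; simp [mem_sh, add_assoc]
    · simp [aww]

def bxx {J K : Type*} [Field K] {e : ℕ} : List (VV J K e) → K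
  | [] => 0
  | Sum.inl (_, h) :: _ => h
  | Sum.inr _ :: l => bxx l

omit [Fintype K] [DecidableEq K] [Fintype J] [DecidableEq J] in
theorem bxx_spec (l : List (VV J K e)) :
    (∀ g, bxx (aL (avv J e) g l) = g + bxx l) ∨ (∀ v ∈ l, ∃ i, v = Sum.inr i) := by
  induction l with
  | nil => right; simp
  | cons v l ih =>
    rcases v with ⟨j, h⟩ | i
    · left; intro g; simp [aL, avv, bxx]
    · rcases ih with h | h
      · left; intro g; simpa [aL, avv, bxx] using h g
      · right; intro v hv
        rcases List.mem_cons.1 hv with rfl | hv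
        · exact ⟨i, rfl⟩
        · exact h v hv

/-- the order on `WW` -/
def RR {L K : Type*} {e : ℕ} : WW L K e → WW L K e → Prop
  | Sum.inl A, Sum.inl B => B ⊂ A
  | Sum.inl _, Sum.inr _ => True
  | Sum.inr _, Sum.inl _ => False
  | Sum.inr i, Sum.inr j => j < i

theorem RR_asymm {L K : Type*} {e : ℕ} : ∀ u v : WW L K e, RR u v → ¬ RR v u := by
  rintro (A | i) (B | j) h h'
  · exact (h.trans h').ne rfl
  · exact h'
  · exact h
  · exact lt_asymm h h'

def NE {L K : Type*} {e : ℕ} (v : WW L K e) : Prop := ∀ A, v = Sum.inl A → A.Nonempty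

def R0 {L K : Type*} {e : ℕ} (l : List (WW L K e)) : Prop := l.Pairwise RR ∧ ∀ v ∈ l, NE v

theorem R0_cl {L K : Type*} {e : ℕ} : Cl (R0 (L := L) (K := K) (e := e)) :=
  fun _ _ h ⟨h1, h2⟩ => ⟨h1.sublist h, fun v hv => h2 v (h.subset hv)⟩

def EPP {L K : Type*} {e : ℕ} (l : List (WW L K e)) : Prop :=
  R0 l ∧ (∀ A, Sum.inl A ∈ l → ∀ i : L, ∃ a, (i, a) ∉ A) ∧ ∃ i, Sum.inr i ∉ l

theorem EPP_cl {L K : Type*} {e : ℕ} : Cl (EPP (L := L) (K := K) (e := e)) :=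
  fun _ _ h ⟨h1, h2, i, h3⟩ => ⟨R0_cl _ _ h h1, fun A hA => h2 A (h.subset hA), i, fun h' => h3 (h.subset h')⟩

omit [Fintype K] [Fintype L] in
theorem sh_ss {g : K} {A B : Finset (L × K)} (h : A ⊂ B) : sh g A ⊂ sh g B := by
  rw [Finset.ssubset_iff_exists_cons_subset] at *
  obtain ⟨⟨l, a⟩, h1, h2⟩ := h
  refine ⟨(l, g + a), by simpa [mem_sh] using h1, ?_⟩
  rintro ⟨l', a'⟩ h
  rw [mem_sh]
  apply h2
  rw [Finset.mem_cons] at h ⊢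
  rcases h with h | h
  · left; obtain ⟨rfl, rfl⟩ := Prod.mk.inj h; simp
  · right; rwa [mem_sh] at h

omit [Fintype K] [Fintype L] in
theorem R0_inv (g : K) (l : List (WW L K e)) (h : R0 l) : R0 (aL (aww L e) g l) := by
  obtain ⟨h1, h2⟩ := h
  refine ⟨?_, ?_⟩
  · refine List.Pairwise.map _ ?_ h1
    rintro (A | i) (B | j) h
    · exact sh_ss h
    · trivial
    · exact h
    · exact h
  · intro v hv
    obtain ⟨u, hu, rfl⟩ := List.mem_map.1 hv
    intro A hA
    rcases u with B | i
    · simp only [aww, Sum.inl.injEq] at hA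
      rw [← hA]
      exact (h2 _ hu B rfl).image _
    · simp [aww] at hA

omit [Fintype K] [Fintype L] in
theorem EPP_inv (g : K) (l : List (WW L K e)) (h : EPP l) : EPP (aL (aww L e) g l) := by
  obtain ⟨h1, h2, i, h3⟩ := h
  refine ⟨R0_inv g l h1, ?_, i, ?_⟩
  · intro A hA i
    obtain ⟨u, hu, hA⟩ := List.mem_map.1 hA
    rcases u with B | j
    · simp only [aww, Sum.inl.injEq] at hA
      obtain ⟨a, ha⟩ := h2 B hu i
      exact ⟨g + a, by rw [← hA, mem_sh]; simpa using ha⟩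
    · simp [aww] at hA
  · intro hA
    obtain ⟨u, hu, hA⟩ := List.mem_map.1 hA
    rcases u with B | j
    · simp [aww] at hA
    · simp only [aww] at hA; rw [hA] at hu; exact h3 hu

theorem EPP_len (l : List (WW L K e)) (h : EPP l) :
    l.length ≤ (e - 1) + Fintype.card L * (Fintype.card K - 1) := by
  obtain ⟨⟨h1, h2⟩, h3, i, h4⟩ := h
  let rk : WW L K e → ℕ := fun v => match v with
    | Sum.inl A => e + A.card
    | Sum.inr i => i
  set M := Fintype.card L * (Fintype.card K - 1) with hM
  have hcard : ∀ A, Sum.inl A ∈ l → A.card ≤ M := by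
    intro A hA
    choose a ha using h3 A hA
    have hd : Disjoint A (Finset.univ.image (fun i : L => (i, a i))) := by
      rw [Finset.disjoint_right]
      intro x hx
      obtain ⟨i, _, rfl⟩ := Finset.mem_image.1 hx
      exact ha i
    have hc : (Finset.univ.image (fun i : L => (i, a i))).card = Fintype.card L := by
      rw [Finset.card_image_of_injective _ (fun i j h => (Prod.mk.inj h).1)]; rfl
    have := Finset.card_le_univ (A ∪ Finset.univ.image (fun i : L => (i, a i)))
    rw [Finset.card_union_of_disjoint hd, hc, Fintype.card_prod] at this
    rw [hM, Nat.mul_sub, mul_one]; omega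
  have hnd : (l.map rk).Nodup := by
    have : (l.map rk).Pairwise (· > ·) := by
      refine List.Pairwise.map (R := RR) _ ?_ h1
      rintro (A | i) (B | j) h
      · have := Finset.card_lt_card h; simp only [rk]; omega
      · have := j.2; simp only [rk]; omega
      · exact h.elim
      · exact h
    exact this.imp (fun h => h.ne')
  have hsub : (l.map rk).toFinset ⊆ ((Finset.range (e + M + 1)).erase e).erase i := by
    intro x hx
    obtain ⟨v, hv, rfl⟩ := List.mem_map.1 (List.mem_toFinset.1 hx)
    have hi := i.2
    rcases v with A | j
    · have h5 := hcard A hv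
      have h6 := Finset.card_pos.2 (h2 _ hv A rfl)
      simp only [rk, Finset.mem_erase, Finset.mem_range]; omega
    · have h5 := j.2
      have h6 : j ≠ i := by rintro rfl; exact h4 hv
      have h7 : (j : ℕ) ≠ i := fun h => h6 (Fin.ext h)
      simp only [rk, Finset.mem_erase, Finset.mem_range]; omega
  have := Finset.card_le_card hsub
  rw [List.toFinset_card_of_nodup hnd, List.length_map, Finset.card_erase_of_mem, Finset.card_erase_of_mem,
    Finset.card_range] at this
  · omega
  · simp
  · have := i.2; simp; omega

end idx
end DCT


namespace DCT
open Finsupp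

section idx
variable {K : Type*} [Field K] [Fintype K] [DecidableEq K] {J L : Type*} [Fintype J] [DecidableEq J] [Fintype L]
  [DecidableEq L] {e : ℕ}

abbrev KK (L K : Type*) (e : ℕ) := Fin e ⊕ (L × K)

/-- functionals -/
def th {V A : Type*} [Fintype V] (x : V → A → ℝ) (a : A) (q : V → ℝ) : ℝ := ∑ v, q v * x v a

def Qs {V : Type*} [Fintype V] (l : List V) : Set (V → ℝ) :=
  {q | (∀ v, 0 ≤ q v) ∧ ∑ v, q v = 1 ∧ ∀ v, v ∉ l → q v = 0}

theorem th_aff {V A : Type*} [Fintype V] (x : V → A → ℝ) (a : A) : Aff (th x a) := by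
  intro q q' t
  simp only [th, Pi.add_apply, Pi.smul_apply, smul_eq_mul, Finset.mul_sum, ← Finset.sum_add_distrib]
  exact Finset.sum_congr rfl fun v _ => by ring

theorem Qs_convex {V : Type*} [Fintype V] (l : List V) : Convex ℝ (Qs l) := by
  rintro q ⟨h1, h2, h3⟩ q' ⟨h1', h2', h3'⟩ a b ha hb hab
  refine ⟨fun v => ?_, ?_, fun v hv => ?_⟩
  · have := h1 v; have := h1' v; simp only [Pi.add_apply, Pi.smul_apply, smul_eq_mul]; positivity
  · simp only [Pi.add_apply, Pi.smul_apply, smul_eq_mul, Finset.sum_add_distrib, ← Finset.mul_sum, h2, h2', mul_one, hab]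
  · simp [h3 v hv, h3' v hv]

theorem Qs_nonempty {V : Type*} [Fintype V] (l : List V) (hl : l ≠ []) : (Qs l).Nonempty := by
  classical
  obtain ⟨v, l', rfl⟩ := List.exists_cons_of_ne_nil hl
  refine ⟨Pi.single v 1, fun u => ?_, by simp, fun u hu => ?_⟩
  · by_cases h : u = v
    · subst h; simp
    · simp [h]
  · have : u ≠ v := by rintro rfl; simp at hu
    simp [this]

theorem Qs_mono {V : Type*} [Fintype V] {l l' : List V} (h : l' ⊆ l) : Qs l' ⊆ Qs l :=
  fun _ ⟨h1, h2, h3⟩ => ⟨h1, h2, fun v hv => h3 v fun h' => hv (h h')⟩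

/-- open sets -/
def OO {V : Type*} [Fintype V] (x : V → KK L K e → ℝ) : WW L K e → (V → ℝ) → Prop
  | Sum.inl A, q => ∀ a ∈ A, 0 < th x (Sum.inr a) q
  | Sum.inr i, q => 0 < th x (Sum.inl i) q

omit [Field K] [Fintype K] [DecidableEq K] [Fintype L] [DecidableEq L] in
theorem OO_HO {V : Type*} [Fintype V] (x : V → KK L K e → ℝ) : HO (th x) (OO x) := by
  classical
  rintro (A | i)
  · refine ⟨A.image (fun a => (Sum.inr a, 1)), fun q => ?_⟩
    simp only [OO, Finset.forall_mem_image, one_mul]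
  · refine ⟨{(Sum.inl i, 1)}, fun q => ?_⟩
    simp [OO]

def Gam {V : Type*} [Fintype V] (x : V → KK L K e → ℝ) (l : List V) (m : List (WW L K e)) : Prop :=
  m = [] ∨ Zc R0 (OO x) (Qs l) m

omit [Fintype K] [DecidableEq K] [Fintype L] [DecidableEq L] in
theorem local_cone {V : Type*} [Fintype V] (x : V → KK L K e → ℝ) (q : V → ℝ) (M : WW L K e) (hM : OO x M q) (hNE : NE M)
    (h : ∀ v, OO x v q → NE v → v = M ∨ RR M v) (m : ℕ) : Fill K (Zp R0 (OO x) q) m := by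
  refine fill_headcone M ?_ m
  rintro l ⟨⟨h1, h2⟩, h3⟩
  by_cases hMl : M ∈ l
  · left
    rcases l with _ | ⟨v, l'⟩
    · simp at hMl
    · have hv : v = M := by
        by_contra hv
        have hMl' : M ∈ l' := by
          rcases List.mem_cons.1 hMl with h | h
          · exact absurd h.symm hv
          · exact h
        have r1 := (List.pairwise_cons.1 h1).1 M hMl'
        rcases h v (h3 v (by simp)) (h2 v (by simp)) with h4 | h4
        · exact hv h4
        · exact RR_asymm _ _ r1 h4
      subst hv
      refine ⟨l', rfl, fun h5 => ?_⟩
      have r1 := (List.pairwise_cons.1 h1).1 v h5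
      exact RR_asymm _ _ r1 r1
  · right
    refine ⟨hMl, ⟨?_, ?_⟩, ?_⟩
    · refine List.pairwise_cons.2 ⟨fun v hv => ?_, h1⟩
      rcases h v (h3 v hv) (h2 v hv) with h4 | h4
      · subst h4; exact absurd hv hMl
      · exact h4
    · intro v hv
      rcases List.mem_cons.1 hv with rfl | hv
      · exact hNE
      · exact h2 v hv
    · intro v hv
      rcases List.mem_cons.1 hv with rfl | hv
      · exact hM
      · exact h3 v hv

theorem Gam_fill {V : Type*} [Fintype V] (x : V → KK L K e → ℝ) (l : List V) (hl : l ≠ [])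
    (hNZ : ∀ q ∈ Qs l, ∃ a, 0 < th x a q) (m : ℕ) : Fill K (Gam x l) m := by
  classical
  have hQ := Qs_nonempty l hl
  refine Fill.congr (P := Zc R0 (OO x) (Qs l)) ?_ ?_
  · refine nerve2 R0_cl ⟨by simp, by simp⟩ (th_aff x) (OO_HO x) Finset.univ _ m (Qs_convex l) hQ (by simp) ?_
    intro q hq m' _
    obtain ⟨a, ha⟩ := hNZ q hq
    by_cases hA : (Finset.univ.filter (fun a : L × K => 0 < th x (Sum.inr a) q)).Nonempty
    · refine local_cone x q (Sum.inl (Finset.univ.filter (fun a : L × K => 0 < th x (Sum.inr a) q))) ?_ ?_ ?_ m'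
      · intro a ha; exact (Finset.mem_filter.1 ha).2
      · intro A hA'; rw [← Sum.inl_injective hA']; exact hA
      · rintro (B | j) h1 h2
        · by_cases hB : B = Finset.univ.filter (fun a : L × K => 0 < th x (Sum.inr a) q)
          · left; rw [← hB]
          · right
            refine Finset.ssubset_iff_subset_ne.2 ⟨fun a ha => ?_, hB⟩
            simpa using h1 a ha
        · right; trivial
    · have hA' : ∀ a : L × K, ¬ 0 < th x (Sum.inr a) q := by
        intro a ha; exact hA ⟨a, by simpa using ha⟩
      have hJ : (Finset.univ.filter (fun i : Fin e => 0 < th x (Sum.inl i) q)).Nonempty := by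
        rcases a with i | a
        · exact ⟨i, by simpa using ha⟩
        · exact absurd ha (hA' a)
      have hmx := Finset.max'_mem _ hJ
      refine local_cone x q (Sum.inr (Finset.max' _ hJ)) (Finset.mem_filter.1 hmx).2 (fun A h => by simp at h) ?_ m'
      rintro (B | j) h1 h2
      · obtain ⟨a, ha⟩ := h2 B rfl
        exact absurd (h1 a ha) (hA' a)
      · have := Finset.le_max' _ j (by rw [Finset.mem_filter]; exact ⟨Finset.mem_univ _, h1⟩ : j ∈ Finset.univ.filter (fun i : Fin e => 0 < th x (Sum.inl i) q))
        rcases this.eq_or_lt with h | h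
        · left; rw [← h]
        · right; exact h
  · intro l'
    refine ⟨Or.inr, ?_⟩
    rintro (rfl | h)
    · obtain ⟨q, hq⟩ := hQ
      exact ⟨⟨by simp, by simp⟩, q, hq, by simp⟩
    · exact h

omit [DecidableEq K] [Fintype L] [DecidableEq L] in
theorem Gam_EPP {V : Type*} [Fintype V] (x : V → KK L K e → ℝ) (he : 0 < e)
    (x2 : ∀ v l, ∑ a, x v (Sum.inr (l, a)) = 0) (x3 : ∀ v, ∑ i, x v (Sum.inl i) = 0)
    (l : List V) (m : List (WW L K e)) (h : Gam x l m) : EPP m := by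
  have : NeZero e := ⟨he.ne'⟩
  rcases h with rfl | ⟨h1, q, hq, h2⟩
  · exact ⟨⟨by simp, by simp⟩, by simp, ⟨0, he⟩, by simp⟩
  · have hs : ∀ l, ∑ a, th x (Sum.inr (l, a)) q = 0 := by
      intro l
      simp only [th]
      rw [Finset.sum_comm]
      simp [← Finset.mul_sum, x2]
    have hs' : ∑ i, th x (Sum.inl i) q = 0 := by
      simp only [th]
      rw [Finset.sum_comm]
      simp [← Finset.mul_sum, x3]
    refine ⟨h1, ?_, ?_⟩
    · intro A hA i
      by_contra! hcon
      have : 0 < ∑ a, th x (Sum.inr (i, a)) q :=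
        Finset.sum_pos (fun a _ => h2 _ hA _ (hcon a)) ⟨0, Finset.mem_univ _⟩
      exact this.ne' (hs i)
    · by_contra! hcon
      have : 0 < ∑ i, th x (Sum.inl i) q :=
        Finset.sum_pos (fun a _ => h2 _ (hcon a)) ⟨0, Finset.mem_univ _⟩
      exact this.ne' hs'

omit [Fintype L] in
theorem Gam_inv (x : VV J K e → KK L K e → ℝ)
    (x1 : ∀ g v l a, x (avv J e g v) (Sum.inr (l, g + a)) = x v (Sum.inr (l, a)))
    (x1' : ∀ g v i, x (avv J e g v) (Sum.inl i) = x v (Sum.inl i))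
    (g : K) (l : List (VV J K e)) (m : List (WW L K e)) (h : Gam x l m) :
    Gam x (aL (avv J e) g l) (aL (aww L e) g m) := by
  have hact := avv_act (J := J) (K := K) (e := e)
  have hinv1 : ∀ v, avv J e g (avv J e (-g) v) = v := fun v => by rw [← hact.add, add_neg_cancel, hact.zero]
  have hinv2 : ∀ v, avv J e (-g) (avv J e g v) = v := fun v => by rw [← hact.add, neg_add_cancel, hact.zero]
  let σ : VV J K e ≃ VV J K e := ⟨avv J e g, avv J e (-g), hinv2, hinv1⟩
  rcases h with rfl | ⟨h1, q, ⟨q1, q2, q3⟩, h2⟩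
  · left; rfl
  · right
    refine ⟨R0_inv g m h1, fun v => q (avv J e (-g) v), ⟨fun v => q1 _, ?_, ?_⟩, ?_⟩
    · rw [← q2]
      exact Equiv.sum_comp σ.symm q
    · intro v hv
      apply q3
      intro h
      apply hv
      rw [← hinv1 v]
      exact List.mem_map_of_mem h
    · have key : ∀ a, th x a (fun v => q (avv J e (-g) v)) = ∑ v, q v * x (avv J e g v) a := by
        intro a
        rw [th, ← Equiv.sum_comp σ]
        refine Finset.sum_congr rfl fun v _ => ?_
        simp only [σ, Equiv.coe_fn_mk, hinv2]
      intro v hv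
      obtain ⟨u, hu, rfl⟩ := List.mem_map.1 hv
      have := h2 u hu
      rcases u with A | i
      · rintro ⟨l, a⟩ ha
        rw [mem_sh] at ha
        have h3 := this _ ha
        rw [key]
        refine h3.trans_eq (Finset.sum_congr rfl fun v _ => ?_)
        rw [← x1 g, add_neg_cancel_left]
      · change 0 < th _ _ _
        rw [key]
        refine this.trans_eq (Finset.sum_congr rfl fun v _ => ?_)
        rw [x1']

end idx
end DCT


namespace DCT
open Finsupp

section idx
variable {p : ℕ} [Fact p.Prime] {K : Type*} [Field K] [Algebra (ZMod p) K] [Fintype K] [DecidableEq K] {J L : Type*}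
  [Fintype J] [DecidableEq J] [Fintype L] [DecidableEq L] {e : ℕ}

theorem list_inr {A B : Type*} (l : List (A ⊕ B)) (h : ∀ v ∈ l, ∃ i, v = Sum.inr i) : ∃ s : List B, l = s.map Sum.inr := by
  induction l with
  | nil => exact ⟨[], rfl⟩
  | cons v l ih =>
    obtain ⟨s, hs⟩ := ih fun v hv => h v (List.mem_cons_of_mem _ hv)
    obtain ⟨i, rfl⟩ := h v (by simp)
    exact ⟨i :: s, by simp [hs]⟩

def InfL {e : ℕ} (s : List (Fin e)) : Prop := s.Pairwise (· > ·) ∧ ∃ i, i ∉ s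

omit [Fintype K] [Fintype L] in
/-- fixed lists are the lists at infinity -/
theorem EPP_fix (i0 : L ⊕ Unit) (l : List (WW L K e)) (h : EPP l) :
    (∀ g, aL (aww L e) g l = l) ↔ ∃ s, InfL s ∧ l = s.map Sum.inr := by
  constructor
  · intro hf
    rw [aL_fix] at hf
    have h1 : ∀ v ∈ l, ∃ i, v = Sum.inr i := by
      rintro (A | i) hv
      · exfalso
        obtain ⟨⟨i, a⟩, ha⟩ := h.1.2 _ hv A rfl
        obtain ⟨b, hb⟩ := h.2.1 A hv i
        have := hf _ hv (b - a)
        simp only [aww, Sum.inl.injEq] at this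
        apply hb
        rw [← this, mem_sh]; simpa using ha
      · exact ⟨i, rfl⟩
    obtain ⟨s, rfl⟩ := list_inr l h1
    refine ⟨s, ⟨?_, ?_⟩, rfl⟩
    · have := h.1.1
      rw [List.pairwise_map] at this
      exact this
    · obtain ⟨i, hi⟩ := h.2.2
      exact ⟨i, fun h => hi (List.mem_map_of_mem h)⟩
  · rintro ⟨s, _, rfl⟩ g
    simp [aL, aww]

omit [Field K] [Fintype K] [DecidableEq K] [Fintype L] [DecidableEq L] in
theorem InfL_EPP (s : List (Fin e)) (h : InfL s) : EPP (L := L) (K := K) (s.map Sum.inr) := by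
  obtain ⟨h1, i, hi⟩ := h
  refine ⟨⟨?_, ?_⟩, ?_, i, ?_⟩
  · rw [List.pairwise_map]; exact h1
  · intro v hv A hA; subst hA; simp at hv
  · intro A hA; simp at hA
  · simpa using hi

omit [Field K] [Fintype L] in
theorem inf_pt (x : VV J K e → KK L K e → ℝ)
    (x5 : ∀ j i, x (Sum.inr j) (Sum.inl i) = (if i = j then (e:ℝ) else 0) - 1)
    (s : List (Fin e)) (h : InfL s) : Gam x (s.map Sum.inr) (s.map Sum.inr) := by
  obtain ⟨h1, i0, hi0⟩ := h
  by_cases hs : s = []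
  · left; simp [hs]
  · right
    have hnd : s.Nodup := h1.imp (fun h => h.ne')
    have hR : R0 (L := L) (K := K) (s.map Sum.inr) := (InfL_EPP s ⟨h1, i0, hi0⟩).1
    have hpos : 0 < s.length := List.length_pos_iff.2 hs
    have hlt : s.length < e := by
      have h2 : s.toFinset ⊆ Finset.univ.erase i0 := by
        intro i hi
        rw [List.mem_toFinset] at hi
        refine Finset.mem_erase.2 ⟨?_, Finset.mem_univ _⟩
        rintro rfl; exact hi0 hi
      have h3 := Finset.card_le_card h2
      rw [List.toFinset_card_of_nodup hnd, Finset.card_erase_of_mem (Finset.mem_univ _), Finset.card_univ,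
        Fintype.card_fin] at h3
      have := i0.2
      omega
    have hsum : ∀ f : Fin e → ℝ, ∑ j, (if j ∈ s then ((s.length:ℝ))⁻¹ else 0) * f j = (s.length:ℝ)⁻¹ * ∑ j ∈ s.toFinset, f j := by
      intro f
      rw [Finset.mul_sum, ← Finset.sum_subset (Finset.subset_univ s.toFinset)]
      · refine Finset.sum_congr rfl fun j hj => ?_
        rw [if_pos (List.mem_toFinset.1 hj)]
      · intro j _ hj
        rw [if_neg (fun h => hj (List.mem_toFinset.2 h)), zero_mul]
    have hl0 : (0:ℝ) < s.length := by exact_mod_cast hpos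
    refine ⟨hR, Sum.elim (fun _ => 0) (fun j => if j ∈ s then ((s.length:ℝ))⁻¹ else 0), ⟨?_, ?_, ?_⟩, ?_⟩
    · rintro (v | j)
      · simp
      · simp only [Sum.elim_inr]; split_ifs <;> positivity
    · rw [Fintype.sum_sum_type]
      simp only [Sum.elim_inl, Sum.elim_inr, Finset.sum_const_zero, zero_add]
      have := hsum (fun _ => 1)
      simp only [mul_one] at this
      rw [this, Finset.sum_const, List.toFinset_card_of_nodup hnd, nsmul_eq_mul, mul_one, inv_mul_cancel₀ hl0.ne']
    · rintro (v | j) hv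
      · simp
      · simp only [Sum.elim_inr]
        rw [if_neg]
        intro h; exact hv (List.mem_map_of_mem h)
    · intro v hv
      obtain ⟨i, hi, rfl⟩ := List.mem_map.1 hv
      change 0 < th _ _ _
      rw [th, Fintype.sum_sum_type]
      simp only [Sum.elim_inl, Sum.elim_inr, zero_mul, Finset.sum_const_zero, zero_add, x5]
      rw [hsum]
      refine mul_pos (by positivity) ?_
      rw [Finset.sum_sub_distrib, Finset.sum_ite_eq, if_pos (List.mem_toFinset.2 hi), Finset.sum_const,
        List.toFinset_card_of_nodup hnd, nsmul_eq_mul, mul_one]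
      have : (s.length:ℝ) < e := by exact_mod_cast hlt
      linarith

theorem index_thm {ι : Type*} [Fintype ι]
    (bs : ι → K) (hb : LinearIndependent (ZMod p) bs) (hspan : ⊤ ≤ Submodule.span (ZMod p) (Set.range bs))
    (he : 0 < e) (x : VV J K e → KK L K e → ℝ)
    (x1 : ∀ g v l a, x (avv J e g v) (Sum.inr (l, g + a)) = x v (Sum.inr (l, a)))
    (x1' : ∀ g v i, x (avv J e g v) (Sum.inl i) = x v (Sum.inl i))
    (x2 : ∀ v l, ∑ a, x v (Sum.inr (l, a)) = 0) (x3 : ∀ v, ∑ i, x v (Sum.inl i) = 0)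
    (x4 : ∀ j a, x (Sum.inr j) (Sum.inr a) = 0)
    (x5 : ∀ j i, x (Sum.inr j) (Sum.inl i) = (if i = j then (e:ℝ) else 0) - 1)
    (Z : List (VV J K e) → Prop) (hZcl : Cl Z) (hZinv : ∀ g l, Z l → Z (aL (avv J e) g l))
    (hZinf : ∀ s : List (Fin e), (∃ i, i ∉ s) → Z (s.map Sum.inr))
    (hfill : ∀ m ≤ (e - 1) + Fintype.card L * (Fintype.card K - 1), Fill K Z m)
    (hNZ : ∀ l, Z l → l ≠ [] → ∀ q ∈ Qs l, ∃ a, 0 < th x a q) : False := by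
  classical
  have hallinr : ∀ l : List (VV J K e), (∀ v ∈ l, ∃ i, v = Sum.inr i) → (∀ g, aL (avv J e) g l = l) ∧
      ∀ m, Gam x l m → ∀ g, aL (aww L e) g m = m := by
    intro l hl
    refine ⟨?_, ?_⟩
    · obtain ⟨s, rfl⟩ := list_inr l hl
      intro g; simp [aL, avv]
    · rintro m (rfl | ⟨h1, q, ⟨q1, q2, q3⟩, h2⟩)
      · intro g; rfl
      · have hm : ∀ v ∈ m, ∃ i, v = Sum.inr i := by
          rintro (A | i) hv
          · exfalso
            obtain ⟨a, ha⟩ := h1.2 _ hv A rfl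
            have := h2 _ hv a ha
            have h0 : th x (Sum.inr a) q = 0 := by
              refine Finset.sum_eq_zero fun v _ => ?_
              by_cases hvl : v ∈ l
              · obtain ⟨i, rfl⟩ := hl v hvl
                rw [x4, mul_zero]
              · rw [q3 v hvl, zero_mul]
            rw [h0] at this
            exact lt_irrefl _ this
          · exact ⟨i, rfl⟩
        obtain ⟨s, rfl⟩ := list_inr m hm
        intro g; simp [aL, aww]
  let Pr : List (VV J K e) → Prop := fun l => ∃ s, InfL s ∧ l = s.map Sum.inr
  let ρ : VV J K e → WW L K e := Sum.elim (fun _ => Sum.inl ∅) Sum.inr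
  let i0 : Fin e := ⟨0, he⟩
  let c : WW L K e → VV J K e := Sum.elim (fun _ => Sum.inr i0) Sum.inr
  obtain ⟨Ψ, hΨ⟩ := carrier_map (K := K) (avv_act (J := J) (K := K) (e := e)) (aww_act (L := L) (K := K) (e := e)) hZcl hZinv
    (Gam x) (by
      rintro l l' hs m (rfl | ⟨h1, q, hq, h2⟩)
      · left; rfl
      · exact Or.inr ⟨h1, q, Qs_mono hs.subset hq, h2⟩)
    (Gam_inv x x1 x1') (fun l hl hne m => Gam_fill x l hne (hNZ l hl hne) m) bxx
    (fun l => by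
      rcases bxx_spec l with h | h
      · exact Or.inl h
      · exact Or.inr (hallinr l h))
    ρ Pr (by
      rintro l l' hs ⟨s, ⟨h1, i, hi⟩, rfl⟩
      obtain ⟨s', hs', rfl⟩ := List.sublist_map_iff.1 hs
      exact ⟨s', ⟨h1.sublist hs', i, fun h => hi (hs'.subset h)⟩, rfl⟩)
    ⟨[], ⟨by simp, i0, by simp⟩, rfl⟩
    (by
      rintro l ⟨s, hs, rfl⟩
      have := inf_pt x x5 s hs
      simpa [ρ] using this)
    (by
      rintro l ⟨s, hs, rfl⟩
      refine hallinr _ ?_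
      intro v hv
      obtain ⟨i, _, rfl⟩ := List.mem_map.1 hv
      exact ⟨i, rfl⟩)
    ((e - 1) + Fintype.card L * (Fintype.card K - 1) + 1)
  have hfin : Finite (BT (EPP (L := L) (K := K) (e := e))) := by
    have := List.finite_length_le (WW L K e) ((e - 1) + Fintype.card L * (Fintype.card K - 1))
    exact (this.subset fun l hl => EPP_len l hl).to_subtype
  have := Fintype.ofFinite (BT (EPP (L := L) (K := K) (e := e)))
  let w : BT (EPP (L := L) (K := K) (e := e)) → K := fun b =>
    if ∀ g, aL (aww L e) g b.1 = b.1 then (-1) ^ b.1.length else 0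
  have hsum := lefschetz (avv_act (J := J) (K := K) (e := e)) (aww_act (L := L) (K := K) (e := e)) bs hb hspan hZcl hZinv
    EPP_cl EPP_inv _ EPP_len hfill Ψ
    (fun l h1 h2 => S_mono (fun m _ h => Gam_EPP x he x2 x3 l m h) (hΨ l h1 h2).1)
    (fun l h1 h2 => (hΨ l h1 h2).2.1)
    (fun g l h1 h2 => (hΨ l h1 h2).2.2.1 g)
    c (by
      intro l h1 h2
      have hlen := EPP_len l h1
      obtain ⟨s, hs, rfl⟩ := (EPP_fix (Sum.inr ()) l h1).1 h2
      have e1 : (s.map Sum.inr : List (WW L K e)).map c = s.map Sum.inr := by simp [c]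
      rw [e1]
      have hZ := hZinf s hs.2
      refine ⟨hZ, ?_, ?_⟩
      · intro g; simp [aL, avv]
      · rw [(hΨ _ hZ (by simpa using hlen.trans (Nat.le_succ _))).2.2.2 ⟨s, hs, rfl⟩]
        simp [ρ])
    w (fun b h => if_pos h) (fun b h => if_neg h)
  have hval : ∑ b, w b = ∑ A ∈ (Finset.univ : Finset (Fin e)).powerset.erase Finset.univ, (-1 : K) ^ A.card := by
    simp only [w]
    rw [← Finset.sum_filter]
    symm
    have hI : ∀ A ∈ (Finset.univ : Finset (Fin e)).powerset.erase Finset.univ, InfL (A.sort (· ≥ ·)) := by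
      intro A hA
      refine ⟨?_, ?_⟩
      · exact Finset.sortedGT_sort A |>.pairwise
      · by_contra! h
        apply Finset.ne_of_mem_erase hA
        ext i; simpa using h i
    refine Finset.sum_bij (fun A hA => ⟨(A.sort (· ≥ ·)).map Sum.inr, InfL_EPP _ (hI A hA)⟩) ?_ ?_ ?_ ?_
    · intro A hA
      rw [Finset.mem_filter]
      refine ⟨Finset.mem_univ _, fun g => ?_⟩
      simp only [aL, List.map_map]
      rfl
    · intro A hA B hB h
      have h2 := List.map_injective_iff.2 Sum.inr_injective (congrArg Subtype.val h)
      have h3 := congrArg List.toFinset h2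
      rwa [Finset.sort_toFinset, Finset.sort_toFinset] at h3
    · rintro ⟨l, hl⟩ hl2
      obtain ⟨s, hs, rfl⟩ := (EPP_fix (Sum.inr ()) l hl).1 (Finset.mem_filter.1 hl2).2
      have hnd : s.Nodup := hs.1.imp (fun h => h.ne')
      refine ⟨s.toFinset, ?_, ?_⟩
      · refine Finset.mem_erase.2 ⟨fun h => ?_, by simp⟩
        obtain ⟨i, hi⟩ := hs.2
        apply hi
        rw [← List.mem_toFinset, h]; simp
      · apply Subtype.ext
        simp only
        congr 1
        refine List.Perm.eq_of_pairwise' (r := (· ≥ ·)) ?_ ?_ ?_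
        · exact Finset.pairwise_sort _ _
        · exact hs.1.imp (fun h => h.le)
        · exact (Finset.sort_perm_toList _ _).trans (List.toFinset_toList hnd)
    · intro A hA; simp
  have h1 : ∑ A ∈ (Finset.univ : Finset (Fin e)).powerset, (-1 : ℤ) ^ A.card = 0 := by
    rw [Finset.sum_powerset_neg_one_pow_card, if_neg]
    intro h
    have := Finset.mem_univ i0
    rw [h] at this; simp at this
  have h2 : ∑ A ∈ (Finset.univ : Finset (Fin e)).powerset, (-1 : K) ^ A.card = 0 := by
    have := congrArg (Int.cast : ℤ → K) h1
    simpa using this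
  rw [← Finset.add_sum_erase _ _ (Finset.mem_powerset_self Finset.univ), ← hval, hsum, add_zero] at h2
  exact pow_ne_zero _ (neg_ne_zero.2 one_ne_zero) h2

end idx
end DCT

open scoped InnerProductSpace

namespace DCT

section geo
variable {d : ℕ} {I : Type*} [Fintype I] [DecidableEq I] {v : I → EuclideanSpace ℝ (Fin d)} {c : I → ℝ}

theorem core (gp1 : ∀ s : Finset I, s.card = d → ∃! x, ∀ i ∈ s, ⟪x, v i⟫_ℝ = c i) (hN : d + 1 ≤ Fintype.card I)
    (S : Finset I) (hS : S.Nonempty) (hcard : S.card ≤ d + 1) (y : I → ℝ) (x0 : EuclideanSpace ℝ (Fin d))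
    (hpos : ∀ i ∈ S, 0 < y i * (c i - ⟪x0, v i⟫_ℝ)) (hy : ∑ i ∈ S, y i • v i = 0) :
    S.card = d + 1 ∧
    x0 ∈ interior (convexHull ℝ {x : EuclideanSpace ℝ (Fin d) | ∃ i ∈ S, ∀ j ∈ S, j ≠ i → ⟪x, v j⟫_ℝ = c j}) := by
  have hy' : ∀ z, ∑ i ∈ S, y i * ⟪z, v i⟫_ℝ = 0 := by
    intro z
    have : ⟪z, ∑ i ∈ S, y i • v i⟫_ℝ = 0 := by rw [hy, inner_zero_right]
    rw [inner_sum] at this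
    simpa [inner_smul_right] using this
  have hγ : ∀ z, ∑ i ∈ S, y i * (c i - ⟪z, v i⟫_ℝ) = ∑ i ∈ S, y i * c i := by
    intro z
    simp only [mul_sub, Finset.sum_sub_distrib, hy' z, sub_zero]
  have hγpos : 0 < ∑ i ∈ S, y i * c i := by
    rw [← hγ x0]; exact Finset.sum_pos hpos hS
  have hSc : S.card = d + 1 := by
    by_contra hne
    obtain ⟨s, hs1, hs2⟩ := Finset.exists_superset_card_eq (s := S) (n := d) (by omega) (by omega)
    obtain ⟨X, hX, _⟩ := gp1 s hs2
    have := hγ X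
    rw [Finset.sum_eq_zero] at this
    · exact hγpos.ne this
    · intro i hi
      rw [hX i (hs1 hi), sub_self, mul_zero]
  refine ⟨hSc, ?_⟩
  set γ := ∑ i ∈ S, y i * c i with hγd
  let U : Set (EuclideanSpace ℝ (Fin d)) := {z | ∀ i ∈ S, 0 < y i * (c i - ⟪z, v i⟫_ℝ)}
  have hU : IsOpen U := by
    have : U = ⋂ i ∈ S, {z | 0 < y i * (c i - ⟪z, v i⟫_ℝ)} := by ext z; simp [U]
    rw [this]
    refine isOpen_biInter_finset fun i _ => isOpen_lt continuous_const ?_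
    fun_prop
  refine mem_interior.2 ⟨U, ?_, hU, hpos⟩
  intro z hz
  have hX : ∀ i, ∃ X : EuclideanSpace ℝ (Fin d), i ∈ S → ∀ j ∈ S, j ≠ i → ⟪X, v j⟫_ℝ = c j := by
    intro i
    by_cases hi : i ∈ S
    · obtain ⟨X, hX, _⟩ := gp1 (S.erase i) (by rw [Finset.card_erase_of_mem hi, hSc]; rfl)
      exact ⟨X, fun _ j hj hji => hX j (Finset.mem_erase.2 ⟨hji, hj⟩)⟩
    · exact ⟨0, fun h => absurd h hi⟩
  choose X hX using hX
  have hXγ : ∀ j ∈ S, y j * (c j - ⟪X j, v j⟫_ℝ) = γ := by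
    intro j hj
    rw [← hγ (X j)]
    symm
    refine Finset.sum_eq_single_of_mem j hj ?_
    intro i hi hij
    rw [hX j hj i hi hij, sub_self, mul_zero]
  let μ : I → ℝ := fun i => y i * (c i - ⟪z, v i⟫_ℝ) / γ
  have hμ1 : ∑ i ∈ S, μ i = 1 := by
    simp only [μ]
    rw [← Finset.sum_div, hγ z, div_self hγpos.ne']
  have hzX : ∀ j ∈ S, ⟪∑ i ∈ S, μ i • X i, v j⟫_ℝ = ⟪z, v j⟫_ℝ := by
    intro j hj
    have hyj : y j ≠ 0 := by
      intro h
      have := hz j hj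
      rw [h, zero_mul] at this
      exact lt_irrefl _ this
    have e1 : ⟪∑ i ∈ S, μ i • X i, v j⟫_ℝ - c j = ∑ i ∈ S, μ i * (⟪X i, v j⟫_ℝ - c j) := by
      rw [sum_inner]
      simp only [inner_smul_left, mul_sub, Finset.sum_sub_distrib, ← Finset.sum_mul, hμ1, one_mul]
      simp
    have e2 : ∑ i ∈ S, μ i * (⟪X i, v j⟫_ℝ - c j) = μ j * (⟪X j, v j⟫_ℝ - c j) := by
      refine Finset.sum_eq_single_of_mem j hj ?_
      intro i hi hij
      rw [hX i hi j hj (Ne.symm hij), sub_self, mul_zero]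
    have e3 : μ j * (⟪X j, v j⟫_ℝ - c j) = -(c j - ⟪z, v j⟫_ℝ) := by
      have h1 := hXγ j hj
      have h2 : ⟪X j, v j⟫_ℝ - c j = -(γ / y j) := by
        rw [← h1]; field_simp; ring
      rw [h2]; simp only [μ]; field_simp
    linarith
  obtain ⟨i0, hi0⟩ := hS
  have hzeq : ∑ i ∈ S, μ i • X i = z := by
    obtain ⟨X0, hX0, huniq⟩ := gp1 (S.erase i0) (by rw [Finset.card_erase_of_mem hi0, hSc]; rfl)
    have h1 := huniq (X0 + (∑ i ∈ S, μ i • X i - z)) (by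
      intro j hj
      show ⟪_, _⟫_ℝ = _
      rw [inner_add_left, inner_sub_left, hzX j (Finset.mem_of_mem_erase hj), sub_self, add_zero]
      exact hX0 j hj)
    have h2 : ∑ i ∈ S, μ i • X i - z = 0 := by simpa using h1
    exact sub_eq_zero.1 h2
  rw [← hzeq]
  refine (convex_convexHull ℝ _).sum_mem (fun i hi => ?_) hμ1 (fun i hi => subset_convexHull ℝ _ ⟨i, hi, hX i hi⟩)
  exact (div_pos (hz i hi) hγpos).le

/-- extra direction -/
theorem ker_dir (s : Finset I) (hs : s.card < d) : ∃ w : EuclideanSpace ℝ (Fin d), w ≠ 0 ∧ ∀ i ∈ s, ⟪w, v i⟫_ℝ = 0 := by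
  let f : EuclideanSpace ℝ (Fin d) →ₗ[ℝ] (s → ℝ) := LinearMap.pi fun i => (innerₛₗ ℝ (v i.1))
  have : LinearMap.ker f ≠ ⊥ := by
    apply LinearMap.ker_ne_bot_of_finrank_lt
    simpa using hs
  obtain ⟨w, hw, hw0⟩ := Submodule.exists_mem_ne_zero_of_ne_bot this
  refine ⟨w, hw0, fun i hi => ?_⟩
  have := congrFun (LinearMap.mem_ker.1 hw) ⟨i, hi⟩
  rw [real_inner_comm]
  simpa [f] using this

theorem gen_lem (gp1 : ∀ s : Finset I, s.card = d → ∃! x, ∀ i ∈ s, ⟪x, v i⟫_ℝ = c i)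
    (gp2 : ∀ s : Finset I, s.card = d + 1 → ¬ ∃ x, ∀ i ∈ s, ⟪x, v i⟫_ℝ = c i)
    (hN : d + 1 ≤ Fintype.card I) (T : Finset I) (k : I) (hk : k ∉ T) (q : EuclideanSpace ℝ (Fin d))
    (hq : ∀ i ∈ T, ⟪q, v i⟫_ℝ = c i) (hqk : ⟪q, v k⟫_ℝ = c k) :
    ∃ q' : EuclideanSpace ℝ (Fin d), (∀ i ∈ T, ⟪q', v i⟫_ℝ = c i) ∧ ⟪q', v k⟫_ℝ ≠ c k := by
  have hall : ∀ i ∈ insert k T, ⟪q, v i⟫_ℝ = c i := by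
    intro i hi
    rcases Finset.mem_insert.1 hi with rfl | hi
    · exact hqk
    · exact hq i hi
  have hc : (insert k T).card ≤ d := by
    by_contra! h
    obtain ⟨s, hs1, hs2⟩ := Finset.exists_subset_card_eq (s := insert k T) (n := d + 1) h
    exact gp2 s hs2 ⟨q, fun i hi => hall i (hs1 hi)⟩
  obtain ⟨s, hs1, hs2⟩ := Finset.exists_superset_card_eq (s := insert k T) (n := d) hc (by omega)
  obtain ⟨X, hX, huniq⟩ := gp1 s hs2
  have hks : k ∈ s := hs1 (Finset.mem_insert_self _ _)
  have hpos : 0 < s.card := Finset.card_pos.2 ⟨k, hks⟩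
  obtain ⟨w, hw0, hw⟩ := ker_dir (v := v) (s.erase k) (by rw [Finset.card_erase_of_mem hks]; omega)
  refine ⟨X + w, ?_, ?_⟩
  · intro i hi
    have hi' : i ∈ s := hs1 (Finset.mem_insert_of_mem hi)
    have : i ≠ k := by rintro rfl; exact hk hi
    rw [inner_add_left, hX i hi', hw i (Finset.mem_erase.2 ⟨this, hi'⟩), add_zero]
  · intro h
    have h1 := huniq (X + w) (by
      intro i hi
      by_cases hik : i = k
      · subst hik; exact h
      · show ⟪_, _⟫_ℝ = _
        rw [inner_add_left, hX i hi, hw i (Finset.mem_erase.2 ⟨hik, hi⟩), add_zero])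
    exact hw0 (by simpa using h1)

/-- the case of a single simplex -/
theorem single_simplex (gp1 : ∀ s : Finset I, s.card = d → ∃! x, ∀ i ∈ s, ⟪x, v i⟫_ℝ = c i)
    (gp2 : ∀ s : Finset I, s.card = d + 1 → ¬ ∃ x, ∀ i ∈ s, ⟪x, v i⟫_ℝ = c i)
    (S : Finset I) (hS : S.card = d + 1) :
    ∃ x0 : EuclideanSpace ℝ (Fin d), x0 ∈ interior (convexHull ℝ
      {x : EuclideanSpace ℝ (Fin d) | ∃ i ∈ S, ∀ j ∈ S, j ≠ i → ⟪x, v j⟫_ℝ = c j}) := by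
  have hN : d + 1 ≤ Fintype.card I := hS ▸ Finset.card_le_univ S
  have hSn : S.Nonempty := Finset.card_pos.1 (by omega)
  obtain ⟨y, hy, i1, hi1, hy1⟩ : ∃ y : I → ℝ, ∑ i ∈ S, y i • v i = 0 ∧ ∃ i ∈ S, y i ≠ 0 := by
    have : ¬ LinearIndependent ℝ (fun i : S => v i.1) := by
      intro h
      have := h.fintype_card_le_finrank
      simp [hS] at this
    rw [Fintype.not_linearIndependent_iff] at this
    obtain ⟨g, hg, ⟨i, hi⟩, hgi⟩ := this
    refine ⟨fun i => if h : i ∈ S then g ⟨i, h⟩ else 0, ?_, i, hi, by simpa [hi] using hgi⟩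
    rw [← Finset.sum_coe_sort, ← hg]
    refine Finset.sum_congr rfl fun j _ => ?_
    simp
  have hX : ∀ i, ∃ X : EuclideanSpace ℝ (Fin d), i ∈ S → ∀ j ∈ S, j ≠ i → ⟪X, v j⟫_ℝ = c j := by
    intro i
    by_cases hi : i ∈ S
    · obtain ⟨X, hX, _⟩ := gp1 (S.erase i) (by rw [Finset.card_erase_of_mem hi, hS]; rfl)
      exact ⟨X, fun _ j hj hji => hX j (Finset.mem_erase.2 ⟨hji, hj⟩)⟩
    · exact ⟨0, fun h => absurd h hi⟩
  choose X hX using hX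
  have hXn : ∀ i ∈ S, c i - ⟪X i, v i⟫_ℝ ≠ 0 := by
    intro i hi h
    refine gp2 S hS ⟨X i, fun j hj => ?_⟩
    by_cases hji : j = i
    · subst hji; linarith
    · exact hX i hi j hj hji
  have key : ∀ y : I → ℝ, ∑ i ∈ S, y i • v i = 0 → ∀ j ∈ S,
      y j * (c j - ⟪X j, v j⟫_ℝ) = ∑ i ∈ S, y i * c i := by
    intro y hy j hj
    have : ⟪X j, ∑ i ∈ S, y i • v i⟫_ℝ = 0 := by rw [hy, inner_zero_right]
    rw [inner_sum] at this
    simp only [inner_smul_right] at this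
    have h2 : ∑ i ∈ S, y i * (c i - ⟪X j, v i⟫_ℝ) = ∑ i ∈ S, y i * c i := by
      simp only [mul_sub, Finset.sum_sub_distrib, this, sub_zero]
    rw [← h2]
    symm
    refine Finset.sum_eq_single_of_mem j hj ?_
    intro i hi hij
    rw [hX j hj i hi hij, sub_self, mul_zero]
  obtain ⟨y, hy, hγ⟩ : ∃ y : I → ℝ, ∑ i ∈ S, y i • v i = 0 ∧ 0 < ∑ i ∈ S, y i * c i := by
    have hne : ∑ i ∈ S, y i * c i ≠ 0 := by
      rw [← key y hy i1 hi1]; exact mul_ne_zero hy1 (hXn i1 hi1)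
    rcases lt_or_gt_of_ne hne with h | h
    · refine ⟨fun i => - y i, by simp [hy], ?_⟩
      simpa using h
    · exact ⟨y, hy, h⟩
  have hd1 : (0:ℝ) < (d:ℝ) + 1 := by positivity
  have hsc : ∑ _i ∈ S, ((d:ℝ) + 1)⁻¹ = 1 := by
    rw [Finset.sum_const, hS, nsmul_eq_mul]; push_cast; exact mul_inv_cancel₀ hd1.ne'
  refine ⟨∑ i ∈ S, ((d:ℝ) + 1)⁻¹ • X i, (core gp1 hN S hSn hS.le y _ ?_ hy).2⟩
  intro j hj
  have e1 : c j - ⟪∑ i ∈ S, ((d:ℝ) + 1)⁻¹ • X i, v j⟫_ℝ = ∑ i ∈ S, ((d:ℝ) + 1)⁻¹ * (c j - ⟪X i, v j⟫_ℝ) := by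
    rw [sum_inner]
    simp only [inner_smul_left, mul_sub, Finset.sum_sub_distrib, ← Finset.sum_mul, hsc, one_mul]
    simp
  have e2 : ∑ i ∈ S, ((d:ℝ) + 1)⁻¹ * (c j - ⟪X i, v j⟫_ℝ) = ((d:ℝ) + 1)⁻¹ * (c j - ⟪X j, v j⟫_ℝ) := by
    refine Finset.sum_eq_single_of_mem j hj ?_
    intro i hi hij
    rw [hX i hi j hj (Ne.symm hij), sub_self, mul_zero]
  rw [e1, e2, mul_left_comm, key y hy j hj]
  positivity

end geo
end DCT

open scoped InnerProductSpace

namespace DCT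

section geo2
variable {d : ℕ} {I : Type*} [Fintype I] [DecidableEq I]
variable {K : Type*} [Field K] [Fintype K] [DecidableEq K]

def sg : Bool → ℝ
  | true => 1
  | false => -1

theorem sg_lin (v : EuclideanSpace ℝ (Fin d)) (c : ℝ) : Aff (fun q : EuclideanSpace ℝ (Fin d) => c - ⟪q, v⟫_ℝ) := by
  intro q q' t
  simp only [inner_add_left, inner_smul_left]
  simp; ring

/-- affine functionals -/
noncomputable def ll (v : I → EuclideanSpace ℝ (Fin d)) (c : I → ℝ) (C : ℝ) :
    I ⊕ Fin (d + 1) → EuclideanSpace ℝ (Fin d) → ℝ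
  | Sum.inl i, q => c i - ⟪q, v i⟫_ℝ
  | Sum.inr j, q => -C - ∑ k : Fin d, q k * ((if k.castSucc = j then ((d + 1 : ℕ) : ℝ) else 0) - 1)

omit [Fintype I] [DecidableEq I] in
theorem ll_aff (v : I → EuclideanSpace ℝ (Fin d)) (c : I → ℝ) (C : ℝ) (k) : Aff (ll v c C k) := by
  rcases k with i | j
  · exact sg_lin (v i) (c i)
  · intro q q' t
    simp only [ll, PiLp.add_apply, PiLp.smul_apply, smul_eq_mul, add_mul, Finset.sum_add_distrib, mul_assoc, ← Finset.mul_sum]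
    ring

/-- active vertices -/
def Oz (v : I → EuclideanSpace ℝ (Fin d)) (c : I → ℝ) (C : ℝ) :
    VV (I × Bool) K (d + 1) → EuclideanSpace ℝ (Fin d) → Prop
  | Sum.inl ((i, ε), _), q => 0 < sg ε * ll v c C (Sum.inl i) q
  | Sum.inr j, q => 0 < ll v c C (Sum.inr j) q

def Cpt {I K : Type*} {n e : ℕ} (col : I → Fin n) (l : List (VV (I × Bool) K e)) : Prop :=
  ∀ u u' : (I × Bool) × K, Sum.inl u ∈ l → Sum.inl u' ∈ l →
    (u.1.1 = u'.1.1 → u = u') ∧ (col u.1.1 = col u'.1.1 → u.2 = u'.2 → u = u')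

theorem Cpt_sub {I K : Type*} {n e : ℕ} {col : I → Fin n} {l l' : List (VV (I × Bool) K e)} (h : l' ⊆ l)
    (hl : Cpt col l) : Cpt col l' := fun u u' h1 h2 => hl u u' (h h1) (h h2)

omit [Field K] [Fintype K] [DecidableEq K] [Fintype I] [DecidableEq I] in
theorem Oz_HO (v : I → EuclideanSpace ℝ (Fin d)) (c : I → ℝ) (C : ℝ) : HO (ll v c C) (Oz (K := K) v c C) := by
  rintro (⟨⟨i, ε⟩, g⟩ | j)
  · exact ⟨{(Sum.inl i, sg ε)}, fun q => by simp [Oz]⟩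
  · exact ⟨{(Sum.inr j, 1)}, fun q => by simp [Oz]⟩

theorem Z_fill (v : I → EuclideanSpace ℝ (Fin d)) (c : I → ℝ) (C : ℝ)
    (gp1 : ∀ s : Finset I, s.card = d → ∃! x, ∀ i ∈ s, ⟪x, v i⟫_ℝ = c i)
    (gp2 : ∀ s : Finset I, s.card = d + 1 → ¬ ∃ x, ∀ i ∈ s, ⟪x, v i⟫_ℝ = c i)
    (hN : d + 1 ≤ Fintype.card I) (col : I → Fin (d + 1))
    (hcol : ∀ k, 2 * Fintype.card K ≤ (Finset.univ.filter (fun i => col i = k)).card + 1)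
    (m : ℕ) (hm : m + 1 ≤ (d + 1) * Fintype.card K) :
    Fill K (Zc (Cpt col) (Oz (K := K) v c C) Set.univ) m := by
  classical
  refine nerve1 (R0 := Cpt col) (fun l l' h hl => Cpt_sub h.subset hl) (by intro u u' h; simp at h) (ll_aff v c C) (Oz_HO v c C)
    (Finset.univ.image Sum.inl) ?_ (Finset.univ.image Sum.inl) m (fun _ => 0) (Finset.Subset.refl _) Set.univ ?_
    Set.univ_nonempty convex_univ ?_
  · intro T hT k hk hkT q hq hqk
    obtain ⟨i, _, rfl⟩ := Finset.mem_image.1 hk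
    obtain ⟨q', h1, h2⟩ := gen_lem gp1 gp2 hN (Finset.univ.filter (fun i => Sum.inl i ∈ T)) i (by simpa using hkT) q
      (by
        intro j hj
        have := hq (Sum.inl j) (Finset.mem_filter.1 hj).2
        simp only [ll] at this; linarith)
      (by simp only [ll] at hqk; linarith)
    refine ⟨q', ?_, ?_⟩
    · intro j hj
      obtain ⟨j', _, rfl⟩ := Finset.mem_image.1 (hT hj)
      simp only [ll]
      rw [h1 j' (by simpa using hj), sub_self]
    · simp only [ll]
      intro h; apply h2; linarith
  · ext q
    simp only [Set.mem_univ, Set.mem_setOf_eq, true_iff]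
    intro k hk hk'
    exact absurd hk hk'
  · intro q _ m' hm'
    by_cases hinf : ∃ j, 0 < ll v c C (Sum.inr j) q
    · obtain ⟨j, hj⟩ := hinf
      refine fill_cone (Sum.inr j) ?_ m'
      rintro l ⟨h1, h2⟩
      refine ⟨?_, ?_⟩
      · intro u u' hu hu'
        exact h1 u u' (by simpa using hu) (by simpa using hu')
      · intro w hw
        rcases List.mem_cons.1 hw with rfl | hw
        · exact hj
        · exact h2 w hw
    · push Not at hinf
      let ep : I → Bool := fun i => decide (0 < ll v c C (Sum.inl i) q)
      let u : I → K → VV (I × Bool) K (d + 1) := fun i g => Sum.inl ((i, ep i), g)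
      have hu : ∀ i b i' b', u i b = u i' b' → i = i' ∧ b = b' := by
        intro i b i' b' h
        simp only [u, Sum.inl.injEq, Prod.mk.injEq] at h
        exact ⟨h.1.1, h.2⟩
      let T := Finset.univ.filter (fun i => ll v c C (Sum.inl i) q ≠ 0)
      let s : Fin (d + 1) → ℕ := fun k => ((Finset.univ.filter (fun i => ll v c C (Sum.inl i) q = 0)).filter (fun i => col i = k)).card
      have hs : ∑ k, s k = (Finset.univ.filter (fun i => ll v c C (Sum.inl i) q = 0)).card :=
        (Finset.card_eq_sum_card_fiberwise (fun i _ => Finset.mem_coe.2 (Finset.mem_univ (col i)))).symm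
      have hz : ((Finset.univ.image Sum.inl : Finset (I ⊕ Fin (d + 1))).filter (fun k => ll v c C k q = 0)).card =
          (Finset.univ.filter (fun i => ll v c C (Sum.inl i) q = 0)).card := by
        rw [Finset.filter_image, Finset.card_image_of_injective _ Sum.inl_injective]
      rw [hz, ← hs] at hm'
      have hF : Fill K (Ck u col T (fun _ => Finset.univ)) m' := by
        refine chess hu col _ T _ s m' le_rfl ?_ ?_
        · intro k
          have h1 := hcol k
          have h2 : (Finset.univ.filter (fun i => col i = k)).card = (T.filter (fun i => col i = k)).card + s k := by
            rw [← Finset.card_filter_add_card_filter_not (s := Finset.univ.filter (fun i => col i = k)) (fun i => ll v c C (Sum.inl i) q ≠ 0)]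
            simp only [T, s, not_not, Finset.filter_filter]
            congr 3 <;> ext i <;> simp only [and_comm]
          rw [Finset.card_univ]; omega
        · have h1 : ∑ k : Fin (d + 1), Fintype.card K ≤ ∑ k, (((Finset.univ : Finset K).card - s k) + s k) := by
            refine Finset.sum_le_sum fun k _ => ?_
            rw [Finset.card_univ]; omega
          rw [Finset.sum_add_distrib, Finset.sum_const, Finset.card_univ, Fintype.card_fin, smul_eq_mul] at h1
          simp only [Finset.card_univ] at h1 ⊢
          omega
      refine hF.congr ?_
      intro l
      constructor
      · rintro ⟨h1, h2⟩
        refine ⟨?_, ?_⟩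
        · rintro w w' hw hw'
          obtain ⟨i, _, b, _, e1⟩ := h1 _ hw
          obtain ⟨i', _, b', _, e2⟩ := h1 _ hw'
          obtain ⟨h3, h4⟩ := h2 i b i' b' (e1 ▸ hw) (e2 ▸ hw')
          simp only [u, Sum.inl.injEq] at e1 e2
          subst e1 e2
          refine ⟨?_, ?_⟩
          · intro h; simp only at h; subst h; rw [h3 rfl]
          · intro h h'; simp only at h h'; rw [h4 h h', h']
        · intro w hw
          obtain ⟨i, hi, b, _, rfl⟩ := h1 _ hw
          have hne := (Finset.mem_filter.1 hi).2
          show 0 < sg (ep i) * _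
          by_cases h : 0 < ll v c C (Sum.inl i) q
          · simp [ep, h, sg]
          · have h' : ll v c C (Sum.inl i) q < 0 := lt_of_le_of_ne (not_lt.1 h) hne
            simp [ep, h, sg, h']
      · rintro ⟨h1, h2⟩
        refine ⟨?_, ?_⟩
        · rintro (⟨⟨i, ε⟩, g⟩ | j) hw
          · have h3 : 0 < sg ε * ll v c C (Sum.inl i) q := h2 _ hw
            refine ⟨i, ?_, g, Finset.mem_univ _, ?_⟩
            · refine Finset.mem_filter.2 ⟨Finset.mem_univ _, fun h => ?_⟩
              rw [h, mul_zero] at h3; exact lt_irrefl _ h3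
            · have : ε = ep i := by
                rcases ε with _ | _
                · simp only [sg] at h3
                  have : ¬ 0 < ll v c C (Sum.inl i) q := by linarith
                  simp [ep, this]
                · simp only [sg, one_mul] at h3
                  simp [ep, h3]
              rw [this]
          · exact absurd (h2 _ hw) (not_lt.2 (hinf j))
        · intro i b i' b' hi hi'
          obtain ⟨h3, h4⟩ := h1 ((i, ep i), b) ((i', ep i'), b') hi hi'
          refine ⟨fun h => ?_, fun h h' => ?_⟩
          · exact (Prod.mk.inj (h3 h)).2
          · exact (Prod.mk.inj (Prod.mk.inj (h4 h h')).1).1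

end geo2
end DCT

open scoped InnerProductSpace

namespace DCT

section geo3
variable {d : ℕ} {I : Type*} [Fintype I] [DecidableEq I]
variable {K : Type*} [Field K] [Fintype K] [DecidableEq K]

def nu (v : I → EuclideanSpace ℝ (Fin d)) (i : I) (ε : Bool) : Option (Fin d) → ℝ
  | none => 1
  | some k => sg ε * v i k

/-- coordinates of the vertices -/
noncomputable def xx (v : I → EuclideanSpace ℝ (Fin d)) :
    VV (I × Bool) K (d + 1) → KK (Option (Fin d)) K (d + 1) → ℝ
  | Sum.inl ((i, ε), _), Sum.inl j =>
      Fin.snoc (α := fun _ => ℝ) (fun k : Fin d => sg ε * v i k) (-∑ k : Fin d, sg ε * v i k) j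
  | Sum.inl ((i, ε), g), Sum.inr (l, a) => nu v i ε l * ((if a = g then (Fintype.card K : ℝ) else 0) - 1)
  | Sum.inr j, Sum.inl i => (if i = j then ((d + 1 : ℕ) : ℝ) else 0) - 1
  | Sum.inr _, Sum.inr _ => 0

variable (v : I → EuclideanSpace ℝ (Fin d)) (c : I → ℝ)

omit [Fintype I] [DecidableEq I] in
theorem xx1 (g : K) (u : VV (I × Bool) K (d + 1)) (l a) :
    xx v (avv _ _ g u) (Sum.inr (l, g + a)) = xx v u (Sum.inr (l, a)) := by
  rcases u with ⟨⟨i, ε⟩, h⟩ | j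
  · simp [xx, avv]
  · simp [xx, avv]

omit [Fintype I] [DecidableEq I] in
theorem xx1' (g : K) (u : VV (I × Bool) K (d + 1)) (j) :
    xx v (avv _ _ g u) (Sum.inl j) = xx v u (Sum.inl j) := by
  rcases u with ⟨⟨i, ε⟩, h⟩ | j
  · simp [xx, avv]
  · simp [xx, avv]

omit [Fintype I] [DecidableEq I] [Field K] in
theorem xx2 (u : VV (I × Bool) K (d + 1)) (l) : ∑ a, xx v u (Sum.inr (l, a)) = 0 := by
  rcases u with ⟨⟨i, ε⟩, h⟩ | j
  · simp only [xx]
    rw [← Finset.mul_sum, Finset.sum_sub_distrib, Finset.sum_ite_eq']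
    simp
  · simp [xx]

omit [Fintype I] [DecidableEq I] [Field K] in
theorem xx3 (u : VV (I × Bool) K (d + 1)) : ∑ j, xx v u (Sum.inl j) = 0 := by
  rcases u with ⟨⟨i, ε⟩, h⟩ | j
  · simp only [xx]
    rw [Fin.sum_univ_castSucc]
    simp
  · simp only [xx]
    rw [Finset.sum_sub_distrib, Finset.sum_ite_eq']
    simp

/-- the affine function attached to a vertex -/
noncomputable def hh (C : ℝ) : VV (I × Bool) K (d + 1) → EuclideanSpace ℝ (Fin d) → ℝ
  | Sum.inl ((i, ε), _), q => sg ε * ll v c C (Sum.inl i) q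
  | Sum.inr j, q => ll v c C (Sum.inr j) q

def kap (C : ℝ) : VV (I × Bool) K (d + 1) → ℝ
  | Sum.inl ((i, ε), _) => sg ε * c i
  | Sum.inr _ => -C

omit [Fintype I] [DecidableEq I] [Field K] in
theorem hh_eq (C : ℝ) (u : VV (I × Bool) K (d + 1)) (q : EuclideanSpace ℝ (Fin d)) :
    hh v c C u q = kap c C u - ∑ k : Fin d, q k * xx v u (Sum.inl k.castSucc) := by
  rcases u with ⟨⟨i, ε⟩, h⟩ | j
  · simp only [hh, kap, ll, xx, Fin.snoc_castSucc]
    have : ⟪q, v i⟫_ℝ = ∑ k, q k * v i k := by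
      simp [PiLp.inner_apply, mul_comm]
    rw [this, mul_sub, Finset.mul_sum]
    congr 1
    exact Finset.sum_congr rfl fun k _ => by ring
  · simp only [hh, kap, ll, xx]

omit [DecidableEq I] [Field K] in
theorem pairing (C : ℝ) (w : VV (I × Bool) K (d + 1) → ℝ) (q : EuclideanSpace ℝ (Fin d)) :
    ∑ u, w u * hh v c C u q = ∑ u, w u * kap c C u - ∑ k : Fin d, q k * th (xx v) (Sum.inl k.castSucc) w := by
  simp only [hh_eq, mul_sub, Finset.sum_sub_distrib, th, Finset.mul_sum]
  congr 1
  rw [Finset.sum_comm]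
  exact Finset.sum_congr rfl fun k _ => Finset.sum_congr rfl fun u _ => by ring

theorem inf_real (C : ℝ) (i0 : Fin (d + 1)) :
    ∃ q, ∀ j, j ≠ i0 → 0 < ll v c C (Sum.inr j) q := by
  induction i0 using Fin.lastCases with
  | last =>
    refine ⟨WithLp.toLp 2 (fun _ => -(C + 1)), fun j hj => ?_⟩
    induction j using Fin.lastCases with
    | last => exact absurd rfl hj
    | cast j =>
      simp only [ll, ← Finset.mul_sum, Finset.sum_sub_distrib, Fin.castSucc_inj, Finset.sum_ite_eq', Finset.mem_univ, if_true]
      simp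
  | cast k0 =>
    refine ⟨WithLp.toLp 2 (Pi.single k0 (C + 1)), fun j hj => ?_⟩
    simp only [ll]
    rw [Finset.sum_eq_single k0]
    · rw [if_neg (Ne.symm hj)]; simp
    · intro k _ hk; simp [hk]
    · simp

/-- good sets of item vertices -/
def Gd (col : I → Fin (d + 1)) (σ : Finset ((I × Bool) × K)) : Prop :=
  (∀ u ∈ σ, ∀ u' ∈ σ, (u.1.1 = u'.1.1 → u = u') ∧ (col u.1.1 = col u'.1.1 → u.2 = u'.2 → u = u')) ∧
  ∃ q : EuclideanSpace ℝ (Fin d), ∀ u ∈ σ, 0 < sg u.1.2 * (c u.1.1 - ⟪q, v u.1.1⟫_ℝ)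

theorem exists_zero {p : ℕ} [Fact p.Prime] [Algebra (ZMod p) K]
    (gp1 : ∀ s : Finset I, s.card = d → ∃! x, ∀ i ∈ s, ⟪x, v i⟫_ℝ = c i)
    (gp2 : ∀ s : Finset I, s.card = d + 1 → ¬ ∃ x, ∀ i ∈ s, ⟪x, v i⟫_ℝ = c i)
    (hN : d + 1 ≤ Fintype.card I) (col : I → Fin (d + 1))
    (hcol : ∀ k, 2 * Fintype.card K ≤ (Finset.univ.filter (fun i => col i = k)).card + 1) :
    ∃ σ : Finset ((I × Bool) × K), Gd v c col σ ∧ ∃ w : VV (I × Bool) K (d + 1) → ℝ, w ∈ stdSimplex ℝ _ ∧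
      (∀ a, th (xx v) a w = 0) ∧ (∀ u, u ∉ σ → w (Sum.inl u) = 0) ∧ ∀ j, w (Sum.inr j) = 0 := by
  classical
  by_contra hcon
  let ZZ : Finset ((I × Bool) × K) → Set (VV (I × Bool) K (d + 1) → ℝ) := fun σ =>
    {w | w ∈ stdSimplex ℝ _ ∧ (∀ a, th (xx v) a w = 0) ∧ ∀ u, u ∉ σ → w (Sum.inl u) = 0}
  let si : (VV (I × Bool) K (d + 1) → ℝ) → ℝ := fun w => ∑ j, w (Sum.inr j)
  have hsc : Continuous si := by fun_prop
  have hδ : ∀ σ, ∃ δ : ℝ, 0 < δ ∧ (Gd v c col σ → ∀ w ∈ ZZ σ, δ ≤ si w) := by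
    intro σ
    by_cases hG : Gd v c col σ
    · have hcpt : IsCompact (ZZ σ) := by
        have e1 : ZZ σ = stdSimplex ℝ _ ∩ ((⋂ a, {w | th (xx v) a w = 0}) ∩ ⋂ u, ⋂ (_ : u ∉ σ), {w | w (Sum.inl u) = 0}) := by
          ext w
          simp only [ZZ, Set.mem_inter_iff, Set.mem_iInter, Set.mem_setOf_eq]
        rw [e1]
        refine (isCompact_stdSimplex ℝ _).inter_right (IsClosed.inter ?_ ?_)
        · refine isClosed_iInter fun a => isClosed_eq ?_ continuous_const
          unfold th; fun_prop
        · refine isClosed_iInter fun u => isClosed_iInter fun _ => isClosed_eq ?_ continuous_const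
          fun_prop
      rcases (ZZ σ).eq_empty_or_nonempty with h | h
      · exact ⟨1, one_pos, fun _ w hw => by rw [h] at hw; exact hw.elim⟩
      · obtain ⟨w0, hw0, hmin⟩ := hcpt.exists_isMinOn h hsc.continuousOn
        refine ⟨si w0, ?_, fun _ w hw => hmin hw⟩
        have hnn : ∀ j, 0 ≤ w0 (Sum.inr j) := fun j => hw0.1.1 _
        refine lt_of_le_of_ne (Finset.sum_nonneg fun j _ => hnn j) fun h0 => ?_
        apply hcon
        refine ⟨σ, hG, w0, hw0.1, hw0.2.1, hw0.2.2, fun j => ?_⟩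
        exact (Finset.sum_eq_zero_iff_of_nonneg (fun j _ => hnn j)).1 h0.symm j (Finset.mem_univ j)
    · exact ⟨1, one_pos, fun h => absurd h hG⟩
  choose δ hδ0 hδ using hδ
  let cm : ℝ := ∑ i, |c i|
  have hcm : 0 ≤ cm := Finset.sum_nonneg fun i _ => abs_nonneg _
  let C : ℝ := ∑ σ, (cm + 1) / δ σ
  have hC : ∀ σ, cm + 1 ≤ C * δ σ := by
    intro σ
    have : (cm + 1) / δ σ ≤ C :=
      Finset.single_le_sum (f := fun σ => (cm + 1) / δ σ) (fun σ _ => (div_pos (by linarith) (hδ0 σ)).le) (Finset.mem_univ σ)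
    rwa [div_le_iff₀ (hδ0 σ)] at this
  have hK : 0 < Fintype.card K := Fintype.card_pos
  let bs := Module.Free.chooseBasis (ZMod p) K
  have hHO : ∀ (u : VV (I × Bool) K (d + 1)) q, Oz v c C u q ↔ 0 < hh v c C u q := by
    rintro (⟨⟨i, ε⟩, g⟩ | j) q <;> rfl
  refine index_thm (p := p) (e := d + 1) (L := Option (Fin d)) bs bs.linearIndependent bs.span_eq.ge (Nat.succ_pos d) (xx v) (xx1 v) (xx1' v) (xx2 v) (xx3 v)
    (fun j a => rfl) (fun j i => rfl) (Zc (Cpt col) (Oz (K := K) v c C) Set.univ)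
    (Zc_cl (fun l l' h hl => Cpt_sub h.subset hl) _ _) ?_ ?_ ?_ ?_
  · rintro g l ⟨h1, q, _, h2⟩
    refine ⟨?_, q, trivial, ?_⟩
    · intro u u' hu hu'
      obtain ⟨(⟨⟨i, ε⟩, a⟩ | j), h3, h4⟩ := List.mem_map.1 hu
      · obtain ⟨(⟨⟨i', ε'⟩, a'⟩ | j), h3', h4'⟩ := List.mem_map.1 hu'
        · simp only [avv, Sum.inl.injEq] at h4 h4'
          subst h4 h4'
          obtain ⟨h5, h6⟩ := h1 _ _ h3 h3'
          refine ⟨fun h => ?_, fun h h' => ?_⟩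
          · have := h5 h
            simp only [Prod.mk.injEq] at this ⊢
            exact ⟨this.1, by rw [this.2]⟩
          · have := h6 h (add_left_cancel h')
            simp only [Prod.mk.injEq] at this ⊢
            exact ⟨this.1, by rw [this.2]⟩
        · simp [avv] at h4'
      · simp [avv] at h4
    · intro u hu
      obtain ⟨(⟨⟨i, ε⟩, a⟩ | j), h3, rfl⟩ := List.mem_map.1 hu
      · have := h2 (Sum.inl ((i, ε), a)) h3
        exact this
      · have := h2 (Sum.inr j) h3
        exact this
  · rintro s ⟨i0, hi0⟩
    obtain ⟨q, hq⟩ := inf_real v c C i0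
    refine ⟨fun u u' h => by simp at h, q, trivial, ?_⟩
    intro u hu
    obtain ⟨j, hj, rfl⟩ := List.mem_map.1 hu
    exact hq j (by rintro rfl; exact hi0 hj)
  · intro m hm
    refine Z_fill v c C gp1 gp2 hN col hcol m ?_
    obtain ⟨r, hr⟩ := Nat.exists_eq_succ_of_ne_zero hK.ne'
    rw [hr] at hm ⊢
    simp only [Fintype.card_option, Fintype.card_fin, Nat.succ_eq_add_one, Nat.add_sub_cancel] at hm ⊢
    rw [mul_add]; omega
  · rintro l ⟨h1, q, _, h2⟩ hne w ⟨w1, w2, w3⟩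
    by_contra! hneg
    have hth : ∀ a, th (xx v) a w = 0 := by
      rintro (j | ⟨l, a⟩)
      · have : ∑ j, th (xx v) (Sum.inl j) w = 0 := by
          simp only [th]; rw [Finset.sum_comm]; simp [← Finset.mul_sum, xx3]
        exact (Finset.sum_eq_zero_iff_of_nonpos (fun j _ => hneg _)).1 this j (Finset.mem_univ j)
      · have : ∑ a, th (xx v) (Sum.inr (l, a)) w = 0 := by
          simp only [th]; rw [Finset.sum_comm]; simp [← Finset.mul_sum, xx2]
        exact (Finset.sum_eq_zero_iff_of_nonpos (fun j _ => hneg _)).1 this a (Finset.mem_univ a)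
    let σ : Finset ((I × Bool) × K) := Finset.univ.filter (fun u => Sum.inl u ∈ l)
    have hG : Gd v c col σ := by
      refine ⟨fun u hu u' hu' => h1 u u' (Finset.mem_filter.1 hu).2 (Finset.mem_filter.1 hu').2, q, ?_⟩
      rintro ⟨⟨i, ε⟩, g⟩ hu
      exact h2 _ (Finset.mem_filter.1 hu).2
    have hs := hδ σ hG w ⟨⟨w1, w2⟩, hth, fun u hu => w3 _ fun h => hu (by simpa [σ] using h)⟩
    have hp := pairing v c C w q
    simp only [hth, mul_zero, Finset.sum_const_zero, sub_zero] at hp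
    have hp0 : 0 ≤ ∑ u, w u * hh v c C u q := by
      refine Finset.sum_nonneg fun u _ => ?_
      by_cases hu : u ∈ l
      · exact mul_nonneg (w1 u) ((hHO u q).1 (h2 u hu)).le
      · rw [w3 u hu, zero_mul]
    rw [hp, Fintype.sum_sum_type] at hp0
    have hA : ∑ u : (I × Bool) × K, w (Sum.inl u) * kap c C (Sum.inl u : VV (I × Bool) K (d + 1)) ≤ ∑ u : (I × Bool) × K, w (Sum.inl u) * cm := by
      refine Finset.sum_le_sum fun u _ => mul_le_mul_of_nonneg_left ?_ (w1 _)
      obtain ⟨⟨i, ε⟩, g⟩ := u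
      have h5 : |c i| ≤ cm := Finset.single_le_sum (f := fun i => |c i|) (fun i _ => abs_nonneg _) (Finset.mem_univ i)
      refine le_trans ?_ h5
      rcases ε with _ | _
      · simp only [kap, sg, neg_mul, one_mul]; exact neg_le_abs _
      · simp only [kap, sg, one_mul]; exact le_abs_self _
    have hB : ∑ j, w (Sum.inr j) * kap c C (Sum.inr j : VV (I × Bool) K (d + 1)) = - (C * si w) := by
      simp only [kap, si]
      rw [← Finset.sum_mul]; ring
    rw [hB] at hp0
    rw [← Finset.sum_mul] at hA
    rw [Fintype.sum_sum_type] at w2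
    have hsn : 0 ≤ si w := Finset.sum_nonneg fun j _ => w1 _
    have hwi : ∑ u : (I × Bool) × K, w (Sum.inl u) ≤ 1 := by
      have : ∑ j, w (Sum.inr j) = si w := rfl
      linarith
    have hCσ := hC σ
    have hC0 : 0 ≤ C := by
      by_contra! h
      have := mul_neg_of_neg_of_pos h (hδ0 σ)
      linarith
    have := mul_le_mul_of_nonneg_left hs hC0
    have := mul_le_mul_of_nonneg_right hwi hcm
    linarith

end geo3
end DCT

open scoped InnerProductSpace

namespace DCT

section geo4
variable {d : ℕ} {I : Type*} [Fintype I] [DecidableEq I]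
variable {K : Type*} [Field K] [Fintype K] [DecidableEq K]
variable (v : I → EuclideanSpace ℝ (Fin d)) (c : I → ℝ)

theorem box_eq (w : VV (I × Bool) K (d + 1) → ℝ) (l : Option (Fin d)) (a : K)
    (h : th (xx v) (Sum.inr (l, a)) w = 0) :
    (Fintype.card K : ℝ) * ∑ x : I × Bool, w (Sum.inl (x, a)) * nu v x.1 x.2 l =
      ∑ u : (I × Bool) × K, w (Sum.inl u) * nu v u.1.1 u.1.2 l := by
  rw [th, Fintype.sum_sum_type] at h
  have h2 : ∑ j : Fin (d + 1), w (Sum.inr j) * xx v (Sum.inr j : VV (I × Bool) K (d + 1)) (Sum.inr (l, a)) = 0 := by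
    simp [xx]
  rw [h2, add_zero] at h
  have h3 : ∀ u : (I × Bool) × K, w (Sum.inl u) * xx v (Sum.inl u : VV (I × Bool) K (d + 1)) (Sum.inr (l, a)) =
      (if a = u.2 then (Fintype.card K : ℝ) * (w (Sum.inl u) * nu v u.1.1 u.1.2 l) else 0) -
        w (Sum.inl u) * nu v u.1.1 u.1.2 l := by
    rintro ⟨⟨i, ε⟩, g⟩
    simp only [xx]
    split_ifs <;> ring
  rw [Finset.sum_congr rfl fun u _ => h3 u, Finset.sum_sub_distrib, sub_eq_zero] at h
  rw [← h, Finset.mul_sum]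
  symm
  refine (Fintype.sum_prod_type _).trans ?_
  refine Finset.sum_congr rfl fun x _ => ?_
  rw [Finset.sum_ite_eq]; simp

theorem final_K {p : ℕ} [Fact p.Prime] [Algebra (ZMod p) K]
    (gp1 : ∀ s : Finset I, s.card = d → ∃! x, ∀ i ∈ s, ⟪x, v i⟫_ℝ = c i)
    (gp2 : ∀ s : Finset I, s.card = d + 1 → ¬ ∃ x, ∀ i ∈ s, ⟪x, v i⟫_ℝ = c i)
    (hN : d + 1 ≤ Fintype.card I) (col : I → Fin (d + 1))
    (hcol : ∀ k, 2 * Fintype.card K ≤ (Finset.univ.filter (fun i => col i = k)).card + 1) :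
    ∃ S : K → Finset I, (∀ a b, a ≠ b → Disjoint (S a) (S b)) ∧ (∀ a, (S a).card = d + 1) ∧
      (∀ a, ∀ k, ∃ i ∈ S a, col i = k) ∧
      ∃ q : EuclideanSpace ℝ (Fin d), ∀ a, q ∈ interior (convexHull ℝ
        {x : EuclideanSpace ℝ (Fin d) | ∃ i ∈ S a, ∀ j ∈ S a, j ≠ i → ⟪x, v j⟫_ℝ = c j}) := by
  classical
  obtain ⟨σ, ⟨hc, q, hq⟩, w, ⟨w0, w1⟩, hth, hσ, hinf⟩ := exists_zero (p := p) (K := K) v c gp1 gp2 hN col hcol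
  have hK : (0 : ℝ) < Fintype.card K := by exact_mod_cast Fintype.card_pos
  have hmem : ∀ u, w (Sum.inl u) ≠ 0 → u ∈ σ := fun u h => by
    by_contra h'; exact h (hσ u h')
  let S : K → Finset I := fun a => Finset.univ.filter fun i => ∃ ε, w (Sum.inl ((i, ε), a)) ≠ 0
  have hS : ∀ a i, i ∈ S a ↔ ∃ ε, w (Sum.inl ((i, ε), a)) ≠ 0 := fun a i => by simp [S]
  let y : K → I → ℝ := fun a i => ∑ ε, w (Sum.inl ((i, ε), a)) * sg ε
  have hinj : ∀ a, ∀ i ∈ S a, ∀ j ∈ S a, col i = col j → i = j := by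
    intro a i hi j hj hij
    obtain ⟨ε, h1⟩ := (hS a i).1 hi
    obtain ⟨ε', h2⟩ := (hS a j).1 hj
    have := (hc _ (hmem _ h1) _ (hmem _ h2)).2 hij rfl
    simp only [Prod.mk.injEq] at this
    exact this.1.1
  have hcard : ∀ a, (S a).card ≤ d + 1 := by
    intro a
    have := Finset.card_le_card_of_injOn (s := S a) (t := Finset.univ) col (fun _ _ => Finset.mem_univ _)
      (fun i hi j hj h => hinj a i hi j hj h)
    simpa using this
  have hw1 : ∑ u : (I × Bool) × K, w (Sum.inl u) = 1 := by
    rw [Fintype.sum_sum_type] at w1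
    simpa [hinf] using w1
  have hne : ∀ a, (S a).Nonempty := by
    intro a
    by_contra hne
    rw [Finset.not_nonempty_iff_eq_empty] at hne
    have h := box_eq v w none a (hth _)
    simp only [nu, mul_one] at h
    rw [hw1, Finset.sum_eq_zero] at h
    · simp at h
    · rintro ⟨i, ε⟩ _
      by_contra h'
      have := (hS a i).2 ⟨ε, h'⟩
      rw [hne] at this
      simp at this
  have hpos : ∀ a, ∀ i ∈ S a, 0 < y a i * (c i - ⟪q, v i⟫_ℝ) := by
    intro a i hi
    obtain ⟨ε, h1⟩ := (hS a i).1 hi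
    have : y a i = w (Sum.inl ((i, ε), a)) * sg ε := by
      refine Finset.sum_eq_single ε (fun ε' _ hε => ?_) (by simp)
      by_contra h2
      have := (hc _ (hmem _ h1) _ (hmem ((i, ε'), a) (left_ne_zero_of_mul h2))).1 rfl
      simp only [Prod.mk.injEq] at this
      exact hε this.1.2.symm
    rw [this, mul_assoc]
    exact mul_pos (lt_of_le_of_ne (w0 _) (Ne.symm h1)) (hq _ (hmem _ h1))
  have hy : ∀ a, ∑ i ∈ S a, y a i • v i = 0 := by
    intro a
    have e1 : ∑ i ∈ S a, y a i • v i = ∑ i, y a i • v i := by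
      refine Finset.sum_subset (Finset.subset_univ _) fun i _ hi => ?_
      have : y a i = 0 := by
        refine Finset.sum_eq_zero fun ε _ => ?_
        have : w (Sum.inl ((i, ε), a)) = 0 := by
          by_contra h; exact hi ((hS a i).2 ⟨ε, h⟩)
        rw [this, zero_mul]
      rw [this, zero_smul]
    rw [e1]
    ext k
    have h := box_eq v w (some k) a (hth _)
    have h2 := hth (Sum.inl k.castSucc)
    rw [th, Fintype.sum_sum_type] at h2
    simp only [hinf, zero_mul, Finset.sum_const_zero, add_zero] at h2
    have h3 : ∑ u : (I × Bool) × K, w (Sum.inl u) * nu v u.1.1 u.1.2 (some k) = 0 := by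
      rw [← h2]
      refine Finset.sum_congr rfl ?_
      rintro ⟨⟨i, ε⟩, g⟩ _
      simp only [xx, nu, Fin.snoc_castSucc]
    rw [h3, mul_eq_zero, or_iff_right hK.ne', Fintype.sum_prod_type] at h
    simp only [WithLp.ofLp_sum, Finset.sum_apply, PiLp.smul_apply, PiLp.zero_apply, smul_eq_mul]
    rw [← h]
    simp only [y, nu, Finset.sum_mul, WithLp.ofLp_smul, Pi.smul_apply, smul_eq_mul]
    exact Finset.sum_congr rfl fun i _ => Finset.sum_congr rfl fun ε _ => by ring
  have hcore := fun a => core gp1 hN (S a) (hne a) (hcard a) (y a) q (hpos a) (hy a)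
  refine ⟨S, ?_, fun a => (hcore a).1, ?_, q, fun a => (hcore a).2⟩
  · intro a b hab
    rw [Finset.disjoint_left]
    intro i hi hj
    obtain ⟨ε, h1⟩ := (hS a i).1 hi
    obtain ⟨ε', h2⟩ := (hS b i).1 hj
    have := (hc _ (hmem _ h1) _ (hmem _ h2)).1 rfl
    simp only [Prod.mk.injEq] at this
    exact hab this.2
  · intro a k
    have := Finset.surj_on_of_inj_on_of_card_le (s := S a) (t := (Finset.univ : Finset (Fin (d + 1))))
      (fun i _ => col i) (fun _ _ => Finset.mem_univ _) (fun i j hi hj h => hinj a i hi j hj h)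
      (by rw [(hcore a).1]; simp) k (Finset.mem_univ k)
    obtain ⟨i, hi, h⟩ := this
    exact ⟨i, hi, h.symm⟩

end geo4
end DCT

/-- The dual colorful Tverberg theorem: `(d+1)t` hyperplanes in general position in
`ℝ^d`, colored with `d+1` colors with each color used exactly `t` times, with `r` a
prime power and `t ≥ 2r-1`. Then there are `r` pairwise disjoint subfamilies of `d+1`
hyperplanes each, every subfamily carrying all `d+1` colors, such that the simplexes
formed by the subfamilies have a common interior point. -/
theorem dual_colorful_tverberg (d r t : ℕ) (hd : 1 ≤ d)
    (hr : ∃ p k : ℕ, p.Prime ∧ r = p ^ k) (ht : 2 * r - 1 ≤ t)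
    (H : Fin ((d + 1) * t) → Set (EuclideanSpace ℝ (Fin d)))
    (hH : ∀ i, IsHyperplane (H i))
    (hgp : InGeneralPosition H)
    (col : Fin ((d + 1) * t) → Fin (d + 1))
    (hcol : ∀ c : Fin (d + 1), {i | col i = c}.ncard = t) :
    ∃ S : Fin r → Finset (Fin ((d + 1) * t)),
      (∀ a b, a ≠ b → Disjoint (S a) (S b)) ∧
      (∀ a, (S a).card = d + 1) ∧
      (∀ a, ∀ c : Fin (d + 1), ∃ i ∈ S a, col i = c) ∧
      ∃ b : EuclideanSpace ℝ (Fin d), ∀ a : Fin r,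
        b ∈ interior (convexHull ℝ (SimplexVerticesOf H (S a))) := by
  classical
  obtain ⟨p, k, hp, rfl⟩ := hr
  choose v c hv hHe using hH
  have hmem : ∀ i x, x ∈ H i ↔ ⟪x, v i⟫_ℝ = c i := fun i x => by
    rw [hHe i]; rfl
  obtain ⟨gp1, gp2⟩ := hgp
  simp only [hmem] at gp1 gp2
  have hrpos : 0 < p ^ k := pow_pos hp.pos k
  have hN : d + 1 ≤ Fintype.card (Fin ((d + 1) * t)) := by
    rw [Fintype.card_fin]
    exact Nat.le_mul_of_pos_right _ (by omega)
  have hcol' : ∀ a, (Finset.univ.filter (fun i => col i = a)).card = t := by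
    intro a
    refine Eq.trans ?_ (hcol a)
    rw [Set.ncard_eq_toFinset_card']
    congr 1
    ext i; simp
  simp only [SimplexVerticesOf, hmem]
  rcases Nat.eq_zero_or_pos k with hk | hk
  · subst hk
    have hex : ∀ a, ∃ i, col i = a := by
      intro a
      have : (Finset.univ.filter (fun i => col i = a)).Nonempty := by
        rw [← Finset.card_pos, hcol' a]; omega
      obtain ⟨i, hi⟩ := this
      exact ⟨i, (Finset.mem_filter.1 hi).2⟩
    choose f hf using hex
    have hfi : Function.Injective f := fun a b h => by rw [← hf a, ← hf b, h]
    have hcard : (Finset.univ.image f).card = d + 1 := by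
      rw [Finset.card_image_of_injective _ hfi]; simp
    obtain ⟨x0, hx0⟩ := DCT.single_simplex gp1 gp2 (Finset.univ.image f) hcard
    refine ⟨fun _ => Finset.univ.image f, ?_, fun _ => hcard, ?_, x0, fun _ => hx0⟩
    · intro a b hab
      have : p ^ 0 = 1 := pow_zero p
      exact absurd (Fin.ext (by have := a.2; have := b.2; omega)) hab
    · intro _ a
      exact ⟨f a, Finset.mem_image_of_mem f (Finset.mem_univ a), hf a⟩
  · haveI : Fact p.Prime := ⟨hp⟩
    letI : Fintype (GaloisField p k) := Fintype.ofFinite _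
    have hKc : Fintype.card (GaloisField p k) = p ^ k := by
      rw [← Nat.card_eq_fintype_card, GaloisField.card p k hk.ne']
    obtain ⟨S, h1, h2, h3, q, h4⟩ := DCT.final_K (K := GaloisField p k) (p := p) v c gp1 gp2 hN col
      (by intro a; rw [hcol' a, hKc]; omega)
    let e := (Fintype.equivFinOfCardEq hKc).symm
    exact ⟨fun a => S (e a), fun a b hab => h1 _ _ fun h => hab (e.injective h), fun a => h2 _,
      fun a => h3 _, q, fun a => h4 _⟩
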